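/- arXiv:1104.3207 — 13 statements merged into one kernel-verified Lean document; each statement's English description precedes it below -/
import Mathlib

section
/- Let X and Y be finite types, let E ⊆ X × Y be a set of edges of a bipartite graph, and let α, β, γ be natural numbers. If R_E(α, β) · 2^γ < |E|, then the triple (α, β, γ) does not belong to the profile of E. -/
/-- A triple `(α, β, γ)` belongs to the profile of `E ⊆ X × Y`. -/
def InProfile {X Y : Type*} (E : Set (X × Y)) (α β γ : ℕ) : Prop :=
  ∃ (f : Fin (2 ^ α) × Fin (2 ^ γ) → X) (g : Fin (2 ^ β) × Fin (2 ^ γ) → Y),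
    ∀ p ∈ E, ∃ (a : Fin (2 ^ α)) (b : Fin (2 ^ β)) (c : Fin (2 ^ γ)),
      f (a, c) = p.1 ∧ g (b, c) = p.2

/-- `R_E(α, β)`: the maximal number of edges of `E` in a combinatorial rectangle
`X' × Y'` with `|X'| ≤ 2^α` and `|Y'| ≤ 2^β`. -/
def maxRect {X Y : Type*} [Fintype X] [Fintype Y] [DecidableEq X] [DecidableEq Y]
    (E : Finset (X × Y)) (α β : ℕ) : ℕ :=
  ((Finset.univ.powerset.filter fun A : Finset X => A.card ≤ 2 ^ α) ×ˢ
   (Finset.univ.powerset.filter fun B : Finset Y => B.card ≤ 2 ^ β)).sup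
    fun AB => (E.filter fun p => p.1 ∈ AB.1 ∧ p.2 ∈ AB.2).card

theorem stmt0 {X Y : Type*} [Fintype X] [Fintype Y] [DecidableEq X] [DecidableEq Y]
    (E : Finset (X × Y)) (α β γ : ℕ)
    (h : maxRect E α β * 2 ^ γ < E.card) :
    ¬ InProfile (↑E : Set (X × Y)) α β γ := by
  rintro ⟨f, g, hfg⟩
  apply absurd h
  rw [not_lt]
  let A : Fin (2 ^ γ) → Finset X := fun c => Finset.univ.image fun a => f (a, c)
  let B : Fin (2 ^ γ) → Finset Y := fun c => Finset.univ.image fun b => g (b, c)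
  have hsub : E ⊆ Finset.univ.biUnion
      fun c => E.filter fun p => p.1 ∈ A c ∧ p.2 ∈ B c := by
    intro p hp
    obtain ⟨a, b, c, h1, h2⟩ := hfg p (Finset.mem_coe.mpr hp)
    refine Finset.mem_biUnion.mpr ⟨c, Finset.mem_univ _, Finset.mem_filter.mpr ⟨hp, ?_, ?_⟩⟩
    · exact Finset.mem_image.mpr ⟨a, Finset.mem_univ _, h1⟩
    · exact Finset.mem_image.mpr ⟨b, Finset.mem_univ _, h2⟩
  have hA : ∀ c, (A c).card ≤ 2 ^ α := fun c => Finset.card_image_le.trans (by simp)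
  have hB : ∀ c, (B c).card ≤ 2 ^ β := fun c => Finset.card_image_le.trans (by simp)
  have hle : ∀ c ∈ (Finset.univ : Finset (Fin (2 ^ γ))),
      (E.filter fun p => p.1 ∈ A c ∧ p.2 ∈ B c).card ≤ maxRect E α β := by
    intro c _
    have hm : (A c, B c) ∈
        ((Finset.univ.powerset.filter fun A : Finset X => A.card ≤ 2 ^ α) ×ˢ
         (Finset.univ.powerset.filter fun B : Finset Y => B.card ≤ 2 ^ β)) := by
      simp [hA c, hB c]
    exact Finset.le_sup
      (f := fun AB : Finset X × Finset Y => (E.filter fun p => p.1 ∈ AB.1 ∧ p.2 ∈ AB.2).card) hm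
  have := (Finset.card_le_card hsub).trans (Finset.card_biUnion_le_card_mul _ _ _ hle)
  rw [Finset.card_univ, Fintype.card_fin] at this
  rwa [mul_comm]
end

section
/- Let X and Y be finite types and let E ⊆ X × Y be a nonempty edge-transitive bipartite graph. Let α, β, γ be natural numbers such that R_E(α, β) · 2^γ ≥ |E|. Then for every natural number γ' with 2^(γ') ≥ 2^γ · (Real.log |E| + 1), the triple (α, β, γ') belongs to the profile of E. -/
/-- `(σ, τ)` is an automorphism of the bipartite graph `E`. -/
def IsAut {X Y : Type*} (E : Finset (X × Y)) (σ : X ≃ X) (τ : Y ≃ Y) : Prop :=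
  ∀ p : X × Y, p ∈ E ↔ (σ p.1, τ p.2) ∈ E

/-- `E` is edge-transitive: any edge can be mapped to any other edge by an automorphism. -/
def EdgeTransitive {X Y : Type*} (E : Finset (X × Y)) : Prop :=
  ∀ p ∈ E, ∀ q ∈ E, ∃ (σ : X ≃ X) (τ : Y ≃ Y),
    IsAut E σ τ ∧ σ p.1 = q.1 ∧ τ p.2 = q.2

def actE {X Y : Type*} (g : (X ≃ X) × (Y ≃ Y)) (p : X × Y) : X × Y := (g.1 p.1, g.2 p.2)

lemma actE_inj {X Y : Type*} (g : (X ≃ X) × (Y ≃ Y)) : Function.Injective (actE g) := by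
  rintro ⟨a, b⟩ ⟨c, d⟩ h
  simpa [actE] using h

lemma avg_step {X Y : Type*} [Fintype X] [Fintype Y] [DecidableEq X] [DecidableEq Y]
    (E : Finset (X × Y)) (hne : E.Nonempty) (htrans : EdgeTransitive E)
    (S U : Finset (X × Y)) (hS : S ⊆ E) (hU : U ⊆ E) :
    ∃ g : (X ≃ X) × (Y ≃ Y), U.card * S.card ≤ E.card * (U ∩ S.image (actE g)).card := by
  classical
  set G : Finset ((X ≃ X) × (Y ≃ Y)) := Finset.univ.filter fun g => IsAut E g.1 g.2 with hG
  have hGE : ∀ g ∈ G, ∀ p ∈ E, actE g p ∈ E := by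
    intro g hg p hp
    exact ((Finset.mem_filter.1 hg).2 p).1 hp
  have htr : ∀ p ∈ E, ∀ q ∈ E, ∃ g ∈ G, actE g p = q := by
    intro p hp q hq
    obtain ⟨σ, τ, h1, h2, h3⟩ := htrans p hp q hq
    exact ⟨(σ, τ), by simp [hG, h1], Prod.ext h2 h3⟩
  let c : X × Y → X × Y → ℕ := fun s u => (G.filter fun g => actE g s = u).card
  have hcle : ∀ s ∈ E, ∀ u ∈ E, ∀ s' ∈ E, ∀ u' ∈ E, c s u ≤ c s' u' := by
    intro s hs u hu s' hs' u' hu'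
    obtain ⟨a, ha, ha'⟩ := htr s' hs' s hs
    obtain ⟨b, hb, hb'⟩ := htr u hu u' hu'
    refine Finset.card_le_card_of_injOn
      (fun g => ((a.1.trans g.1).trans b.1, (a.2.trans g.2).trans b.2)) ?_ ?_
    · intro g hg
      simp only [Finset.coe_filter, Set.mem_ofPred_eq] at hg
      obtain ⟨hg, hg'⟩ := hg
      simp only [Finset.coe_filter, Set.mem_ofPred_eq]
      constructor
      · simp only [hG, Finset.mem_filter, Finset.mem_univ, true_and] at ha hb hg ⊢
        intro p
        exact (ha p).trans ((hg _).trans (hb _))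
      · rw [← hb', ← hg', ← ha']; rfl
    · rintro ⟨g1, g2⟩ _ ⟨k1, k2⟩ _ h
      simp only [Prod.mk.injEq] at h
      obtain ⟨h1, h2⟩ := h
      refine Prod.ext ?_ ?_
      · ext x
        have := congrArg (fun e : X ≃ X => e (a.1.symm x)) h1
        simpa using this
      · ext x
        have := congrArg (fun e : Y ≃ Y => e (a.2.symm x)) h2
        simpa using this
  have hc : ∀ s ∈ E, ∀ u ∈ E, G.card = E.card * c s u := by
    intro s hs u hu
    rw [Finset.card_eq_sum_card_fiberwise (f := fun g => actE g s) (t := E)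
      (fun g hg => hGE g hg s hs)]
    rw [Finset.sum_congr rfl (g := fun _ => c s u)
      (fun v hv => le_antisymm (hcle s hs v hv s hs u hu) (hcle s hs u hu s hs v hv))]
    simp
  have hsum : ∑ g ∈ G, (U ∩ S.image (actE g)).card = ∑ u ∈ U, ∑ s ∈ S, c s u := by
    have : ∀ g ∈ G, (U ∩ S.image (actE g)).card
        = ∑ u ∈ U, ∑ s ∈ S, if actE g s = u then 1 else 0 := by
      intro g _
      rw [Finset.sum_comm]
      have : U ∩ S.image (actE g) = (S.filter fun s => actE g s ∈ U).image (actE g) := by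
        ext x
        simp only [Finset.mem_inter, Finset.mem_image, Finset.mem_filter]
        constructor
        · rintro ⟨h, s, hs, rfl⟩
          exact ⟨s, ⟨hs, h⟩, rfl⟩
        · rintro ⟨s, ⟨hs, h⟩, rfl⟩
          exact ⟨h, s, hs, rfl⟩
      rw [this, Finset.card_image_of_injective _ (actE_inj g), Finset.card_filter]
      refine Finset.sum_congr rfl fun s _ => ?_
      simp
    rw [Finset.sum_congr rfl this, Finset.sum_comm]
    refine Finset.sum_congr rfl fun u _ => ?_
    rw [Finset.sum_comm]
    refine Finset.sum_congr rfl fun s _ => ?_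
    simp [c]
  have htot : ∑ g ∈ G, E.card * (U ∩ S.image (actE g)).card = ∑ g ∈ G, U.card * S.card := by
    rw [← Finset.mul_sum, hsum, Finset.mul_sum]
    rw [Finset.sum_congr rfl (g := fun _ => S.card * G.card)]
    · simp; ring
    · intro u hu
      rw [Finset.mul_sum, Finset.sum_congr rfl (g := fun _ => G.card)]
      · simp
      · intro s hs
        exact (hc s (hS hs) u (hU hu)).symm
  have hGne : G.Nonempty := by
    obtain ⟨p, hp⟩ := hne
    obtain ⟨g, hg, _⟩ := htr p hp p hp
    exact ⟨g, hg⟩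
  obtain ⟨g, _, hg⟩ := Finset.exists_le_of_sum_le hGne htot.symm.le
  exact ⟨g, hg⟩

lemma enum_cover {X : Type*} (A : Finset X) (x0 : X) (m : ℕ) (h : A.card ≤ m) :
    ∃ f : Fin m → X, ∀ x ∈ A, ∃ a, f a = x := by
  refine ⟨fun i => if h : i.1 < A.card then (A.equivFin.symm ⟨i.1, h⟩ : X) else x0, ?_⟩
  intro x hx
  refine ⟨⟨(A.equivFin ⟨x, hx⟩).1, lt_of_lt_of_le (A.equivFin ⟨x, hx⟩).2 h⟩, ?_⟩
  simp

theorem stmt1 {X Y : Type*} [Fintype X] [Fintype Y] [DecidableEq X] [DecidableEq Y]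
    (E : Finset (X × Y)) (hne : E.Nonempty) (htrans : EdgeTransitive E)
    (α β γ : ℕ) (h : E.card ≤ maxRect E α β * 2 ^ γ)
    (γ' : ℕ) (hγ' : (2 : ℝ) ^ γ' ≥ 2 ^ γ * (Real.log E.card + 1)) :
    InProfile (↑E : Set (X × Y)) α β γ' := by
  obtain ⟨A, B, hA, hB, hR⟩ : ∃ (A : Finset X) (B : Finset Y), A.card ≤ 2 ^ α ∧ B.card ≤ 2 ^ β ∧
      maxRect E α β = (E.filter fun p => p.1 ∈ A ∧ p.2 ∈ B).card := by
    obtain ⟨AB, hAB, h2⟩ := Finset.exists_mem_eq_sup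
      ((Finset.univ.powerset.filter fun A : Finset X => A.card ≤ 2 ^ α) ×ˢ
        (Finset.univ.powerset.filter fun B : Finset Y => B.card ≤ 2 ^ β))
      ⟨(∅, ∅), by simp⟩
      (fun AB : Finset X × Finset Y => (E.filter fun p : X × Y => p.1 ∈ AB.1 ∧ p.2 ∈ AB.2).card)
    simp only [Finset.mem_product, Finset.mem_filter] at hAB
    exact ⟨AB.1, AB.2, hAB.1.2, hAB.2.2, h2⟩
  set S := E.filter fun p => p.1 ∈ A ∧ p.2 ∈ B with hS
  rw [hR] at h
  have hstep : ∀ U : Finset (X × Y), ∃ g : (X ≃ X) × (Y ≃ Y), U ⊆ E →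
      U.card * S.card ≤ E.card * (U ∩ S.image (actE g)).card := by
    intro U
    by_cases hU : U ⊆ E
    · obtain ⟨g, hg⟩ := avg_step E hne htrans S U (Finset.filter_subset _ _) hU
      exact ⟨g, fun _ => hg⟩
    · exact ⟨(Equiv.refl _, Equiv.refl _), fun h => absurd h hU⟩
  choose g hg using hstep
  let V : ℕ → Finset (X × Y) := fun k => Nat.rec E (fun _ U => U \ S.image (actE (g U))) k
  have hVs : ∀ k, V (k + 1) = V k \ S.image (actE (g (V k))) := fun k => rfl
  have hV0 : V 0 = E := rfl
  have hVE : ∀ k, V k ⊆ E := by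
    intro k
    induction k with
    | zero => rw [hV0]
    | succ k ih => rw [hVs]; exact Finset.sdiff_subset.trans ih
  have hn : (0 : ℝ) < E.card := by exact_mod_cast hne.card_pos
  have hq : (0 : ℝ) < 2 ^ γ := by positivity
  have hq1 : (1 : ℝ) ≤ 2 ^ γ := one_le_pow₀ (by norm_num)
  have hp : (0 : ℝ) ≤ 1 - 1 / 2 ^ γ := by
    rw [sub_nonneg, div_le_one hq]; exact hq1
  have hcard : ∀ k, ((V k).card : ℝ) ≤ E.card * (1 - 1 / 2 ^ γ) ^ k := by
    intro k
    induction k with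
    | zero => simp [hV0]
    | succ k ih =>
      have h1 := hg (V k) (hVE k)
      have h2 : (V (k + 1)).card + (V k ∩ S.image (actE (g (V k)))).card = (V k).card := by
        rw [hVs]; exact Finset.card_sdiff_add_card_inter _ _
      generalize (V k ∩ S.image (actE (g (V k)))).card = t at h1 h2
      have h1' : ((V k).card : ℝ) * S.card ≤ E.card * t := by exact_mod_cast h1
      have h2' : ((V (k + 1)).card : ℝ) + t = (V k).card := by exact_mod_cast h2
      have h' : (E.card : ℝ) ≤ S.card * 2 ^ γ := by exact_mod_cast h
      have h3 : ((V k).card : ℝ) ≤ t * 2 ^ γ := by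
        have hv : (0 : ℝ) ≤ (V k).card := by positivity
        have : (E.card : ℝ) * (V k).card ≤ E.card * (t * 2 ^ γ) := by
          calc (E.card : ℝ) * (V k).card ≤ (S.card * 2 ^ γ) * (V k).card := by gcongr
            _ = ((V k).card * S.card) * 2 ^ γ := by ring
            _ ≤ (E.card * t) * 2 ^ γ := by gcongr
            _ = _ := by ring
        exact le_of_mul_le_mul_left this hn
      have h4 : ((V k).card : ℝ) * (1 / 2 ^ γ) ≤ t := by
        rw [mul_one_div, div_le_iff₀ hq]; exact h3
      calc ((V (k + 1)).card : ℝ) ≤ (V k).card * (1 - 1 / 2 ^ γ) := by linarith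
        _ ≤ (E.card * (1 - 1 / 2 ^ γ) ^ k) * (1 - 1 / 2 ^ γ) := by gcongr
        _ = _ := by ring
  have hVN : V (2 ^ γ') = ∅ := by
    have h1 := hcard (2 ^ γ')
    have h2 : (1 - 1 / 2 ^ γ : ℝ) ≤ Real.exp (-(1 / 2 ^ γ)) := by
      have := Real.add_one_le_exp (-(1 / 2 ^ γ : ℝ)); linarith
    have h3 : (1 - 1 / 2 ^ γ : ℝ) ^ (2 ^ γ') ≤ Real.exp (-(Real.log E.card + 1)) := by
      calc (1 - 1 / 2 ^ γ : ℝ) ^ (2 ^ γ') ≤ Real.exp (-(1 / 2 ^ γ)) ^ (2 ^ γ') := by gcongr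
        _ = Real.exp (((2 ^ γ' : ℕ) : ℝ) * (-(1 / 2 ^ γ))) := by rw [Real.exp_nat_mul]
        _ ≤ _ := by
          apply Real.exp_le_exp.2
          have : Real.log E.card + 1 ≤ 2 ^ γ' / 2 ^ γ := by
            rw [le_div_iff₀ hq]; linarith
          push_cast
          rw [mul_neg, mul_one_div]
          linarith
    have h4 : ((V (2 ^ γ')).card : ℝ) < 1 := by
      calc ((V (2 ^ γ')).card : ℝ) ≤ E.card * Real.exp (-(Real.log E.card + 1)) :=
            h1.trans (by gcongr)
        _ = Real.exp (-1) := by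
          rw [neg_add, Real.exp_add, Real.exp_neg, Real.exp_log hn]
          field_simp
        _ < 1 := by rw [Real.exp_lt_one_iff]; norm_num
    have h5 : (V (2 ^ γ')).card < 1 := by exact_mod_cast h4
    exact Finset.card_eq_zero.1 (by omega)
  have hcov : ∀ p ∈ E, ∀ k, p ∉ V k → ∃ i < k, p ∈ S.image (actE (g (V i))) := by
    intro p hp k
    induction k with
    | zero => intro h; exact absurd hp h
    | succ k ih =>
      intro h
      rcases Classical.em (p ∈ V k) with hk | hk
      · refine ⟨k, by omega, ?_⟩
        by_contra hc
        exact h (by rw [hVs]; exact Finset.mem_sdiff.2 ⟨hk, hc⟩)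
      · obtain ⟨i, hi, h'⟩ := ih hk
        exact ⟨i, by omega, h'⟩
  obtain ⟨⟨x0, y0⟩, _⟩ := hne
  obtain ⟨fA, hfA⟩ := enum_cover A x0 _ hA
  obtain ⟨fB, hfB⟩ := enum_cover B y0 _ hB
  refine ⟨fun ac => (g (V ac.2)).1 (fA ac.1), fun bc => (g (V bc.2)).2 (fB bc.1), ?_⟩
  intro p hp
  obtain ⟨i, hi, hpi⟩ := hcov p hp (2 ^ γ') (by rw [hVN]; simp)
  obtain ⟨s, hs, rfl⟩ := Finset.mem_image.1 hpi
  have hs' := (Finset.mem_filter.1 hs).2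
  obtain ⟨a, ha⟩ := hfA _ hs'.1
  obtain ⟨b, hb⟩ := hfB _ hs'.2
  exact ⟨a, b, ⟨i, hi⟩, by simp [ha, actE], by simp [hb, actE]⟩
end

section
/- Let X and Y be finite nonempty types and let D be a probability mass function on X × Y whose marginals D_X and D_Y are everywhere positive. Then D is non-degenerate if and only if there exists δ ∈ (0, 1) such that D is δ-hypercontractive. -/
open Finset

/-- Marginal distribution on `X` of a distribution on `X × Y`. -/
noncomputable def margX {X Y : Type*} [Fintype Y] (D : X × Y → ℝ) (x : X) : ℝ :=
  ∑ y, D (x, y)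

/-- Marginal distribution on `Y` of a distribution on `X × Y`. -/
noncomputable def margY {X Y : Type*} [Fintype X] (D : X × Y → ℝ) (y : Y) : ℝ :=
  ∑ x, D (x, y)

/-- The conditional-expectation operator `T_D`: `(T_D f)(x) = E[f(y) | x]`. -/
noncomputable def condOp {X Y : Type*} [Fintype Y] (D : X × Y → ℝ) (f : Y → ℝ) (x : X) : ℝ :=
  (∑ y, D (x, y) * f y) / margX D x

/-- The `L_p` norm of `f` with respect to the weight (probability mass) `w`. -/
noncomputable def wnorm {α : Type*} [Fintype α] (w : α → ℝ) (p : ℝ) (f : α → ℝ) : ℝ :=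
  (∑ a, w a * |f a| ^ p) ^ (1 / p)

/-- `D` is `δ`-hypercontractive: `‖T_D f‖_{2 + δ/(1-δ)} ≤ ‖f‖_{2-δ}` for all `f`. -/
def Hypercontractive {X Y : Type*} [Fintype X] [Fintype Y] (D : X × Y → ℝ) (δ : ℝ) : Prop :=
  ∀ f : Y → ℝ,
    wnorm (margX D) (2 + δ / (1 - δ)) (condOp D f) ≤ wnorm (margY D) (2 - δ) f

/-- `D` is degenerate: there are nonempty proper subsets `A ⊊ X`, `B ⊊ Y` such that
`D` vanishes on `A × Bᶜ` and on `Aᶜ × B`. -/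
def Degenerate {X Y : Type*} (D : X × Y → ℝ) : Prop :=
  ∃ (A : Set X) (B : Set Y), A.Nonempty ∧ A ≠ Set.univ ∧ B.Nonempty ∧ B ≠ Set.univ ∧
    ∀ x y, ((x ∈ A ∧ y ∉ B) ∨ (x ∉ A ∧ y ∈ B)) → D (x, y) = 0

lemma hc_sum_margX {X Y : Type*} [Fintype X] [Fintype Y] (D : X × Y → ℝ) (g : X → ℝ) :
    ∑ x, margX D x * g x = ∑ p : X × Y, D p * g p.1 := by
  rw [Fintype.sum_prod_type]
  simp [margX, Finset.sum_mul]

lemma hc_sum_margY {X Y : Type*} [Fintype X] [Fintype Y] (D : X × Y → ℝ) (g : Y → ℝ) :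
    ∑ y, margY D y * g y = ∑ p : X × Y, D p * g p.2 := by
  rw [Fintype.sum_prod_type_right]
  simp [margY, Finset.sum_mul]

lemma hc_edgeX {X Y : Type*} [Fintype Y] (D : X × Y → ℝ) (x : X) (h : 0 < margX D x) :
    ∃ y, D (x, y) ≠ 0 := by
  by_contra hc
  push Not at hc
  simp [margX, hc] at h

lemma hc_edgeY {X Y : Type*} [Fintype X] (D : X × Y → ℝ) (y : Y) (h : 0 < margY D y) :
    ∃ x, D (x, y) ≠ 0 := by
  by_contra hc
  push Not at hc
  simp [margY, hc] at h

lemma hc_conn {X Y : Type*} [Fintype X] [Fintype Y] (D : X × Y → ℝ)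
    (hDX : ∀ x, 0 < margX D x) (hDY : ∀ y, 0 < margY D y) (hnd : ¬ Degenerate D) (x0 : X) :
    ∃ K : ℝ, 0 ≤ K ∧ ∀ (u : X → ℝ) (v : Y → ℝ) (τ : ℝ), 0 ≤ τ →
      (∀ x y, D (x, y) ≠ 0 → |u x - v y| ≤ τ) →
      (∀ x, |u x0 - u x| ≤ K * τ) ∧ (∀ y, |u x0 - v y| ≤ K * τ) := by
  set A : Set X := {x | ∃ n : ℝ, 0 ≤ n ∧ ∀ (u : X → ℝ) (v : Y → ℝ) (τ : ℝ), 0 ≤ τ →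
      (∀ x y, D (x, y) ≠ 0 → |u x - v y| ≤ τ) → |u x0 - u x| ≤ n * τ} with hA
  set B : Set Y := {y | ∃ n : ℝ, 0 ≤ n ∧ ∀ (u : X → ℝ) (v : Y → ℝ) (τ : ℝ), 0 ≤ τ →
      (∀ x y, D (x, y) ≠ 0 → |u x - v y| ≤ τ) → |u x0 - v y| ≤ n * τ} with hB
  have hAB : ∀ x y, D (x, y) ≠ 0 → x ∈ A → y ∈ B := by
    rintro x y hxy ⟨n, hn, h⟩
    refine ⟨n + 1, by linarith, fun u v τ hτ he => ?_⟩
    have h1 := h u v τ hτ he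
    have h2 := he x y hxy
    have h3 := abs_sub_le (u x0) (u x) (v y)
    linarith
  have hBA : ∀ x y, D (x, y) ≠ 0 → y ∈ B → x ∈ A := by
    rintro x y hxy ⟨n, hn, h⟩
    refine ⟨n + 1, by linarith, fun u v τ hτ he => ?_⟩
    have h1 := h u v τ hτ he
    have h2 := he x y hxy
    have h3 := abs_sub_le (u x0) (v y) (u x)
    rw [abs_sub_comm (v y)] at h3
    linarith
  have hx0 : x0 ∈ A := ⟨0, le_rfl, fun u v τ hτ he => by simp⟩
  have hBne : B.Nonempty := by
    obtain ⟨y, hy⟩ := hc_edgeX D x0 (hDX x0)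
    exact ⟨y, hAB _ _ hy hx0⟩
  have hAu : A = Set.univ := by
    by_contra hne
    apply hnd
    refine ⟨A, B, ⟨x0, hx0⟩, hne, hBne, ?_, ?_⟩
    · intro hBu
      apply hne
      ext x
      simp only [Set.mem_univ, iff_true]
      obtain ⟨y, hy⟩ := hc_edgeX D x (hDX x)
      exact hBA _ _ hy (hBu ▸ Set.mem_univ y)
    · rintro x y (⟨h1, h2⟩ | ⟨h1, h2⟩)
      · by_contra h; exact h2 (hAB _ _ h h1)
      · by_contra h; exact h1 (hBA _ _ h h2)
  have hA' : ∀ x, x ∈ A := fun x => hAu ▸ Set.mem_univ x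
  have hB' : ∀ y, y ∈ B := fun y => by
    obtain ⟨x, hx⟩ := hc_edgeY D y (hDY y)
    exact hAB _ _ hx (hA' x)
  choose n hn hnu using hA'
  choose m hm hmu using hB'
  refine ⟨∑ x, n x + ∑ y, m y, add_nonneg (sum_nonneg fun x _ => hn x)
    (sum_nonneg fun x _ => hm x), fun u v τ hτ he => ⟨fun x => ?_, fun y => ?_⟩⟩
  · refine (hnu x u v τ hτ he).trans (mul_le_mul_of_nonneg_right ?_ hτ)
    have := single_le_sum (fun x _ => hn x) (mem_univ x)
    have := sum_nonneg (fun x (_ : x ∈ univ) => hm x)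
    linarith
  · refine (hmu y u v τ hτ he).trans (mul_le_mul_of_nonneg_right ?_ hτ)
    have := single_le_sum (fun x _ => hm x) (mem_univ y)
    have := sum_nonneg (fun x (_ : x ∈ univ) => hn x)
    linarith

lemma hc_poincare {X Y : Type*} [Fintype X] [Fintype Y] [Nonempty X] 
    (D : X × Y → ℝ) (hD0 : ∀ p, 0 ≤ D p) (hD1 : ∑ p, D p = 1)
    (hDX : ∀ x, 0 < margX D x) (hDY : ∀ y, 0 < margY D y) (hnd : ¬ Degenerate D) :
    ∃ K : ℝ, 0 ≤ K ∧ ∀ (u : X → ℝ) (v : Y → ℝ), (∀ x, 0 ≤ u x) → (∀ y, 0 ≤ v y) →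
      ∑ x, margX D x * u x ^ 2 = 1 → ∑ y, margY D y * v y ^ 2 = 1 →
      ∑ p : X × Y, D p * (u p.1 * v p.2 - 1) ^ 2 ≤
        K * ∑ p : X × Y, D p * (u p.1 - v p.2) ^ 2 := by
  obtain ⟨x0⟩ := ‹Nonempty X›
  obtain ⟨K, hK, hconn⟩ := hc_conn D hDX hDY hnd x0
  set C := ∑ p, (D p)⁻¹ with hC
  have hC0 : 0 ≤ C := sum_nonneg fun p _ => inv_nonneg.2 (hD0 p)
  set M := ∑ y, (margY D y)⁻¹ with hM
  have hM0 : 0 ≤ M := sum_nonneg fun y _ => inv_nonneg.2 (hDY y).le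
  refine ⟨(2 * M + 2) * (4 * K ^ 2 * C), by positivity, fun u v hu hv hu1 hv1 => ?_⟩
  set s := ∑ p : X × Y, D p * (u p.1 - v p.2) ^ 2 with hs
  have hs0 : 0 ≤ s := sum_nonneg fun p _ => mul_nonneg (hD0 p) (sq_nonneg _)
  set τ := Real.sqrt (C * s) with hτ
  have hτ0 : 0 ≤ τ := Real.sqrt_nonneg _
  have hτ2 : τ ^ 2 = C * s := Real.sq_sqrt (by positivity)
  have hedge : ∀ x y, D (x, y) ≠ 0 → |u x - v y| ≤ τ := by
    intro x y hxy
    apply Real.abs_le_sqrt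
    have hpos : 0 < D (x, y) := lt_of_le_of_ne (hD0 _) hxy.symm
    have h1 : D (x, y) * (u x - v y) ^ 2 ≤ s :=
      single_le_sum (f := fun p : X × Y => D p * (u p.1 - v p.2) ^ 2)
        (fun p _ => mul_nonneg (hD0 p) (sq_nonneg _)) (mem_univ (x, y))
    have h2 : (D (x, y))⁻¹ ≤ C :=
      single_le_sum (f := fun p : X × Y => (D p)⁻¹)
        (fun p _ => inv_nonneg.2 (hD0 p)) (mem_univ (x, y))
    calc (u x - v y) ^ 2 = (D (x, y))⁻¹ * (D (x, y) * (u x - v y) ^ 2) := by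
          field_simp
      _ ≤ C * s := mul_le_mul h2 h1 (mul_nonneg hpos.le (sq_nonneg _)) hC0
  obtain ⟨hcu, hcv⟩ := hconn u v τ hτ0 hedge
  have hmX : ∑ x, margX D x = 1 := by
    have := hc_sum_margX D (fun _ => 1)
    simpa [hD1] using this
  have hlow : ∃ x, u x ≤ 1 := by
    by_contra hc
    push Not at hc
    have : ∑ x, margX D x < ∑ x, margX D x * u x ^ 2 := by
      refine sum_lt_sum_of_nonempty ⟨x0, mem_univ _⟩ fun x _ => ?_
      have h1 := hc x
      have h2 := hDX x
      have h3 : 1 < u x ^ 2 := by nlinarith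
      nlinarith
    linarith
  have hhigh : ∃ x, 1 ≤ u x := by
    by_contra hc
    push Not at hc
    have : ∑ x, margX D x * u x ^ 2 < ∑ x, margX D x := by
      refine sum_lt_sum_of_nonempty ⟨x0, mem_univ _⟩ fun x _ => ?_
      have h1 := hc x
      have h2 := hDX x
      have h4 := hu x
      have h3 : u x ^ 2 < 1 := by nlinarith
      nlinarith
    linarith
  have h0 : |u x0 - 1| ≤ K * τ := by
    obtain ⟨x1, h1⟩ := hlow
    obtain ⟨x2, h2⟩ := hhigh
    have := abs_le.1 (hcu x1)
    have := abs_le.1 (hcu x2)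
    rw [abs_le]; constructor <;> linarith
  have hu' : ∀ x, (u x - 1) ^ 2 ≤ 4 * K ^ 2 * (C * s) := by
    intro x
    have h1 := abs_le.1 (hcu x)
    have h2 := abs_le.1 h0
    have h3 : |u x - 1| ≤ 2 * (K * τ) := by rw [abs_le]; constructor <;> linarith
    have := sq_le_sq' (abs_le.1 h3).1 (abs_le.1 h3).2
    rw [← hτ2]; linarith
  have hv' : ∀ y, (v y - 1) ^ 2 ≤ 4 * K ^ 2 * (C * s) := by
    intro x
    have h1 := abs_le.1 (hcv x)
    have h2 := abs_le.1 h0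
    have h3 : |v x - 1| ≤ 2 * (K * τ) := by rw [abs_le]; constructor <;> linarith
    have := sq_le_sq' (abs_le.1 h3).1 (abs_le.1 h3).2
    rw [← hτ2]; linarith
  have hvM : ∀ y, v y ^ 2 ≤ M := by
    intro y
    have hpos := hDY y
    have h1 : margY D y * v y ^ 2 ≤ 1 := hv1 ▸
      single_le_sum (f := fun y => margY D y * v y ^ 2)
        (fun p _ => mul_nonneg (hDY p).le (sq_nonneg _)) (mem_univ y)
    have h2 : (margY D y)⁻¹ ≤ M :=
      single_le_sum (f := fun y => (margY D y)⁻¹)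
        (fun p _ => inv_nonneg.2 (hDY p).le) (mem_univ y)
    refine le_trans ?_ h2
    rw [← one_div, le_div_iff₀ hpos]
    linarith
  have hpt : ∀ p : X × Y, (u p.1 * v p.2 - 1) ^ 2 ≤ (2 * M + 2) * (4 * K ^ 2 * (C * s)) := by
    intro p
    have h1 := hu' p.1
    have h2 := hv' p.2
    have h3 := hvM p.2
    have h4 : (u p.1 - 1) ^ 2 * v p.2 ^ 2 ≤ (4 * K ^ 2 * (C * s)) * M :=
      mul_le_mul h1 h3 (sq_nonneg _) (by positivity)
    nlinarith [sq_nonneg ((u p.1 - 1) * v p.2 - (v p.2 - 1))]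
  calc ∑ p : X × Y, D p * (u p.1 * v p.2 - 1) ^ 2
      ≤ ∑ p : X × Y, D p * ((2 * M + 2) * (4 * K ^ 2 * (C * s))) :=
        sum_le_sum fun p _ => mul_le_mul_of_nonneg_left (hpt p) (hD0 p)
    _ = (2 * M + 2) * (4 * K ^ 2 * C) * s := by rw [← sum_mul, hD1]; ring

lemma hc_pt (t ε : ℝ) (ht : 0 ≤ t) (h0 : 0 < ε) (h1 : ε ≤ 1) :
    t ^ (1 + ε) ≤ t + ε * (t - 1) + ε * (t - 1) ^ 2 := by
  have h := rpow_one_add_le_one_add_mul_self (s := t - 1) (by linarith) h0.le h1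
  rw [add_sub_cancel] at h
  rw [Real.rpow_add' ht (by linarith), Real.rpow_one]
  nlinarith [mul_le_mul_of_nonneg_left h ht]

lemma hc_norm {X Y : Type*} [Fintype X] [Fintype Y] [Nonempty X] 
    (D : X × Y → ℝ) (hD0 : ∀ p, 0 ≤ D p) (hD1 : ∑ p, D p = 1)
    (hDX : ∀ x, 0 < margX D x) (hDY : ∀ y, 0 < margY D y) (hnd : ¬ Degenerate D) :
    ∃ ε : ℝ, 0 < ε ∧ ε < 1 ∧ ∀ (u : X → ℝ) (v : Y → ℝ), (∀ x, 0 ≤ u x) → (∀ y, 0 ≤ v y) →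
      ∑ x, margX D x * u x ^ 2 = 1 → ∑ y, margY D y * v y ^ 2 = 1 →
      ∑ p : X × Y, D p * (u p.1 * v p.2) ^ (1 + ε) ≤ 1 := by
  obtain ⟨K, hK, h⟩ := hc_poincare D hD0 hD1 hDX hDY hnd
  refine ⟨1 / (2 * K + 2), by positivity, ?_, fun u v hu hv hu1 hv1 => ?_⟩
  · rw [div_lt_one (by positivity)]; linarith
  set ε := 1 / (2 * K + 2) with hε
  have hε0 : 0 < ε := by positivity
  have hε1 : ε ≤ 1 := by rw [hε, div_le_one (by positivity)]; linarith
  have hεK : ε * K ≤ 1 / 2 := by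
    rw [hε, div_mul_eq_mul_div, div_le_div_iff₀ (by positivity) (by positivity)]; linarith
  have h1 := h u v hu hv hu1 hv1
  rw [hc_sum_margX D (fun x => u x ^ 2)] at hu1
  rw [hc_sum_margY D (fun x => v x ^ 2)] at hv1
  set s := ∑ p : X × Y, D p * (u p.1 - v p.2) ^ 2 with hs
  have hs0 : 0 ≤ s := sum_nonneg fun p _ => mul_nonneg (hD0 p) (sq_nonneg _)
  have huv : ∑ p : X × Y, D p * (u p.1 * v p.2) = 1 - s / 2 := by
    have : s = ∑ p : X × Y, D p * u p.1 ^ 2 + ∑ p : X × Y, D p * v p.2 ^ 2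
        - 2 * ∑ p : X × Y, D p * (u p.1 * v p.2) := by
      rw [hs, mul_sum, ← sum_add_distrib, ← sum_sub_distrib]
      exact sum_congr rfl fun p _ => by ring
    linarith
  calc ∑ p : X × Y, D p * (u p.1 * v p.2) ^ (1 + ε)
      ≤ ∑ p : X × Y, D p * ((u p.1 * v p.2) + ε * (u p.1 * v p.2 - 1)
          + ε * (u p.1 * v p.2 - 1) ^ 2) :=
        sum_le_sum fun p _ => mul_le_mul_of_nonneg_left
          (hc_pt _ _ (mul_nonneg (hu _) (hv _)) hε0 hε1) (hD0 p)
    _ = (1 + ε) * (∑ p : X × Y, D p * (u p.1 * v p.2)) - ε * ∑ p, D p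
          + ε * ∑ p : X × Y, D p * (u p.1 * v p.2 - 1) ^ 2 := by
        rw [mul_sum, mul_sum, mul_sum, ← sum_sub_distrib, ← sum_add_distrib]
        exact sum_congr rfl fun p _ => by ring
    _ ≤ 1 := by
        rw [huv, hD1]
        have := mul_le_mul_of_nonneg_left h1 hε0.le
        nlinarith [mul_le_mul_of_nonneg_right hεK hs0, mul_nonneg hε0.le hs0]

lemma hc_zero {α : Type*} [Fintype α] (w F : α → ℝ) (hw : ∀ x, 0 < w x) (hF : ∀ x, 0 ≤ F x)
    (p : ℝ) (hp : 0 < p) (h : ∑ x, w x * F x ^ p = 0) : ∀ x, F x = 0 := by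
  intro x
  rw [sum_eq_zero_iff_of_nonneg
    (fun x _ => mul_nonneg (hw x).le (Real.rpow_nonneg (hF x) _))] at h
  have := h x (mem_univ x)
  rcases mul_eq_zero.1 this with h | h
  · exact absurd h (hw x).ne'
  · exact (Real.rpow_eq_zero (hF x) hp.ne').1 h

lemma hc_bilin {X Y : Type*} [Fintype X] [Fintype Y] [Nonempty X] 
    (D : X × Y → ℝ) (hD0 : ∀ p, 0 ≤ D p) (hD1 : ∑ p, D p = 1)
    (hDX : ∀ x, 0 < margX D x) (hDY : ∀ y, 0 < margY D y) (hnd : ¬ Degenerate D) :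
    ∃ ε : ℝ, 0 < ε ∧ ε < 1 ∧ ∀ (F : X → ℝ) (G : Y → ℝ), (∀ x, 0 ≤ F x) → (∀ y, 0 ≤ G y) →
      ∀ p, p = 2 / (1 + ε) →
      ∑ z : X × Y, D z * (F z.1 * G z.2) ≤
        (∑ x, margX D x * F x ^ p) ^ (1 / p) * (∑ y, margY D y * G y ^ p) ^ (1 / p) := by
  obtain ⟨ε, hε0, hε1, h⟩ := hc_norm D hD0 hD1 hDX hDY hnd
  refine ⟨ε, hε0, hε1, fun F G hF hG p hp => ?_⟩
  have hp0 : 0 < p := by rw [hp]; positivity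
  have hpi : 1 / p = 1 / 2 * (1 + ε) := by rw [hp]; field_simp
  set S := ∑ x, margX D x * F x ^ p with hS
  set R := ∑ y, margY D y * G y ^ p with hR
  have hS0 : 0 ≤ S := sum_nonneg fun x _ => mul_nonneg (hDX x).le (Real.rpow_nonneg (hF x) _)
  have hR0 : 0 ≤ R := sum_nonneg fun x _ => mul_nonneg (hDY x).le (Real.rpow_nonneg (hG x) _)
  rcases hS0.eq_or_lt with hS1 | hS1
  · have := hc_zero _ F hDX hF p hp0 hS1.symm
    simp only [this, zero_mul, mul_zero, sum_const_zero]
    positivity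
  rcases hR0.eq_or_lt with hR1 | hR1
  · have := hc_zero _ G hDY hG p hp0 hR1.symm
    simp only [this, mul_zero, sum_const_zero]
    positivity
  have key : ∀ (f s : ℝ), 0 ≤ f → 0 < s →
      (Real.sqrt (f ^ p / s)) ^ (1 + ε) = f / s ^ (1 / p) := by
    intro f s hf hs
    rw [Real.sqrt_eq_rpow, ← Real.rpow_mul (by positivity), ← hpi,
      Real.div_rpow (by positivity) hs.le, ← Real.rpow_mul hf, mul_one_div_cancel hp0.ne',
      Real.rpow_one]
  have := h (fun x => Real.sqrt (F x ^ p / S)) (fun y => Real.sqrt (G y ^ p / R))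
    (fun _ => Real.sqrt_nonneg _) (fun _ => Real.sqrt_nonneg _) (by
      have : ∀ x, margX D x * Real.sqrt (F x ^ p / S) ^ 2 = margX D x * F x ^ p / S := by
        intro x
        rw [Real.sq_sqrt (div_nonneg (Real.rpow_nonneg (hF x) _) hS0), mul_div_assoc]
      simp only [this]
      rw [← sum_div, div_self hS1.ne']) (by
      have : ∀ x, margY D x * Real.sqrt (G x ^ p / R) ^ 2 = margY D x * G x ^ p / R := by
        intro x
        rw [Real.sq_sqrt (div_nonneg (Real.rpow_nonneg (hG x) _) hR0), mul_div_assoc]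
      simp only [this]
      rw [← sum_div, div_self hR1.ne'])
  have e : ∀ z : X × Y, D z * (Real.sqrt (F z.1 ^ p / S) * Real.sqrt (G z.2 ^ p / R)) ^ (1 + ε)
      = D z * (F z.1 * G z.2) / (S ^ (1 / p) * R ^ (1 / p)) := by
    intro z
    rw [Real.mul_rpow (Real.sqrt_nonneg _) (Real.sqrt_nonneg _), key _ _ (hF _) hS1,
      key _ _ (hG _) hR1, div_mul_div_comm, ← mul_div_assoc]
  simp only [e] at this
  rw [← sum_div, div_le_one (by positivity)] at this
  exact this

lemma hc_forward {X Y : Type*} [Fintype X] [Fintype Y] [Nonempty X] 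
    (D : X × Y → ℝ) (hD0 : ∀ p, 0 ≤ D p) (hD1 : ∑ p, D p = 1)
    (hDX : ∀ x, 0 < margX D x) (hDY : ∀ y, 0 < margY D y) (hnd : ¬ Degenerate D) :
    ∃ δ : ℝ, 0 < δ ∧ δ < 1 ∧ Hypercontractive D δ := by
  obtain ⟨ε, hε0, hε1, h⟩ := hc_bilin D hD0 hD1 hDX hDY hnd
  have hδ1 : 2 * ε / (1 + ε) < 1 := by rw [div_lt_one (by positivity)]; linarith
  refine ⟨2 * ε / (1 + ε), by positivity, hδ1, fun f => ?_⟩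
  have hε2 : 0 < 1 - ε := by linarith
  have hp : 2 - 2 * ε / (1 + ε) = 2 / (1 + ε) := by field_simp; ring
  have hq : 2 + 2 * ε / (1 + ε) / (1 - 2 * ε / (1 + ε)) = 2 / (1 - ε) := by
    have : 1 - 2 * ε / (1 + ε) = (1 - ε) / (1 + ε) := by field_simp; ring
    rw [this]
    field_simp; ring
  rw [hp, hq]
  set p := 2 / (1 + ε) with hpdef
  set q := 2 / (1 - ε) with hqdef
  have hp0 : 0 < p := by positivity
  have hq0 : 0 < q := by positivity
  have hq1 : 0 < q - 1 := by
    rw [hqdef, sub_pos, one_lt_div hε2]; linarith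
  have hqp : (q - 1) * p = q := by rw [hqdef, hpdef]; field_simp; ring
  have hpq : 1 - 1 / p = 1 / q := by rw [hqdef, hpdef]; field_simp; ring
  set g : X → ℝ := fun x => |condOp D f x| with hg
  have hg0 : ∀ x, 0 ≤ g x := fun x => abs_nonneg _
  have hgb : ∀ x, margX D x * g x ≤ ∑ y, D (x, y) * |f y| := by
    intro x
    have hx := hDX x
    simp only [hg, condOp]
    rw [abs_div, abs_of_pos hx, mul_div_cancel₀ _ hx.ne']
    refine (abs_sum_le_sum_abs _ _).trans (le_of_eq (sum_congr rfl fun y _ => ?_))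
    rw [abs_mul, abs_of_nonneg (hD0 _)]
  have hb := h (fun x => g x ^ (q - 1)) (fun y => |f y|) (fun x => Real.rpow_nonneg (hg0 x) _)
    (fun y => abs_nonneg _) p rfl
  have hpow : ∀ x, (g x ^ (q - 1)) ^ p = g x ^ q := fun x => by
    rw [← Real.rpow_mul (hg0 x), hqp]
  simp only [hpow] at hb
  simp only [wnorm]
  change (∑ x, margX D x * g x ^ q) ^ (1 / q) ≤ _
  set N := ∑ x, margX D x * g x ^ q with hN
  have hN0 : 0 ≤ N := sum_nonneg fun x _ => mul_nonneg (hDX x).le (Real.rpow_nonneg (hg0 x) _)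
  have hNle : N ≤ ∑ z : X × Y, D z * (g z.1 ^ (q - 1) * |f z.2|) := by
    rw [Fintype.sum_prod_type]
    refine sum_le_sum fun x _ => ?_
    have e : g x ^ q = g x ^ (q - 1) * g x := by
      conv_rhs => rw [← Real.rpow_one (g x), ← Real.rpow_mul (hg0 x), one_mul]
      rw [← Real.rpow_add' (hg0 x) (by linarith), sub_add_cancel]
    calc margX D x * g x ^ q = g x ^ (q - 1) * (margX D x * g x) := by rw [e]; ring
      _ ≤ g x ^ (q - 1) * ∑ y, D (x, y) * |f y| :=
        mul_le_mul_of_nonneg_left (hgb x) (Real.rpow_nonneg (hg0 x) _)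
      _ = ∑ y, D (x, y) * (g x ^ (q - 1) * |f y|) := by
        rw [mul_sum]; exact sum_congr rfl fun y _ => by ring
  set R := (∑ y, margY D y * |f y| ^ p) ^ (1 / p) with hR
  have hR0 : 0 ≤ R := Real.rpow_nonneg
    (sum_nonneg fun y _ => mul_nonneg (hDY y).le (Real.rpow_nonneg (abs_nonneg _) _)) _
  rcases hN0.eq_or_lt with h1 | h1
  · rw [← h1, Real.zero_rpow (by positivity)]; exact hR0
  · have h2 := hNle.trans hb
    rw [← hpq, Real.rpow_sub h1, Real.rpow_one, div_le_iff₀ (by positivity)]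
    linarith

lemma hc_backward {X Y : Type*} [Fintype X] [Fintype Y]
    (D : X × Y → ℝ) (hD1 : ∑ p, D p = 1)
    (hDX : ∀ x, 0 < margX D x)
    (hd : Degenerate D) (δ : ℝ) (h0 : 0 < δ) (h1 : δ < 1) (h : Hypercontractive D δ) : False := by
  classical
  obtain ⟨A, B, ⟨a, ha⟩, hA, ⟨b, hb⟩, hB, hz⟩ := hd
  set f : Y → ℝ := fun y => if y ∈ B then 1 else 0 with hf
  set g : X → ℝ := fun x => if x ∈ A then 1 else 0 with hgd
  have hfg : ∀ z : X × Y, D z * f z.2 = D z * g z.1 := by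
    rintro ⟨x, y⟩
    by_cases hx : x ∈ A <;> by_cases hy : y ∈ B <;> simp [hf, hgd, hx, hy]
    · exact (hz x y (Or.inl ⟨hx, hy⟩)).symm
    · exact hz x y (Or.inr ⟨hx, hy⟩)
  have hT : condOp D f = g := by
    ext x
    rw [condOp, div_eq_iff (hDX x).ne', sum_congr rfl (fun y _ => hfg (x, y)), margX, mul_sum]
    exact sum_congr rfl fun y _ => mul_comm _ _
  have hδ : 0 < δ / (1 - δ) := div_pos h0 (by linarith)
  have h2 := h f
  rw [hT] at h2
  have pf : ∀ r : ℝ, r ≠ 0 → ∀ y, |f y| ^ r = f y := by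
    intro r hr y
    by_cases hy : y ∈ B <;> simp [hf, hy, Real.zero_rpow hr]
  have pg : ∀ r : ℝ, r ≠ 0 → ∀ y, |g y| ^ r = g y := by
    intro r hr y
    by_cases hy : y ∈ A <;> simp [hgd, hy, Real.zero_rpow hr]
  simp only [wnorm] at h2
  simp only [pf (2 - δ) (by linarith), pg (2 + δ / (1 - δ)) (by linarith)] at h2
  rw [hc_sum_margY, sum_congr rfl (fun z _ => hfg z), ← hc_sum_margX D g] at h2
  have hmX : ∑ x, margX D x = 1 := by
    have := hc_sum_margX D (fun _ => 1)
    simpa [hD1] using this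
  have hg01 : ∀ x, 0 ≤ g x ∧ g x ≤ 1 := by
    intro x; by_cases hx : x ∈ A <;> simp [hgd, hx]
  have hpos : 0 < ∑ x, margX D x * g x := by
    refine sum_pos' (fun x _ => mul_nonneg (hDX x).le (hg01 x).1) ⟨a, mem_univ _, ?_⟩
    simp [hgd, ha, hDX]
  have hlt : ∑ x, margX D x * g x < 1 := by
    obtain ⟨c, hc⟩ := (Set.ne_univ_iff_exists_notMem A).1 hA
    rw [← hmX]
    refine sum_lt_sum (fun x _ => mul_le_of_le_one_right (hDX x).le (hg01 x).2)
      ⟨c, mem_univ _, ?_⟩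
    simp [hgd, hc, hDX]
  have h3 := Real.rpow_lt_rpow_of_exponent_gt hpos hlt
    (one_div_lt_one_div_of_lt (show 0 < 2 - δ by linarith)
      (show 2 - δ < 2 + δ / (1 - δ) by linarith))
  linarith

theorem stmt6 {X Y : Type*} [Fintype X] [Fintype Y] [Nonempty X] [Nonempty Y]
    (D : X × Y → ℝ) (hD0 : ∀ p, 0 ≤ D p) (hD1 : ∑ p, D p = 1)
    (hDX : ∀ x, 0 < margX D x) (hDY : ∀ y, 0 < margY D y) :
    ¬ Degenerate D ↔ ∃ δ : ℝ, 0 < δ ∧ δ < 1 ∧ Hypercontractive D δ := by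
  constructor
  · exact hc_forward D hD0 hD1 hDX hDY
  · rintro ⟨δ, h0, h1, h⟩ hd
    exact hc_backward D hD1 hDX hd δ h0 h1 h
end

section
/- Let X₁, Y₁, X₂, Y₂ be finite nonempty types, let D₁ be a probability mass function on X₁ × Y₁ and D₂ a probability mass function on X₂ × Y₂, each with everywhere positive marginals, and let 0 ≤ δ < 1. If D₁ is δ-hypercontractive and D₂ is δ-hypercontractive, then the product distribution D₁ ⊗ D₂ on (X₁ × X₂) × (Y₁ × Y₂), defined by (D₁ ⊗ D₂)((x₁,x₂),(y₁,y₂)) = D₁(x₁,y₁) · D₂(x₂,y₂), is δ-hypercontractive. In particular, δ(D₁ ⊗ D₂) ≥ min(δ(D₁), δ(D₂)). -/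
open Finset

/-- The product of two distributions, as a distribution on `(X₁ × X₂) × (Y₁ × Y₂)`. -/
noncomputable def prodDist {X₁ Y₁ X₂ Y₂ : Type*}
    (D₁ : X₁ × Y₁ → ℝ) (D₂ : X₂ × Y₂ → ℝ) : (X₁ × X₂) × (Y₁ × Y₂) → ℝ :=
  fun p => D₁ (p.1.1, p.2.1) * D₂ (p.1.2, p.2.2)

theorem margX_prod {X₁ Y₁ X₂ Y₂ : Type*} [Fintype Y₁] [Fintype Y₂]
    (D₁ : X₁ × Y₁ → ℝ) (D₂ : X₂ × Y₂ → ℝ) (x : X₁ × X₂) :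
    margX (prodDist D₁ D₂) x = margX D₁ x.1 * margX D₂ x.2 := by
  simp only [margX, prodDist, Fintype.sum_prod_type, Finset.sum_mul_sum]

theorem margY_prod {X₁ Y₁ X₂ Y₂ : Type*} [Fintype X₁] [Fintype X₂]
    (D₁ : X₁ × Y₁ → ℝ) (D₂ : X₂ × Y₂ → ℝ) (x : Y₁ × Y₂) :
    margY (prodDist D₁ D₂) x = margY D₁ x.1 * margY D₂ x.2 := by
  simp only [margY, prodDist, Fintype.sum_prod_type, Finset.sum_mul_sum]

theorem wnorm_nonneg {α : Type*} [Fintype α] (w : α → ℝ) (hw : ∀ a, 0 < w a) (p : ℝ)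
    (f : α → ℝ) : 0 ≤ wnorm w p f := by
  unfold wnorm
  exact Real.rpow_nonneg (Finset.sum_nonneg fun a _ =>
    mul_nonneg (hw a).le (Real.rpow_nonneg (abs_nonneg _) _)) _

theorem wnorm_holder {α : Type*} [Fintype α] (w : α → ℝ) (hw : ∀ a, 0 < w a) (p q : ℝ)
    (hpq : q.HolderConjugate p) (f g : α → ℝ) :
    ∑ a, w a * (f a * g a) ≤ wnorm w q f * wnorm w p g := by
  have h := Real.inner_le_Lp_mul_Lq Finset.univ (fun a => w a ^ (1/q) * f a)
    (fun a => w a ^ (1/p) * g a) hpq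
  have key : ∀ r : ℝ, r ≠ 0 → ∀ a (t : ℝ), |w a ^ (1/r) * t| ^ r = w a * |t| ^ r := by
    intro r hr a t
    rw [abs_mul, abs_of_nonneg (Real.rpow_nonneg (hw a).le _),
      Real.mul_rpow (Real.rpow_nonneg (hw a).le _) (abs_nonneg _), ← Real.rpow_mul (hw a).le,
      one_div_mul_cancel hr, Real.rpow_one]
  simp only [key q hpq.ne_zero, key p hpq.symm.ne_zero] at h
  refine le_trans (le_of_eq ?_) h
  refine Finset.sum_congr rfl fun a _ => ?_
  have : w a = w a ^ (1/q) * w a ^ (1/p) := by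
    rw [← Real.rpow_add (hw a), one_div, one_div, hpq.inv_add_inv_eq_one, Real.rpow_one]
  conv_lhs => rw [this]
  ring

theorem wnorm_iter {α β : Type*} [Fintype α] [Fintype β] (u : α → ℝ) (v : β → ℝ)
    (hu : ∀ a, 0 < u a) (p : ℝ) (hp : p ≠ 0) (f : α × β → ℝ) :
    wnorm v p (fun b => wnorm u p (fun a => f (a, b))) = wnorm (fun x => u x.1 * v x.2) p f := by
  have h : ∀ b, |wnorm u p (fun a => f (a, b))| ^ p = ∑ a, u a * |f (a, b)| ^ p := by
    intro b
    rw [abs_of_nonneg (wnorm_nonneg u hu p _)]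
    unfold wnorm
    rw [← Real.rpow_mul, one_div_mul_cancel hp, Real.rpow_one]
    exact Finset.sum_nonneg fun a _ =>
      mul_nonneg (hu a).le (Real.rpow_nonneg (abs_nonneg _) _)
  rw [wnorm, wnorm]
  simp only [h]
  rw [Fintype.sum_prod_type, Finset.sum_comm]
  congr 1
  refine Finset.sum_congr rfl fun b _ => ?_
  rw [Finset.mul_sum]
  refine Finset.sum_congr rfl fun a _ => ?_
  ring

theorem bil_eq {X Y : Type*} [Fintype X] [Fintype Y] (D : X × Y → ℝ)
    (hX : ∀ x, 0 < margX D x) (g : X → ℝ) (f : Y → ℝ) :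
    ∑ x, ∑ y, D (x, y) * g x * f y = ∑ x, margX D x * (condOp D f x * g x) := by
  refine Finset.sum_congr rfl fun x _ => ?_
  have := (hX x).ne'
  unfold condOp
  rw [← mul_assoc, mul_div_cancel₀ _ this, Finset.sum_mul]
  refine Finset.sum_congr rfl fun y _ => ?_
  ring

theorem bil_of_hyper {X Y : Type*} [Fintype X] [Fintype Y] (D : X × Y → ℝ)
    (hX : ∀ x, 0 < margX D x) (p q : ℝ) (hpq : q.HolderConjugate p)
    (h : ∀ f : Y → ℝ, wnorm (margX D) q (condOp D f) ≤ wnorm (margY D) p f)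
    (g : X → ℝ) (f : Y → ℝ) :
    ∑ x, ∑ y, D (x, y) * g x * f y ≤ wnorm (margX D) p g * wnorm (margY D) p f := by
  rw [bil_eq D hX, mul_comm]
  exact (wnorm_holder _ hX p q hpq _ _).trans
    (mul_le_mul_of_nonneg_right (h f) (wnorm_nonneg _ hX _ _))

theorem hyper_of_bil {X Y : Type*} [Fintype X] [Fintype Y] (D : X × Y → ℝ)
    (hX : ∀ x, 0 < margX D x) (hY : ∀ y, 0 < margY D y)
    (p q : ℝ) (hpq : q.HolderConjugate p)
    (h : ∀ (g : X → ℝ) (f : Y → ℝ),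
      ∑ x, ∑ y, D (x, y) * g x * f y ≤ wnorm (margX D) p g * wnorm (margY D) p f)
    (f : Y → ℝ) : wnorm (margX D) q (condOp D f) ≤ wnorm (margY D) p f := by
  set t := condOp D f with ht
  set A := ∑ x, margX D x * |t x| ^ q with hA
  have hA0 : 0 ≤ A := Finset.sum_nonneg fun a _ =>
    mul_nonneg (hX a).le (Real.rpow_nonneg (abs_nonneg _) _)
  have hq1 : 0 < q - 1 := hpq.sub_one_pos
  have hmul : ∀ s : ℝ, s * (SignType.sign s * |s| ^ (q - 1)) = |s| ^ q := by
    intro s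
    rw [← mul_assoc, self_mul_sign]
    rcases eq_or_ne s 0 with rfl | hs
    · simp [Real.zero_rpow hpq.ne_zero]
    · rw [← Real.rpow_one_add' (abs_nonneg _) (by linarith)]
      congr 1; ring
  have habs : ∀ s : ℝ, |(SignType.sign s : ℝ) * |s| ^ (q - 1)| ^ p = |s| ^ q := by
    intro s
    rcases eq_or_ne s 0 with rfl | hs
    · simp [Real.zero_rpow hpq.ne_zero, Real.zero_rpow hpq.symm.ne_zero]
    · have h1 : |(SignType.sign s : ℝ)| = 1 := by
        rcases lt_or_gt_of_ne hs with h | h <;> simp [h]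
      rw [abs_mul, h1, one_mul, abs_of_nonneg (Real.rpow_nonneg (abs_nonneg _) _),
        ← Real.rpow_mul (abs_nonneg _), hpq.sub_one_mul_conj]
  have h2 := h (fun x => SignType.sign (t x) * |t x| ^ (q - 1)) f
  rw [bil_eq D hX, ← ht] at h2
  have h3 : wnorm (margX D) p (fun x => SignType.sign (t x) * |t x| ^ (q - 1)) = A ^ (1/p) := by
    unfold wnorm
    simp only [habs]; rfl
  rw [h3] at h2
  simp only [hmul] at h2
  change A ^ (1/q) ≤ _
  rcases hA0.eq_or_lt with h0 | h0
  · rw [← h0, Real.zero_rpow (one_div_ne_zero hpq.ne_zero)]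
    exact wnorm_nonneg _ hY _ _
  · have h4 : A = A ^ (1/p) * A ^ (1/q) := by
      rw [← Real.rpow_add h0, one_div, one_div, add_comm, hpq.inv_add_inv_eq_one, Real.rpow_one]
    change A ≤ _ at h2
    nth_rewrite 1 [h4] at h2
    exact le_of_mul_le_mul_left h2 (Real.rpow_pos_of_pos h0 _)

theorem stmt7 {X₁ Y₁ X₂ Y₂ : Type*}
    [Fintype X₁] [Fintype Y₁] [Fintype X₂] [Fintype Y₂]
    [Nonempty X₁] [Nonempty Y₁] [Nonempty X₂] [Nonempty Y₂]
    (D₁ : X₁ × Y₁ → ℝ) (D₂ : X₂ × Y₂ → ℝ)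
    (hD₁0 : ∀ p, 0 ≤ D₁ p) (hD₁1 : ∑ p, D₁ p = 1)
    (hD₁X : ∀ x, 0 < margX D₁ x) (hD₁Y : ∀ y, 0 < margY D₁ y)
    (hD₂0 : ∀ p, 0 ≤ D₂ p) (hD₂1 : ∑ p, D₂ p = 1)
    (hD₂X : ∀ x, 0 < margX D₂ x) (hD₂Y : ∀ y, 0 < margY D₂ y)
    (δ : ℝ) (hδ0 : 0 ≤ δ) (hδ1 : δ < 1)
    (h₁ : Hypercontractive D₁ δ) (h₂ : Hypercontractive D₂ δ) :
    Hypercontractive (prodDist D₁ D₂) δ := by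
  have hd : (0:ℝ) < 1 - δ := by linarith
  have hpq : (2 + δ / (1 - δ)).HolderConjugate (2 - δ) := by
    rw [Real.holderConjugate_iff]
    have : 0 ≤ δ / (1 - δ) := by positivity
    refine ⟨by linarith, ?_⟩
    have h2 : (2 - δ) ≠ 0 := by linarith
    have h3 : 2 + δ / (1 - δ) = (2 - δ) / (1 - δ) := by field_simp; ring
    rw [h3]
    field_simp
    ring
  have hp0 : (2 - δ) ≠ 0 := by linarith
  have b₁ := bil_of_hyper D₁ hD₁X _ _ hpq h₁
  have b₂ := bil_of_hyper D₂ hD₂X _ _ hpq h₂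
  have eX : margX (prodDist D₁ D₂) = fun x => margX D₁ x.1 * margX D₂ x.2 :=
    funext (margX_prod D₁ D₂)
  have eY : margY (prodDist D₁ D₂) = fun x => margY D₁ x.1 * margY D₂ x.2 :=
    funext (margY_prod D₁ D₂)
  refine hyper_of_bil _ (fun x => ?_) (fun y => ?_) _ _ hpq ?_
  · rw [margX_prod]; exact mul_pos (hD₁X _) (hD₂X _)
  · rw [margY_prod]; exact mul_pos (hD₁Y _) (hD₂Y _)
  intro g f
  rw [eX, eY, ← wnorm_iter _ _ hD₁X _ hp0, ← wnorm_iter _ _ hD₁Y _ hp0]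
  refine le_trans ?_ (b₂ _ _)
  have e : ∑ x, ∑ y, prodDist D₁ D₂ (x, y) * g x * f y =
      ∑ x₂, ∑ y₂, D₂ (x₂, y₂) * ∑ x₁, ∑ y₁, D₁ (x₁, y₁) * g (x₁, x₂) * f (y₁, y₂) := by
    simp only [Fintype.sum_prod_type, prodDist, Finset.mul_sum]
    rw [Finset.sum_comm]
    refine Finset.sum_congr rfl fun x₂ _ => ?_
    rw [Finset.sum_comm (s := (univ : Finset Y₂))]
    refine Finset.sum_congr rfl fun x₁ _ => ?_
    rw [Finset.sum_comm]
    refine Finset.sum_congr rfl fun y₂ _ => Finset.sum_congr rfl fun y₁ _ => ?_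
    ring
  rw [e]
  refine Finset.sum_le_sum fun x₂ _ => Finset.sum_le_sum fun y₂ _ => ?_
  rw [mul_assoc]
  exact mul_le_mul_of_nonneg_left (b₁ (fun x₁ => g (x₁, x₂)) (fun y₁ => f (y₁, y₂))) (hD₂0 _)
end

section
/- Let X and Y be finite nonempty types, let D be a probability mass function on X × Y with everywhere positive marginals D_X and D_Y, and suppose D is δ-hypercontractive for some 0 ≤ δ < 1. Let A ⊆ X and B ⊆ Y, and set μ = Σ_{x ∈ A} D_X(x) and ν = Σ_{y ∈ B} D_Y(y). Then Σ_{(x,y) ∈ A × B} D(x,y) ≤ μν + (μ^(2−δ)·(1−μ) + μ·(1−μ)^(2−δ))^(1/(2−δ)) · (ν^(2−δ)·(1−ν) + ν·(1−ν)^(2−δ))^(1/(2−δ)). -/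
open Finset

lemma holder_aux {α : Type*} [Fintype α] (w : α → ℝ) (hw : ∀ a, 0 ≤ w a) (p q : ℝ)
    (h : p.HolderConjugate q) (f g : α → ℝ) :
    ∑ a, w a * (f a * g a) ≤ wnorm w p f * wnorm w q g := by
  have key := Real.inner_le_Lp_mul_Lq (Finset.univ) (fun a => w a ^ (1 / p) * f a)
    (fun a => w a ^ (1 / q) * g a) h
  have aux : ∀ (r : ℝ) (u : α → ℝ), 0 < r → ∀ a, |w a ^ (1 / r) * u a| ^ r = w a * |u a| ^ r := by
    intro r u hr a
    rw [abs_mul, abs_of_nonneg (Real.rpow_nonneg (hw a) _),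
      Real.mul_rpow (Real.rpow_nonneg (hw a) _) (abs_nonneg _), ← Real.rpow_mul (hw a),
      one_div_mul_cancel hr.ne', Real.rpow_one]
  simp only [aux p f h.pos, aux q g h.symm.pos] at key
  refine le_trans (le_of_eq ?_) key
  refine Finset.sum_congr rfl fun a _ => ?_
  have : w a ^ (1 / p) * w a ^ (1 / q) = w a := by
    rw [← Real.rpow_add_of_nonneg (hw a) (by have := h.pos; positivity)
      (by have := h.symm.pos; positivity)]
    have := h.inv_add_inv_eq_one
    rw [one_div, one_div, this, Real.rpow_one]
  calc w a * (f a * g a) = (w a ^ (1 / p) * w a ^ (1 / q)) * (f a * g a) := by rw [this]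
    _ = _ := by ring

open Classical in
lemma ind_aux {α : Type*} [Fintype α] (w : α → ℝ) (hw : ∀ a, 0 ≤ w a) (h1 : ∑ a, w a = 1)
    (S : Finset α) (m : ℝ) (hm : m = ∑ a ∈ S, w a) (p : ℝ) :
    wnorm w p (fun a => (if a ∈ S then 1 else 0) - m) =
      (m ^ p * (1 - m) + m * (1 - m) ^ p) ^ (1 / p) := by
  have h0 : 0 ≤ m := hm ▸ Finset.sum_nonneg fun a _ => hw a
  have hc : ∑ a ∈ Sᶜ, w a = 1 - m := by
    rw [← h1, hm, ← Finset.sum_add_sum_compl S]; ring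
  have h0' : 0 ≤ 1 - m := hc ▸ Finset.sum_nonneg fun a _ => hw a
  unfold wnorm
  congr 1
  rw [← Finset.sum_add_sum_compl S]
  have e1 : ∑ a ∈ S, w a * |(if a ∈ S then (1:ℝ) else 0) - m| ^ p = m * (1 - m) ^ p := by
    rw [hm, Finset.sum_mul, ← hm]
    refine Finset.sum_congr rfl fun a ha => ?_
    rw [if_pos ha, abs_of_nonneg h0']
  have e2 : ∑ a ∈ Sᶜ, w a * |(if a ∈ S then (1:ℝ) else 0) - m| ^ p = m ^ p * (1 - m) := by
    rw [← hc, mul_comm, Finset.sum_mul]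
    refine Finset.sum_congr rfl fun a ha => ?_
    rw [if_neg (Finset.mem_compl.1 ha), zero_sub, abs_neg, abs_of_nonneg h0]
  rw [e1, e2, add_comm]

theorem stmt8 {X Y : Type*} [Fintype X] [Fintype Y] [Nonempty X] [Nonempty Y]
    (D : X × Y → ℝ) (hD0 : ∀ p, 0 ≤ D p) (hD1 : ∑ p, D p = 1)
    (hDX : ∀ x, 0 < margX D x) (hDY : ∀ y, 0 < margY D y)
    (δ : ℝ) (hδ0 : 0 ≤ δ) (hδ1 : δ < 1) (hhc : Hypercontractive D δ)
    (A : Finset X) (B : Finset Y) (μ ν : ℝ)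
    (hμ : μ = ∑ x ∈ A, margX D x) (hν : ν = ∑ y ∈ B, margY D y) :
    ∑ x ∈ A, ∑ y ∈ B, D (x, y) ≤ μ * ν +
      (μ ^ (2 - δ) * (1 - μ) + μ * (1 - μ) ^ (2 - δ)) ^ (1 / (2 - δ)) *
      (ν ^ (2 - δ) * (1 - ν) + ν * (1 - ν) ^ (2 - δ)) ^ (1 / (2 - δ)) := by
  classical
  have hX1 : ∑ x, margX D x = 1 := by
    rw [← hD1, Fintype.sum_prod_type]; rfl
  have hY1 : ∑ y, margY D y = 1 := by
    rw [← hD1, Fintype.sum_prod_type_right]; rfl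
  have hconj : (2 - δ).HolderConjugate (2 + δ / (1 - δ)) := by
    rw [Real.holderConjugate_iff]
    have h1 : (1 - δ) ≠ 0 := by linarith
    have h2 : (2 - δ) ≠ 0 := by linarith
    refine ⟨by linarith, ?_⟩
    have : 2 + δ / (1 - δ) = (2 - δ) / (1 - δ) := by field_simp; ring
    rw [this, inv_div]
    field_simp
    ring
  set g : X → ℝ := fun a => (if a ∈ A then 1 else 0) - μ with hg
  set f : Y → ℝ := fun a => (if a ∈ B then 1 else 0) - ν with hf
  have hA := ind_aux (margX D) (fun x => (hDX x).le) hX1 A μ hμ (2 - δ)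
  have hB := ind_aux (margY D) (fun x => (hDY x).le) hY1 B ν hν (2 - δ)
  have hH := holder_aux (margX D) (fun x => (hDX x).le) _ _ hconj g (condOp D f)
  have hgn : 0 ≤ wnorm (margX D) (2 - δ) g :=
    Real.rpow_nonneg (Finset.sum_nonneg fun x _ =>
      mul_nonneg (hDX x).le (Real.rpow_nonneg (abs_nonneg _) _)) _
  have hfin := hH.trans (mul_le_mul_of_nonneg_left (hhc f) hgn)
  rw [← hA, ← hB]
  have hT : ∀ x, margX D x * (g x * condOp D f x) =
      (if x ∈ A then ∑ y ∈ B, D (x, y) else 0) - ν * (if x ∈ A then margX D x else 0)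
        - μ * ∑ y ∈ B, D (x, y) + μ * ν * margX D x := by
    intro x
    have h1 : margX D x * condOp D f x = ∑ y ∈ B, D (x, y) - ν * margX D x := by
      unfold condOp
      rw [mul_div_cancel₀ _ (hDX x).ne']
      simp only [hf, mul_sub, Finset.sum_sub_distrib, mul_ite, mul_one, mul_zero,
        Finset.sum_ite_mem, Finset.univ_inter, ← Finset.sum_mul, margX]
      ring
    have h2 : margX D x * (g x * condOp D f x) = g x * (margX D x * condOp D f x) := by ring
    rw [h2, h1, hg]
    by_cases hx : x ∈ A <;> simp only [hx, if_true, if_false] <;> ring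
  have hsum : ∑ x, margX D x * (g x * condOp D f x) =
      ∑ x ∈ A, ∑ y ∈ B, D (x, y) - μ * ν := by
    have h3 : ∑ x, ∑ y ∈ B, D (x, y) = ν := by
      rw [Finset.sum_comm, hν]; rfl
    simp only [hT, Finset.sum_add_distrib, Finset.sum_sub_distrib, ← Finset.mul_sum, h3, hX1,
      Finset.sum_ite_mem, Finset.univ_inter, ← hμ]
    ring
  rw [hsum] at hfin
  linarith
end

section
/- Let X and Y be finite nonempty types, let D be a probability mass function on X × Y with everywhere positive marginals D_X and D_Y, and suppose D is δ-hypercontractive for some 0 ≤ δ < 1. Let A ⊆ X and B ⊆ Y, and set μ = Σ_{x ∈ A} D_X(x) and ν = Σ_{y ∈ B} D_Y(y). Then Σ_{(x,y) ∈ A × B} D(x,y) ≤ μν + (4μν)^(1/(2−δ)). -/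
open Finset

theorem stmt9 {X Y : Type*} [Fintype X] [Fintype Y] [Nonempty X] [Nonempty Y]
    (D : X × Y → ℝ) (hD0 : ∀ p, 0 ≤ D p) (hD1 : ∑ p, D p = 1)
    (hDX : ∀ x, 0 < margX D x) (hDY : ∀ y, 0 < margY D y)
    (δ : ℝ) (hδ0 : 0 ≤ δ) (hδ1 : δ < 1) (hhc : Hypercontractive D δ)
    (A : Finset X) (B : Finset Y) (μ ν : ℝ)
    (hμ : μ = ∑ x ∈ A, margX D x) (hν : ν = ∑ y ∈ B, margY D y) :
    ∑ x ∈ A, ∑ y ∈ B, D (x, y) ≤ μ * ν + (4 * μ * ν) ^ (1 / (2 - δ)) := by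
  classical
  have h1δ : 0 < 1 - δ := by linarith
  have hp0 : 0 < 2 - δ := by linarith
  have hq : 2 + δ / (1 - δ) = (2 - δ) / (1 - δ) := by field_simp; ring
  have hq0 : 0 < 2 + δ / (1 - δ) := by rw [hq]; positivity
  have hconj : (2 - δ).HolderConjugate (2 + δ / (1 - δ)) := by
    rw [Real.holderConjugate_iff]
    refine ⟨by linarith, ?_⟩
    rw [hq]; field_simp; ring
  have hinv : 1 / (2 - δ) + 1 / (2 + δ / (1 - δ)) = 1 := by
    simpa [one_div] using hconj.inv_add_inv_eq_one
  set p := 2 - δ with hp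
  set q := 2 + δ / (1 - δ) with hqd
  have hμ0 : 0 ≤ μ := by rw [hμ]; exact Finset.sum_nonneg fun x _ => (hDX x).le
  have hν0 : 0 ≤ ν := by rw [hν]; exact Finset.sum_nonneg fun x _ => (hDY x).le
  let f : Y → ℝ := fun y => if y ∈ B then 1 else 0
  have hTf : ∀ x, condOp D f x = (∑ y ∈ B, D (x, y)) / margX D x := by
    intro x; simp [condOp, f]
  have hTf0 : ∀ x, 0 ≤ condOp D f x := fun x => by
    rw [hTf]; exact div_nonneg (Finset.sum_nonneg fun y _ => hD0 _) (hDX x).le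
  have hB : wnorm (margY D) p f = ν ^ (1 / p) := by
    unfold wnorm
    congr 1
    rw [hν, ← Finset.sum_subset (Finset.subset_univ B)]
    · exact Finset.sum_congr rfl fun y hy => by simp [f, hy]
    · intro y _ hy
      simp [f, hy, Real.zero_rpow hp0.ne']
  have hh := hhc f
  rw [← hqd, ← hp, hB] at hh
  have hol := Real.inner_le_Lp_mul_Lq A (fun x => margX D x ^ (1 / p))
    (fun x => margX D x ^ (1 / q) * condOp D f x) hconj
  have e1 : ∑ x ∈ A, margX D x ^ (1 / p) * (margX D x ^ (1 / q) * condOp D f x)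
      = ∑ x ∈ A, ∑ y ∈ B, D (x, y) := by
    refine Finset.sum_congr rfl fun x _ => ?_
    rw [← mul_assoc, ← Real.rpow_add (hDX x), hinv, Real.rpow_one, hTf,
      mul_div_cancel₀ _ (hDX x).ne']
  have e2 : ∑ x ∈ A, |margX D x ^ (1 / p)| ^ p = μ := by
    rw [hμ]
    refine Finset.sum_congr rfl fun x _ => ?_
    rw [abs_of_nonneg (Real.rpow_nonneg (hDX x).le _), ← Real.rpow_mul (hDX x).le,
      one_div_mul_cancel hp0.ne', Real.rpow_one]
  have e3 : ∀ x, |margX D x ^ (1 / q) * condOp D f x| ^ q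
      = margX D x * |condOp D f x| ^ q := by
    intro x
    rw [abs_mul, Real.mul_rpow (abs_nonneg _) (abs_nonneg _),
      abs_of_nonneg (Real.rpow_nonneg (hDX x).le _), ← Real.rpow_mul (hDX x).le,
      one_div_mul_cancel hq0.ne', Real.rpow_one]
  have hnn : ∀ x, 0 ≤ margX D x * |condOp D f x| ^ q := fun x =>
    mul_nonneg (hDX x).le (Real.rpow_nonneg (abs_nonneg _) _)
  have e4 : (∑ x ∈ A, |margX D x ^ (1 / q) * condOp D f x| ^ q) ^ (1 / q)
      ≤ wnorm (margX D) q (condOp D f) := by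
    unfold wnorm
    simp only [e3]
    refine Real.rpow_le_rpow (Finset.sum_nonneg fun x _ => hnn x) ?_ (by positivity)
    exact Finset.sum_le_sum_of_subset_of_nonneg (Finset.subset_univ A) fun x _ _ => hnn x
  rw [e1, e2] at hol
  have hμν : 0 ≤ μ * ν := mul_nonneg hμ0 hν0
  calc ∑ x ∈ A, ∑ y ∈ B, D (x, y)
      ≤ μ ^ (1 / p) * ν ^ (1 / p) :=
        hol.trans (mul_le_mul_of_nonneg_left (e4.trans hh) (Real.rpow_nonneg hμ0 _))
    _ = (μ * ν) ^ (1 / p) := (Real.mul_rpow hμ0 hν0).symm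
    _ ≤ (4 * μ * ν) ^ (1 / p) :=
        Real.rpow_le_rpow hμν (by nlinarith) (by positivity)
    _ ≤ μ * ν + (4 * μ * ν) ^ (1 / p) := by linarith
end

section
/- Let X and Y be finite nonempty types and let D be a probability mass function on X × Y whose marginal on X is uniform and whose marginal on Y is uniform, and suppose D is δ-hypercontractive for some 0 ≤ δ < 1. For every natural number n and all subsets A ⊆ (Fin n → X), B ⊆ (Fin n → Y), setting μ = |A| / |X|^n and ν = |B| / |Y|^n, one has Σ_{(x,y) : x ∈ A, y ∈ B} Π_{i} D(x i, y i) ≤ μν + (4μν)^(1/(2−δ)). (Quantitative Gács–Körner bound for product distributions with uniform marginals.) -/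
open Finset

lemma holder_base {X Y : Type*} [Fintype X] [Fintype Y]
    (D : X × Y → ℝ) (c d p q : ℝ) (hc : 0 < c) (hpq : p.HolderConjugate q)
    (hDX : ∀ x, margX D x = c) (hDY : ∀ y, margY D y = d)
    (h : ∀ f : Y → ℝ, wnorm (margX D) q (condOp D f) ≤ wnorm (margY D) p f)
    (f : X → ℝ) (g : Y → ℝ) (hf : ∀ x, 0 ≤ f x) (hg : ∀ y, 0 ≤ g y) :
    ∑ x, ∑ y, D (x, y) * (f x * g y) ≤
      (c * ∑ x, f x ^ p) ^ (1 / p) * (d * ∑ y, g y ^ p) ^ (1 / p) := by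
  have hp := hpq.pos
  have hq := hpq.symm.pos
  have key := Real.inner_le_Lp_mul_Lq univ (fun x => c ^ (1/p) * f x)
    (fun x => c ^ (1/q) * condOp D g x) hpq
  have hcc : c ^ (1/p) * c ^ (1/q) = c := by
    rw [← Real.rpow_add hc, one_div, one_div, hpq.inv_add_inv_eq_one, Real.rpow_one]
  have e1 : ∑ x, c ^ (1/p) * f x * (c ^ (1/q) * condOp D g x)
      = ∑ x, ∑ y, D (x, y) * (f x * g y) := by
    refine sum_congr rfl fun x _ => ?_
    have : c ^ (1/p) * f x * (c ^ (1/q) * condOp D g x)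
      = (c ^ (1/p) * c ^ (1/q)) * (f x * condOp D g x) := by ring
    rw [this, hcc, condOp, hDX]
    have : c * (f x * ((∑ y, D (x, y) * g y) / c)) = f x * ∑ y, D (x, y) * g y := by
      field_simp
    rw [this, mul_sum]
    exact sum_congr rfl fun y _ => by ring
  have e2 : ∑ x, |c ^ (1/p) * f x| ^ p = c * ∑ x, f x ^ p := by
    rw [mul_sum]
    refine sum_congr rfl fun x _ => ?_
    have h0 : 0 ≤ c ^ (1/p) := by positivity
    rw [abs_of_nonneg (mul_nonneg h0 (hf x)), Real.mul_rpow h0 (hf x), ← Real.rpow_mul hc.le,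
      one_div, inv_mul_cancel₀ hp.ne', Real.rpow_one]
  have e3 : ∑ x, |c ^ (1/q) * condOp D g x| ^ q = ∑ x, margX D x * |condOp D g x| ^ q := by
    refine sum_congr rfl fun x _ => ?_
    have h0 : 0 ≤ c ^ (1/q) := by positivity
    rw [abs_mul, abs_of_nonneg h0, Real.mul_rpow h0 (abs_nonneg _), ← Real.rpow_mul hc.le,
      one_div, inv_mul_cancel₀ hq.ne', Real.rpow_one, hDX]
  rw [e1, e2, e3] at key
  have hh := h g
  have e4 : wnorm (margY D) p g = (d * ∑ y, g y ^ p) ^ (1 / p) := by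
    rw [wnorm, mul_sum]
    congr 1
    exact sum_congr rfl fun y _ => by rw [hDY, abs_of_nonneg (hg y)]
  rw [e4, wnorm] at hh
  refine key.trans (mul_le_mul_of_nonneg_left hh ?_)
  exact Real.rpow_nonneg (mul_nonneg hc.le (sum_nonneg fun x _ => Real.rpow_nonneg (hf x) _)) _

lemma sum_fin_cons {X : Type*} [Fintype X] (n : ℕ) (F : (Fin (n+1) → X) → ℝ) :
    ∑ x, F x = ∑ a, ∑ x : Fin n → X, F (Fin.cons a x) := by
  rw [← Fintype.sum_prod_type']
  exact (Equiv.sum_comp (Fin.consEquiv (fun _ : Fin (n+1) => X)) F).symm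

lemma tensor {X Y : Type*} [Fintype X] [Fintype Y]
    (D : X × Y → ℝ) (hD0 : ∀ p, 0 ≤ D p) (c d p : ℝ) (hc : 0 < c) (hd : 0 < d) (hp : 0 < p)
    (base : ∀ (f : X → ℝ) (g : Y → ℝ), (∀ x, 0 ≤ f x) → (∀ y, 0 ≤ g y) →
      ∑ x, ∑ y, D (x, y) * (f x * g y) ≤
      (c * ∑ x, f x ^ p) ^ (1 / p) * (d * ∑ y, g y ^ p) ^ (1 / p)) (n : ℕ) :
    ∀ (f : (Fin n → X) → ℝ) (g : (Fin n → Y) → ℝ), (∀ x, 0 ≤ f x) → (∀ y, 0 ≤ g y) →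
      ∑ x, ∑ y, (∏ i, D (x i, y i)) * (f x * g y) ≤
      (c ^ n * ∑ x, f x ^ p) ^ (1 / p) * (d ^ n * ∑ y, g y ^ p) ^ (1 / p) := by
  induction n with
  | zero =>
    intro f g hf hg
    simp only [Fintype.sum_unique, pow_zero, one_mul]
    rw [← Real.rpow_mul (hf _), ← Real.rpow_mul (hg _), mul_one_div_cancel hp.ne']
    simp
  | succ n ih =>
    intro f g hf hg
    have hF : ∀ a, 0 ≤ c ^ n * ∑ x : Fin n → X, f (Fin.cons a x) ^ p := fun a =>
      mul_nonneg (by positivity) (sum_nonneg fun x _ => Real.rpow_nonneg (hf _) _)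
    have hG : ∀ a, 0 ≤ d ^ n * ∑ x : Fin n → Y, g (Fin.cons a x) ^ p := fun a =>
      mul_nonneg (by positivity) (sum_nonneg fun x _ => Real.rpow_nonneg (hg _) _)
    have hb := base (fun a => (c ^ n * ∑ x : Fin n → X, f (Fin.cons a x) ^ p) ^ (1/p))
      (fun b => (d ^ n * ∑ y : Fin n → Y, g (Fin.cons b y) ^ p) ^ (1/p))
      (fun a => Real.rpow_nonneg (hF a) _) (fun a => Real.rpow_nonneg (hG a) _)
    have r1 : c * ∑ a, ((c ^ n * ∑ x : Fin n → X, f (Fin.cons a x) ^ p) ^ (1/p)) ^ p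
        = c ^ (n+1) * ∑ x, f x ^ p := by
      rw [sum_fin_cons n (fun x => f x ^ p), pow_succ', mul_assoc, mul_sum univ _ (c ^ n)]
      congr 1
      refine sum_congr rfl fun a _ => ?_
      rw [← Real.rpow_mul (hF a), one_div, inv_mul_cancel₀ hp.ne', Real.rpow_one]
    have r2 : d * ∑ a, ((d ^ n * ∑ x : Fin n → Y, g (Fin.cons a x) ^ p) ^ (1/p)) ^ p
        = d ^ (n+1) * ∑ x, g x ^ p := by
      rw [sum_fin_cons n (fun x => g x ^ p), pow_succ', mul_assoc, mul_sum univ _ (d ^ n)]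
      congr 1
      refine sum_congr rfl fun a _ => ?_
      rw [← Real.rpow_mul (hG a), one_div, inv_mul_cancel₀ hp.ne', Real.rpow_one]
    rw [r1, r2] at hb
    refine le_trans ?_ hb
    rw [sum_fin_cons]
    refine sum_le_sum fun a _ => ?_
    simp_rw [sum_fin_cons n (fun y => _ * (_ * g y))]
    rw [sum_comm]
    refine sum_le_sum fun b _ => ?_
    refine le_trans (le_of_eq ?_) (mul_le_mul_of_nonneg_left
      (ih (fun x => f (Fin.cons a x)) (fun y => g (Fin.cons b y))
        (fun _ => hf _) (fun _ => hg _)) (hD0 (a, b)))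
    simp_rw [mul_sum, Fin.prod_univ_succ, Fin.cons_zero, Fin.cons_succ, mul_assoc]

theorem stmt10 {X Y : Type*} [Fintype X] [Fintype Y] [Nonempty X] [Nonempty Y]
    (D : X × Y → ℝ) (hD0 : ∀ p, 0 ≤ D p) (hD1 : ∑ p, D p = 1)
    (hDX : ∀ x, margX D x = 1 / Fintype.card X)
    (hDY : ∀ y, margY D y = 1 / Fintype.card Y)
    (δ : ℝ) (hδ0 : 0 ≤ δ) (hδ1 : δ < 1) (hhc : Hypercontractive D δ)
    (n : ℕ) (A : Finset (Fin n → X)) (B : Finset (Fin n → Y)) (μ ν : ℝ)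
    (hμ : μ = (A.card : ℝ) / (Fintype.card X : ℝ) ^ n)
    (hν : ν = (B.card : ℝ) / (Fintype.card Y : ℝ) ^ n) :
    ∑ x ∈ A, ∑ y ∈ B, ∏ i, D (x i, y i) ≤ μ * ν + (4 * μ * ν) ^ (1 / (2 - δ)) := by
  classical
  have hcX : (0:ℝ) < 1 / Fintype.card X := by
    have := Fintype.card_pos (α := X); positivity
  have hcY : (0:ℝ) < 1 / Fintype.card Y := by
    have := Fintype.card_pos (α := Y); positivity
  have hp : 0 < 2 - δ := by linarith
  have h1 : (1 - δ) ≠ 0 := by linarith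
  have hpq : (2 - δ).HolderConjugate (2 + δ / (1 - δ)) := by
    rw [Real.holderConjugate_iff]
    refine ⟨by linarith, ?_⟩
    have : 2 + δ / (1 - δ) = (2 - δ) / (1 - δ) := by field_simp; ring
    rw [this]
    field_simp
    ring
  have key := tensor D hD0 _ _ (2 - δ) hcX hcY hp
    (holder_base D _ _ (2 - δ) _ hcX hpq hDX hDY hhc) n
    (fun x => if x ∈ A then 1 else 0) (fun y => if y ∈ B then 1 else 0)
    (fun x => by positivity) (fun x => by positivity)
  have i1 : (1 / (Fintype.card X : ℝ)) ^ n * ∑ x, (if x ∈ A then (1:ℝ) else 0) ^ (2 - δ) = μ := by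
    simp only [ite_pow, apply_ite (fun t : ℝ => t ^ (2 - δ)), Real.one_rpow,
      Real.zero_rpow hp.ne']
    simp [hμ, div_eq_inv_mul]
  have i2 : (1 / (Fintype.card Y : ℝ)) ^ n * ∑ x, (if x ∈ B then (1:ℝ) else 0) ^ (2 - δ) = ν := by
    simp only [ite_pow, apply_ite (fun t : ℝ => t ^ (2 - δ)), Real.one_rpow,
      Real.zero_rpow hp.ne']
    simp [hν, div_eq_inv_mul]
  have i3 : ∑ x, ∑ y, (∏ i, D (x i, y i)) *
      ((if x ∈ A then (1:ℝ) else 0) * (if y ∈ B then 1 else 0))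
      = ∑ x ∈ A, ∑ y ∈ B, ∏ i, D (x i, y i) := by
    rw [← sum_subset (subset_univ A)]
    · refine sum_congr rfl fun x hx => ?_
      simp [hx]
    · intro x _ hx
      simp [hx]
  rw [i1, i2, i3] at key
  have m0 : 0 ≤ μ := by rw [hμ]; positivity
  have n0 : 0 ≤ ν := by rw [hν]; positivity
  rw [← Real.mul_rpow m0 n0] at key
  have mn : 0 ≤ μ * ν := mul_nonneg m0 n0
  have := Real.rpow_le_rpow mn (show μ * ν ≤ 4 * μ * ν by nlinarith)
    (show 0 ≤ 1 / (2 - δ) by positivity)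
  linarith
end

section
/- Two-point inequality: let 0 < ε < 1/2, p = 2 − 2ε, and q = (2 − 2ε)/(1 − 2ε). For every f : Bool → ℝ, define (T f)(x) = (1 − ε)·f(x) + ε·f(¬x). Then ((|T f(false)|^q + |T f(true)|^q)/2)^(1/q) ≤ ((|f(false)|^p + |f(true)|^p)/2)^(1/p). (Equivalently, δ(D_{1,ε}) ≥ 2ε, where D_{1,ε} is the distribution on Bool × Bool giving probability (1−ε)/2 to each pair with equal coordinates and ε/2 to each pair with distinct coordinates.) -/
lemma aux_h (p : ℝ) (hp1 : 1 < p) (hp2 : p < 2) (x : ℝ) (hx : x ∈ Set.Icc (-1:ℝ) 1) :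
    2 + p * (p - 1) * x ^ 2 ≤ (1 + x) ^ p + (1 - x) ^ p := by
  set h : ℝ → ℝ := fun x => (1 + x) ^ p + (1 - x) ^ p - p * (p - 1) * x ^ 2 with hh
  have hd1 : ∀ x, HasDerivAt h (p * (1 + x) ^ (p - 1) - p * (1 - x) ^ (p - 1)
      - 2 * p * (p - 1) * x) x := by
    intro x
    have h1 : HasDerivAt (fun y : ℝ => 1 + y) 1 x := by
      simpa using (hasDerivAt_id x).const_add 1
    have h2 : HasDerivAt (fun y : ℝ => 1 - y) (-1) x := by
      simpa using (hasDerivAt_id x).const_sub 1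
    have h3 := ((h1.rpow_const (p := p) (Or.inr hp1.le)).add
      (h2.rpow_const (p := p) (Or.inr hp1.le))).sub (((hasDerivAt_id x).pow 2).const_mul (p * (p - 1)))
    refine h3.congr_deriv ?_
    simp
    ring
  have hd2 : ∀ x ∈ Set.Ioo (-1:ℝ) 1, HasDerivAt (fun x => p * (1 + x) ^ (p - 1) - p * (1 - x) ^ (p - 1)
      - 2 * p * (p - 1) * x) (p * (p - 1) * ((1 + x) ^ (p - 2) + (1 - x) ^ (p - 2) - 2)) x := by
    intro x hx
    have h1 : HasDerivAt (fun y : ℝ => 1 + y) 1 x := by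
      simpa using (hasDerivAt_id x).const_add 1
    have h2 : HasDerivAt (fun y : ℝ => 1 - y) (-1) x := by
      simpa using (hasDerivAt_id x).const_sub 1
    have h3 := (((h1.rpow_const (p := p - 1) (Or.inl (by linarith [hx.1]))).const_mul p).sub
      ((h2.rpow_const (p := p - 1) (Or.inl (by linarith [hx.2]))).const_mul p)).sub
      ((hasDerivAt_id x).const_mul (2 * p * (p - 1)))
    refine h3.congr_deriv ?_
    rw [show p - 1 - 1 = p - 2 by ring]
    ring
  have hde : deriv h = fun x => p * (1 + x) ^ (p - 1) - p * (1 - x) ^ (p - 1)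
      - 2 * p * (p - 1) * x := funext fun x => (hd1 x).deriv
  have hconv : ConvexOn ℝ (Set.Icc (-1:ℝ) 1) h := by
    apply convexOn_of_deriv2_nonneg (convex_Icc _ _)
    · exact fun x _ => (hd1 x).continuousAt.continuousWithinAt
    · exact fun x _ => (hd1 x).differentiableAt.differentiableWithinAt
    · rw [interior_Icc, hde]
      exact fun x hx => (hd2 x hx).differentiableAt.differentiableWithinAt
    · rw [interior_Icc]
      intro x hx
      simp only [Function.iterate_succ, Function.iterate_zero, Function.comp, id]
      rw [hde, (hd2 x hx).deriv]
      have hx1 : 0 < 1 + x := by linarith [hx.1]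
      have hx2 : 0 < 1 - x := by linarith [hx.2]
      have hA : 0 < (1 + x) ^ (p - 2) := Real.rpow_pos_of_pos hx1 _
      have hB : 0 < (1 - x) ^ (p - 2) := Real.rpow_pos_of_pos hx2 _
      have hAB : 1 ≤ (1 + x) ^ (p - 2) * (1 - x) ^ (p - 2) := by
        rw [← Real.mul_rpow hx1.le hx2.le]
        exact Real.one_le_rpow_of_pos_of_le_one_of_nonpos (by positivity) (by nlinarith [sq_nonneg x]) (by linarith)
      have : 0 ≤ (1 + x) ^ (p - 2) + (1 - x) ^ (p - 2) - 2 := by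
        nlinarith [sq_nonneg ((1 + x) ^ (p - 2) - (1 - x) ^ (p - 2))]
      have : 0 ≤ p * (p - 1) := by nlinarith
      positivity
  have hm : (-x) ∈ Set.Icc (-1:ℝ) 1 := ⟨by linarith [hx.2], by linarith [hx.1]⟩
  have := hconv.2 hx hm (by norm_num : (0:ℝ) ≤ 1/2) (by norm_num : (0:ℝ) ≤ 1/2) (by norm_num)
  simp only [hh, smul_eq_mul] at this
  rw [show (1:ℝ)/2 * x + 1/2 * -x = 0 by ring] at this
  rw [show 1 + -x = 1 - x by ring, show 1 - -x = 1 + x by ring, neg_sq] at this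
  norm_num at this
  linarith

lemma aux_two (p : ℝ) (hp1 : 1 < p) (hp2 : p < 2) (a b : ℝ) :
    (a ^ 2 + (p - 1) * b ^ 2) ^ (p / 2) ≤ (|a + b| ^ p + |a - b| ^ p) / 2 := by
  wlog hab : |b| ≤ |a| generalizing a b with H
  · have hba := (not_le.mp hab).le
    have h1 := H b a hba
    rw [add_comm b a, abs_sub_comm b a] at h1
    refine le_trans (Real.rpow_le_rpow ?_ ?_ (by linarith)) h1
    · have : 0 ≤ p - 1 := by linarith
      positivity
    · have := sq_le_sq.mpr hba
      nlinarith
  by_cases ha : a = 0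
  · subst ha
    have hb : b = 0 := by simpa using hab
    subst hb
    have : p / 2 ≠ 0 := by linarith
    have h0 : p ≠ 0 := by linarith
    simp [Real.zero_rpow h0]
    rw [Real.zero_rpow this]
  have hap : 0 < |a| := abs_pos.mpr ha
  set x := b / a with hx
  have hb : b = a * x := by rw [hx]; field_simp
  have hx1 : |x| ≤ 1 := by rw [hx, abs_div]; exact (div_le_one hap).mpr hab
  have hx2 := abs_le.mp hx1
  have e1 : |a + b| ^ p = |a| ^ p * (1 + x) ^ p := by
    rw [hb, show a + a * x = a * (1 + x) by ring, abs_mul, abs_of_nonneg (by linarith : 0 ≤ 1 + x),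
      Real.mul_rpow hap.le (by linarith)]
  have e2 : |a - b| ^ p = |a| ^ p * (1 - x) ^ p := by
    rw [hb, show a - a * x = a * (1 - x) by ring, abs_mul, abs_of_nonneg (by linarith : 0 ≤ 1 - x),
      Real.mul_rpow hap.le (by linarith)]
  have hs : 0 ≤ (p - 1) * x ^ 2 := mul_nonneg (by linarith) (sq_nonneg _)
  have e3 : (a ^ 2 + (p - 1) * b ^ 2) ^ (p / 2) = |a| ^ p * (1 + (p - 1) * x ^ 2) ^ (p / 2) := by
    rw [hb, show a ^ 2 + (p - 1) * (a * x) ^ 2 = |a| ^ 2 * (1 + (p - 1) * x ^ 2) by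
      rw [sq_abs]; ring, Real.mul_rpow (by positivity) (by linarith), ← Real.rpow_natCast,
      ← Real.rpow_mul hap.le]
    congr 2
    push_cast; ring
  rw [e1, e2, e3, ← mul_add, mul_div_assoc]
  apply mul_le_mul_of_nonneg_left _ (by positivity)
  have h1 := rpow_one_add_le_one_add_mul_self (s := (p - 1) * x ^ 2) (by linarith) (p := p / 2)
    (by linarith) (by linarith)
  have h2 := aux_h p hp1 hp2 x hx2
  nlinarith

lemma aux_two' (p : ℝ) (hp1 : 1 < p) (hp2 : p < 2) (u v : ℝ) :
    √(((u + v) / 2) ^ 2 + (p - 1) * ((u - v) / 2) ^ 2) ≤ ((|u| ^ p + |v| ^ p) / 2) ^ (1 / p) := by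
  have h := aux_two p hp1 hp2 ((u + v) / 2) ((u - v) / 2)
  rw [show (u + v) / 2 + (u - v) / 2 = u by ring, show (u + v) / 2 - (u - v) / 2 = v by ring] at h
  have h0 : 0 ≤ ((u + v) / 2) ^ 2 + (p - 1) * ((u - v) / 2) ^ 2 :=
    add_nonneg (sq_nonneg _) (mul_nonneg (by linarith) (sq_nonneg _))
  have h2 := Real.rpow_le_rpow (by positivity) h (by positivity : 0 ≤ 1 / p)
  rw [← Real.rpow_mul h0, show p / 2 * (1 / p) = 1 / 2 by field_simp] at h2
  rwa [Real.sqrt_eq_rpow]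

lemma aux_bil (p : ℝ) (hp1 : 1 < p) (hp2 : p < 2) (u v s t : ℝ) :
    (u + v) / 2 * ((s + t) / 2) + (p - 1) * ((u - v) / 2 * ((s - t) / 2)) ≤
    ((|u| ^ p + |v| ^ p) / 2) ^ (1 / p) * ((|s| ^ p + |t| ^ p) / 2) ^ (1 / p) := by
  refine le_trans ?_ (mul_le_mul (aux_two' p hp1 hp2 u v) (aux_two' p hp1 hp2 s t)
    (Real.sqrt_nonneg _) (by positivity))
  have hp : 0 ≤ p - 1 := by linarith
  rw [← Real.sqrt_mul (by positivity)]
  apply Real.le_sqrt_of_sq_le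
  nlinarith [mul_nonneg hp (sq_nonneg ((u + v) / 2 * ((s - t) / 2) - (u - v) / 2 * ((s + t) / 2)))]

lemma aux_g (p q : ℝ) (hq : 1 < q) (hpq : (q - 1) * p = q) (y : ℝ) :
    ∃ g : ℝ, y * g = |y| ^ q ∧ |g| ^ p = |y| ^ q := by
  by_cases hy : y = 0
  · refine ⟨0, ?_, ?_⟩
    · simp [hy, Real.zero_rpow (by linarith : q ≠ 0)]
    · have : p ≠ 0 := by rintro rfl; linarith
      simp [hy, Real.zero_rpow (by linarith : q ≠ 0), Real.zero_rpow this]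
  have hyp : 0 < |y| := abs_pos.mpr hy
  refine ⟨y * |y| ^ (q - 2), ?_, ?_⟩
  · rw [← mul_assoc, ← pow_two, ← sq_abs, ← Real.rpow_natCast, ← Real.rpow_add hyp]
    congr 1; push_cast; ring
  · rw [abs_mul, abs_of_nonneg (by positivity : 0 ≤ |y| ^ (q - 2))]
    have : |y| * |y| ^ (q - 2) = |y| ^ (q - 1) := by
      conv_lhs => rw [← Real.rpow_one |y|, Real.rpow_one, ← Real.rpow_one_add' hyp.le (by linarith)]
      congr 1; ring
    rw [this, ← Real.rpow_mul hyp.le, hpq]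

/-- Two-point inequality (`δ(D_{1,ε}) ≥ 2ε`): the noise operator on `Bool` is
`(p, q)`-hypercontractive for `p = 2 - 2ε` and `q = (2 - 2ε)/(1 - 2ε)`. -/
theorem stmt11 (ε : ℝ) (hε0 : 0 < ε) (hε1 : ε < 1 / 2)
    (p q : ℝ) (hp : p = 2 - 2 * ε) (hq : q = (2 - 2 * ε) / (1 - 2 * ε))
    (f : Bool → ℝ) (T : Bool → ℝ)
    (hT : ∀ x, T x = (1 - ε) * f x + ε * f (!x)) :
    ((|T false| ^ q + |T true| ^ q) / 2) ^ (1 / q) ≤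
      ((|f false| ^ p + |f true| ^ p) / 2) ^ (1 / p) := by
  have hp1 : 1 < p := by linarith
  have hp2 : p < 2 := by linarith
  have hd : 0 < 1 - 2 * ε := by linarith
  have hq1 : 1 < q := by rw [hq, lt_div_iff₀ hd]; linarith
  have hpq : (q - 1) * p = q := by rw [hq, hp]; field_simp; ring
  obtain ⟨g0, h0, h0'⟩ := aux_g p q hq1 hpq (T false)
  obtain ⟨g1, h1, h1'⟩ := aux_g p q hq1 hpq (T true)
  have hb := aux_bil p hp1 hp2 (f false) (f true) g0 g1
  rw [h0', h1'] at hb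
  have hS : (f false + f true) / 2 * ((g0 + g1) / 2) + (p - 1) * ((f false - f true) / 2 * ((g0 - g1) / 2))
      = (|T false| ^ q + |T true| ^ q) / 2 := by
    rw [← h0, ← h1, hT, hT, hp]
    simp only [Bool.not_false, Bool.not_true]
    ring
  rw [hS] at hb
  set S := (|T false| ^ q + |T true| ^ q) / 2 with hSd
  have hSn : 0 ≤ S := by positivity
  rcases hSn.eq_or_lt with h | h
  · rw [← h, Real.zero_rpow (by positivity)]
    positivity
  · have hpos : 0 < S ^ (1 / p) := Real.rpow_pos_of_pos h _
    have hsum : S = S ^ (1 / q) * S ^ (1 / p) := by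
      rw [← Real.rpow_add h]
      have : 1 / q + 1 / p = 1 := by
        have : p ≠ 0 := by linarith
        have : q ≠ 0 := by linarith
        field_simp
        linarith
      rw [this, Real.rpow_one]
    refine le_of_mul_le_mul_right ?_ hpos
    rw [← hsum]
    exact hb
end

section
/- Hypercontractivity of the n-dimensional noise operator: let 0 < ε < 1/2, p = 2 − 2ε, and q = (2 − 2ε)/(1 − 2ε), and let n be a natural number. For f : (Fin n → Bool) → ℝ define (T f)(x) = Σ_{y} (Π_i w(x i, y i)) · f(y), where w(a,b) = 1 − ε if a = b and w(a,b) = ε if a ≠ b. Then (2^(−n) · Σ_x |T f(x)|^q)^(1/q) ≤ (2^(−n) · Σ_y |f(y)|^p)^(1/p). (Equivalently, δ(D_{n,ε}) ≥ 2ε.) -/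
open Finset

/-- The `n`-dimensional noise operator with flip probability `ε` on the Boolean cube. -/
noncomputable def noiseOp (ε : ℝ) (n : ℕ) (f : (Fin n → Bool) → ℝ) (x : Fin n → Bool) : ℝ :=
  ∑ y : Fin n → Bool, (∏ i, if x i = y i then 1 - ε else ε) * f y

lemma aux_neg (s y : ℝ) (hs : s ≤ 0) (hy0 : 0 ≤ y) (hy1 : y < 1) :
    2 ≤ (1 + y) ^ s + (1 - y) ^ s := by
  have h1 : 0 < (1 + y) ^ s := Real.rpow_pos_of_pos (by linarith) _
  have h2 : 0 < (1 - y) ^ s := Real.rpow_pos_of_pos (by linarith) _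
  have h3 : 1 ≤ (1 + y) ^ s * (1 - y) ^ s := by
    rw [← Real.mul_rpow (by linarith) (by linarith)]
    exact Real.one_le_rpow_of_pos_of_le_one_of_nonpos (by nlinarith) (by nlinarith) hs
  nlinarith [sq_nonneg ((1 + y) ^ s - (1 - y) ^ s)]

lemma aux_k (r y : ℝ) (hr0 : 0 < r) (hr1 : r < 1) (hy0 : 0 ≤ y) (hy1 : y ≤ 1) :
    2 * r * y ≤ (1 + y) ^ r - (1 - y) ^ r := by
  have hd : ∀ x ∈ Set.Ioo (0:ℝ) 1, HasDerivAt (fun y : ℝ => (1 + y) ^ r - (1 - y) ^ r - 2 * r * y)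
      (r * ((1 + x) ^ (r - 1) + (1 - x) ^ (r - 1) - 2)) x := by
    intro x hx
    have a1 := ((hasDerivAt_id x).const_add 1).rpow_const (p := r) (Or.inl (by simp; linarith [hx.1]))
    have a2 := ((hasDerivAt_id x).const_sub 1).rpow_const (p := r) (Or.inl (by simp; linarith [hx.2]))
    have a3 := (hasDerivAt_id x).const_mul (2 * r)
    refine ((a1.sub a2).sub a3).congr_deriv ?_
    simp only [id]
    ring
  have hm : MonotoneOn (fun y : ℝ => (1 + y) ^ r - (1 - y) ^ r - 2 * r * y) (Set.Icc 0 1) := by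
    apply monotoneOn_of_deriv_nonneg (convex_Icc 0 1)
    · apply Continuous.continuousOn
      have := Real.continuous_rpow_const hr0.le
      exact ((this.comp (continuous_const.add continuous_id)).sub
        (this.comp (continuous_const.sub continuous_id))).sub (continuous_const.mul continuous_id)
    · rw [interior_Icc]
      exact fun x hx => (hd x hx).differentiableAt.differentiableWithinAt
    · rw [interior_Icc]
      intro x hx
      rw [(hd x hx).deriv]
      have := aux_neg (r - 1) x (by linarith) hx.1.le hx.2
      exact mul_nonneg hr0.le (by linarith)
  have := hm (Set.left_mem_Icc.2 zero_le_one) ⟨hy0, hy1⟩ hy0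
  simp at this
  linarith

lemma aux_h_s12 (r y : ℝ) (hr0 : 0 < r) (hr1 : r < 1) (hy0 : 0 ≤ y) (hy1 : y ≤ 1) :
    2 + (1 + r) * r * y ^ 2 ≤ (1 + y) ^ (1 + r) + (1 - y) ^ (1 + r) := by
  have hd : ∀ x ∈ Set.Ioo (0:ℝ) 1,
      HasDerivAt (fun y : ℝ => (1 + y) ^ (1 + r) + (1 - y) ^ (1 + r) - (1 + r) * r * y ^ 2)
      ((1 + r) * ((1 + x) ^ r - (1 - x) ^ r - 2 * r * x)) x := by
    intro x hx
    have a1 := ((hasDerivAt_id x).const_add 1).rpow_const (p := 1 + r)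
      (Or.inl (by simp; linarith [hx.1]))
    have a2 := ((hasDerivAt_id x).const_sub 1).rpow_const (p := 1 + r)
      (Or.inl (by simp; linarith [hx.2]))
    have a3 := ((hasDerivAt_id x).pow 2).const_mul ((1 + r) * r)
    refine ((a1.add a2).sub a3).congr_deriv ?_
    have e : 1 + r - 1 = r := by ring
    rw [e]
    simp
    ring
  have hm : MonotoneOn (fun y : ℝ => (1 + y) ^ (1 + r) + (1 - y) ^ (1 + r) - (1 + r) * r * y ^ 2)
      (Set.Icc 0 1) := by
    apply monotoneOn_of_deriv_nonneg (convex_Icc 0 1)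
    · apply Continuous.continuousOn
      have := Real.continuous_rpow_const (q := 1 + r) (by linarith)
      exact ((this.comp (continuous_const.add continuous_id)).add
        (this.comp (continuous_const.sub continuous_id))).sub
          (continuous_const.mul (continuous_id.pow 2))
    · rw [interior_Icc]
      exact fun x hx => (hd x hx).differentiableAt.differentiableWithinAt
    · rw [interior_Icc]
      intro x hx
      rw [(hd x hx).deriv]
      have := aux_k r x hr0 hr1 hx.1.le hx.2.le
      exact mul_nonneg (by linarith) (by linarith)
  have := hm (Set.left_mem_Icc.2 zero_le_one) ⟨hy0, hy1⟩ hy0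
  simp at this
  linarith

lemma two_pt (r a b : ℝ) (hr0 : 0 < r) (hr1 : r < 1) (hb : 0 ≤ b) (hab : b ≤ a) :
    ((a + b) / 2) ^ 2 + r * ((a - b) / 2) ^ 2 ≤
      (((a ^ (1 + r) + b ^ (1 + r)) / 2) ^ (1 / (1 + r))) ^ 2 := by
  rcases eq_or_lt_of_le (hb.trans hab) with h0 | ha
  · have : b = 0 := by linarith
    subst this
    rw [← h0]
    simp
    positivity
  obtain ⟨u, hu⟩ : ∃ u, u = (a + b) / 2 := ⟨_, rfl⟩
  have hu0 : 0 < u := by linarith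
  obtain ⟨y, hy⟩ : ∃ y, y = ((a - b) / 2) / u := ⟨_, rfl⟩
  have hyu : u * y = (a - b) / 2 := by rw [hy]; field_simp
  have hy0 : 0 ≤ y := by rw [hy]; apply div_nonneg <;> linarith
  have hy1 : y ≤ 1 := by rw [hy, div_le_one hu0]; linarith
  have ea : a = u * (1 + y) := by linarith
  have eb : b = u * (1 - y) := by linarith
  have hB : (1 + r * y ^ 2) ^ ((1 + r) / 2) ≤ 1 + (1 + r) / 2 * (r * y ^ 2) :=
    rpow_one_add_le_one_add_mul_self (by nlinarith [sq_nonneg y]) (by linarith) (by linarith)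
  have hH := aux_h_s12 r y hr0 hr1 hy0 hy1
  rw [← hu, ← hyu]
  have e1 : u ^ 2 + r * (u * y) ^ 2 = u ^ 2 * (1 + r * y ^ 2) := by ring
  have hpos : 0 ≤ 1 + r * y ^ 2 := by positivity
  have h4 : (a ^ (1 + r) + b ^ (1 + r)) / 2
      = u ^ (1 + r) * (((1 + y) ^ (1 + r) + (1 - y) ^ (1 + r)) / 2) := by
    rw [ea, eb, Real.mul_rpow hu0.le (by linarith), Real.mul_rpow hu0.le (by linarith)]
    ring
  have h5 : (u ^ 2 * (1 + r * y ^ 2)) ^ ((1 + r) / 2) ≤ (a ^ (1 + r) + b ^ (1 + r)) / 2 := by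
    rw [h4, Real.mul_rpow (by positivity) hpos, ← Real.rpow_natCast u 2, ← Real.rpow_mul hu0.le]
    have : ((2:ℕ):ℝ) * ((1 + r) / 2) = 1 + r := by push_cast; ring
    rw [this]
    apply mul_le_mul_of_nonneg_left _ (by positivity)
    linarith
  rw [e1]
  have hx : 0 ≤ u ^ 2 * (1 + r * y ^ 2) := by positivity
  calc u ^ 2 * (1 + r * y ^ 2) = (((u ^ 2 * (1 + r * y ^ 2)) ^ ((1 + r) / 2)) ^ (1 / (1 + r))) ^ 2 := by
        rw [← Real.rpow_mul hx, ← Real.rpow_natCast (_ ^ (_ * (1 / (1 + r)))) 2, ← Real.rpow_mul hx]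
        have : (1 + r) / 2 * (1 / (1 + r)) * ((2:ℕ):ℝ) = 1 := by
          push_cast; field_simp
        rw [this, Real.rpow_one]
    _ ≤ _ := by
        gcongr

lemma two_pt' (r a b : ℝ) (hr0 : 0 < r) (hr1 : r < 1) (ha : 0 ≤ a) (hb : 0 ≤ b) :
    ((a + b) / 2) ^ 2 + r * ((a - b) / 2) ^ 2 ≤
      (((a ^ (1 + r) + b ^ (1 + r)) / 2) ^ (1 / (1 + r))) ^ 2 := by
  rcases le_total b a with h | h
  · exact two_pt r a b hr0 hr1 hb h
  · have := two_pt r b a hr0 hr1 ha h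
    rw [add_comm (b ^ (1 + r))] at this
    linarith

lemma base_ineq (ε a b c d : ℝ) (hε0 : 0 < ε) (hε1 : ε < 1 / 2)
    (ha : 0 ≤ a) (hb : 0 ≤ b) (hc : 0 ≤ c) (hd : 0 ≤ d) :
    ((1 - ε) * (a * c) + ε * (a * d) + (ε * (b * c) + (1 - ε) * (b * d))) / 2 ≤
      ((a ^ (2 - 2 * ε) + b ^ (2 - 2 * ε)) / 2) ^ (1 / (2 - 2 * ε)) *
      ((c ^ (2 - 2 * ε) + d ^ (2 - 2 * ε)) / 2) ^ (1 / (2 - 2 * ε)) := by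
  have h1 := two_pt' (1 - 2 * ε) a b (by linarith) (by linarith) ha hb
  have h2 := two_pt' (1 - 2 * ε) c d (by linarith) (by linarith) hc hd
  have e : 1 + (1 - 2 * ε) = 2 - 2 * ε := by ring
  rw [e] at h1 h2
  have hX : 0 ≤ ((a ^ (2 - 2 * ε) + b ^ (2 - 2 * ε)) / 2) ^ (1 / (2 - 2 * ε)) := by positivity
  have hY : 0 ≤ ((c ^ (2 - 2 * ε) + d ^ (2 - 2 * ε)) / 2) ^ (1 / (2 - 2 * ε)) := by positivity
  generalize ((a ^ (2 - 2 * ε) + b ^ (2 - 2 * ε)) / 2) ^ (1 / (2 - 2 * ε)) = X at *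
  generalize ((c ^ (2 - 2 * ε) + d ^ (2 - 2 * ε)) / 2) ^ (1 / (2 - 2 * ε)) = Y at *
  refine (abs_le_of_sq_le_sq' ?_ (mul_nonneg hX hY)).2
  have hr : 0 < 1 - 2 * ε := by linarith
  have h3 := mul_le_mul h1 h2 (by positivity) (by positivity)
  have h4 : 0 ≤ (1 - 2 * ε) *
    ((a + b) / 2 * ((c - d) / 2) - (c + d) / 2 * ((a - b) / 2)) ^ 2 := by positivity
  rw [mul_pow]
  refine le_trans ?_ h3
  rw [← sub_nonneg]
  refine h4.trans_eq ?_
  ring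

noncomputable def nrm (p : ℝ) (n : ℕ) (f : (Fin n → Bool) → ℝ) : ℝ :=
  (((2 : ℝ) ^ n)⁻¹ * ∑ y : Fin n → Bool, |f y| ^ p) ^ (1 / p)

lemma cube_sum_cons (n : ℕ) (F : (Fin (n + 1) → Bool) → ℝ) :
    ∑ x, F x = ∑ x : Fin n → Bool, F (Fin.cons true x) + ∑ x : Fin n → Bool, F (Fin.cons false x) := by
  rw [← (Fin.consEquiv (fun _ : Fin (n + 1) => Bool)).sum_comp F, Fintype.sum_prod_type,
    Fintype.sum_bool]
  rfl

lemma nrm_nonneg (p : ℝ) (n : ℕ) (f : (Fin n → Bool) → ℝ) : 0 ≤ nrm p n f := by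
  unfold nrm; positivity

lemma nrm_succ (p : ℝ) (hp : 0 < p) (n : ℕ) (f : (Fin (n + 1) → Bool) → ℝ) :
    nrm p (n + 1) f = (((nrm p n fun x => f (Fin.cons true x)) ^ p
      + (nrm p n fun x => f (Fin.cons false x)) ^ p) / 2) ^ (1 / p) := by
  unfold nrm
  rw [← Real.rpow_mul (by positivity), ← Real.rpow_mul (by positivity),
    one_div_mul_cancel hp.ne', Real.rpow_one, Real.rpow_one, cube_sum_cons]
  congr 1
  rw [pow_succ]
  field_simp

lemma bilin (ε : ℝ) (hε0 : 0 < ε) (hε1 : ε < 1 / 2) (n : ℕ) : ∀ (f g : (Fin n → Bool) → ℝ),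
    ((2 : ℝ) ^ n)⁻¹ * ∑ x, f x * noiseOp ε n g x ≤
      nrm (2 - 2 * ε) n f * nrm (2 - 2 * ε) n g := by
  induction n with
  | zero =>
    intro f g
    have hp : 2 - 2 * ε ≠ 0 := by linarith
    simp only [nrm, noiseOp, Fintype.sum_unique, Finset.univ_eq_empty, Finset.prod_empty]
    simp only [pow_zero, inv_one, one_mul]
    rw [← Real.rpow_mul (abs_nonneg _), ← Real.rpow_mul (abs_nonneg _), mul_one_div_cancel hp,
      Real.rpow_one, Real.rpow_one, ← abs_mul]
    exact le_abs_self _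
  | succ n ih =>
    intro f g
    have hT : ∀ (x : Fin n → Bool), noiseOp ε (n + 1) g (Fin.cons true x) =
        (1 - ε) * noiseOp ε n (fun y => g (Fin.cons true y)) x
          + ε * noiseOp ε n (fun y => g (Fin.cons false y)) x := by
      intro x
      simp only [noiseOp]
      rw [cube_sum_cons, mul_sum, mul_sum]
      simp [Fin.prod_univ_succ, mul_assoc]
    have hF : ∀ (x : Fin n → Bool), noiseOp ε (n + 1) g (Fin.cons false x) =
        ε * noiseOp ε n (fun y => g (Fin.cons true y)) x
          + (1 - ε) * noiseOp ε n (fun y => g (Fin.cons false y)) x := by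
      intro x
      simp only [noiseOp]
      rw [cube_sum_cons, mul_sum, mul_sum]
      simp [Fin.prod_univ_succ, mul_assoc]
    rw [nrm_succ _ (by linarith), nrm_succ _ (by linarith)]
    refine le_trans ?_ (base_ineq ε _ _ _ _ hε0 hε1 (nrm_nonneg _ _ _) (nrm_nonneg _ _ _)
      (nrm_nonneg _ _ _) (nrm_nonneg _ _ _))
    rw [cube_sum_cons]
    simp only [hT, hF]
    have i1 := ih (fun x => f (Fin.cons true x)) (fun x => g (Fin.cons true x))
    have i2 := ih (fun x => f (Fin.cons true x)) (fun x => g (Fin.cons false x))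
    have i3 := ih (fun x => f (Fin.cons false x)) (fun x => g (Fin.cons true x))
    have i4 := ih (fun x => f (Fin.cons false x)) (fun x => g (Fin.cons false x))
    have hε2 : 0 ≤ 1 - ε := by linarith
    have j1 := mul_le_mul_of_nonneg_left i1 hε2
    have j2 := mul_le_mul_of_nonneg_left i2 hε0.le
    have j3 := mul_le_mul_of_nonneg_left i3 hε0.le
    have j4 := mul_le_mul_of_nonneg_left i4 hε2
    refine le_trans (le_of_eq ?_) (div_le_div_of_nonneg_right
      (add_le_add (add_le_add j1 j2) (add_le_add j3 j4)) zero_le_two)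
    simp only [mul_add, sum_add_distrib, mul_left_comm (f _), ← mul_sum]
    rw [pow_succ, mul_inv]
    ring

/-- Hypercontractivity of the `n`-dimensional noise operator (`δ(D_{n,ε}) ≥ 2ε`). -/
theorem stmt12 (ε : ℝ) (hε0 : 0 < ε) (hε1 : ε < 1 / 2)
    (p q : ℝ) (hp : p = 2 - 2 * ε) (hq : q = (2 - 2 * ε) / (1 - 2 * ε))
    (n : ℕ) (f : (Fin n → Bool) → ℝ) :
    (((2 : ℝ) ^ n)⁻¹ * ∑ x : Fin n → Bool, |noiseOp ε n f x| ^ q) ^ (1 / q) ≤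
      (((2 : ℝ) ^ n)⁻¹ * ∑ y : Fin n → Bool, |f y| ^ p) ^ (1 / p) := by
  have hr : 0 < 1 - 2 * ε := by linarith
  have hp0 : 0 < p := by linarith
  have hq1 : q - 1 = 1 / (1 - 2 * ε) := by rw [hq]; field_simp; ring
  have hq1' : 0 < q - 1 := by rw [hq1]; positivity
  have hq0 : 0 < q := by linarith
  have hpq : (q - 1) * p = q := by rw [hq1, hp, hq]; field_simp
  have hpq2 : 1 - 1 / p = 1 / q := by
    rw [hp, hq]
    have : 1 - ε ≠ 0 := by linarith
    have : 2 - 2 * ε ≠ 0 := by linarith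
    rw [one_div_div, eq_div_iff this, sub_mul, one_div_mul_cancel this]
    ring
  have h := bilin ε hε0 hε1 n
    (fun x => SignType.sign (noiseOp ε n f x) * |noiseOp ε n f x| ^ (q - 1)) f
  have e1 : ∀ x, SignType.sign (noiseOp ε n f x) * |noiseOp ε n f x| ^ (q - 1) * noiseOp ε n f x
      = |noiseOp ε n f x| ^ q := by
    intro x
    rw [mul_right_comm, sign_mul_self]
    rcases eq_or_ne (noiseOp ε n f x) 0 with h0 | h0
    · rw [h0]; simp [Real.zero_rpow hq0.ne']
    · rw [← Real.rpow_one_add' (abs_nonneg _) (by linarith)]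
      congr 1; ring
  have e2 : ∀ x, |SignType.sign (noiseOp ε n f x) * |noiseOp ε n f x| ^ (q - 1)| ^ p
      = |noiseOp ε n f x| ^ q := by
    intro x
    rcases lt_trichotomy (noiseOp ε n f x) 0 with h0 | h0 | h0
    · rw [sign_neg h0]
      simp only [SignType.coe_neg, SignType.coe_one, neg_mul, one_mul, abs_neg]
      rw [abs_of_nonneg (by positivity), ← Real.rpow_mul (abs_nonneg _), hpq]
    · rw [h0]; simp [Real.zero_rpow hq0.ne', Real.zero_rpow hp0.ne']
    · rw [sign_pos h0]
      simp only [SignType.coe_one, one_mul]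
      rw [abs_of_nonneg (by positivity), ← Real.rpow_mul (abs_nonneg _), hpq]
  rw [← hp] at h
  unfold nrm at h
  simp only [e1, e2] at h
  have hA : 0 ≤ ((2 : ℝ) ^ n)⁻¹ * ∑ x : Fin n → Bool, |noiseOp ε n f x| ^ q := by positivity
  generalize ((2 : ℝ) ^ n)⁻¹ * ∑ x : Fin n → Bool, |noiseOp ε n f x| ^ q = A at *
  rcases eq_or_lt_of_le hA with h0 | h0
  · rw [← h0, Real.zero_rpow (by positivity)]
    positivity
  · have hB : 0 < A ^ (1 / p) := by positivity
    rw [← hpq2, Real.rpow_sub h0, Real.rpow_one, div_le_iff₀ hB, mul_comm]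
    exact h
end

section
/- Lower bound on Λ(ε, τ), second regime: let 0 < ε < 1 and let α be a real number with 1 − √(1 − ε) ≤ α < 1/2, and set τ = H(α). For each n let k_n = ⌊εn⌋ and s_n = ⌊(2 : ℝ)^(τn)⌋; let R_n be the maximum, over subsets A, B of the Boolean cube Fin n → Bool with |A| ≤ s_n and |B| ≤ s_n, of the number of pairs (x, y) ∈ A × B with Hamming distance exactly k_n; and let G_n = 2^n · (n choose k_n). Then liminf_{n → ∞} (logb 2 ((R_n : ℝ) / G_n)) / n ≥ −(1 + H(ε) − τ − α·H(ε/(2α)) − (1 − α)·H(ε/(2(1 − α)))). -/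
open Finset Filter

/-- The maximal number of pairs at Hamming distance `⌊ε n⌋` inside a rectangle `A × B`
with `|A|, |B| ≤ ⌊2^(τ n)⌋`. -/
noncomputable def Rn (τ ε : ℝ) (n : ℕ) : ℕ :=
  ((Finset.univ.powerset.filter
      fun A : Finset (Fin n → Bool) => A.card ≤ ⌊(2 : ℝ) ^ (τ * n)⌋₊) ×ˢ
   (Finset.univ.powerset.filter
      fun B : Finset (Fin n → Bool) => B.card ≤ ⌊(2 : ℝ) ^ (τ * n)⌋₊)).sup
    fun AB => ((AB.1 ×ˢ AB.2).filter
      fun p => hammingDist p.1 p.2 = ⌊ε * n⌋₊).card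

/-- The total number of pairs of points of the Boolean cube at Hamming distance `⌊ε n⌋`. -/
noncomputable def Gn (ε : ℝ) (n : ℕ) : ℕ := 2 ^ n * n.choose ⌊ε * n⌋₊

/-- The binary entropy function (base-2 logarithms). -/
noncomputable def binH (t : ℝ) : ℝ := -t * Real.logb 2 t - (1 - t) * Real.logb 2 (1 - t)

def ind15 {n : ℕ} (S : Finset (Fin n)) : Fin n → Bool := fun i => decide (i ∈ S)

lemma ind15_inj {n : ℕ} : Function.Injective (ind15 (n := n)) := by
  intro S T h
  ext i
  have := congrFun h i
  simpa [ind15] using this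

lemma Rn_lower15 (τ ε : ℝ) (n w a b : ℕ) (hab : a + b = ⌊ε * n⌋₊) (haw : a ≤ w)
    (h1 : n.choose w ≤ ⌊(2 : ℝ) ^ (τ * n)⌋₊)
    (h2 : n.choose (w - a + b) ≤ ⌊(2 : ℝ) ^ (τ * n)⌋₊) :
    n.choose w * (w.choose a * (n - w).choose b) ≤ Rn τ ε n := by
  classical
  set A : Finset (Fin n → Bool) := (powersetCard w univ).image ind15 with hA
  set B : Finset (Fin n → Bool) := (powersetCard (w - a + b) univ).image ind15 with hB
  have hAc : A.card = n.choose w := by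
    rw [hA, card_image_of_injective _ ind15_inj]; simp
  have hBc : B.card = n.choose (w - a + b) := by
    rw [hB, card_image_of_injective _ ind15_inj]; simp
  have hle : ((A ×ˢ B).filter fun p => hammingDist p.1 p.2 = ⌊ε * n⌋₊).card ≤ Rn τ ε n := by
    unfold Rn
    apply Finset.le_sup (f := fun AB : Finset (Fin n → Bool) × Finset (Fin n → Bool) =>
      ((AB.1 ×ˢ AB.2).filter fun p => hammingDist p.1 p.2 = ⌊ε * n⌋₊).card) (b := (A, B))
    simp only [mem_product, mem_filter, mem_powerset, subset_univ, true_and]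
    exact ⟨hAc ▸ h1, hBc ▸ h2⟩
  refine le_trans ?_ hle
  have hP : ((powersetCard w (univ : Finset (Fin n))).sigma
      (fun S => powersetCard a S ×ˢ powersetCard b Sᶜ)).card
      = n.choose w * (w.choose a * (n - w).choose b) := by
    rw [card_sigma, sum_congr rfl (g := fun _ => w.choose a * (n - w).choose b)]
    · simp
    · intro S hS
      have hS' := (mem_powersetCard.1 hS).2
      simp [card_product, card_powersetCard, card_compl, hS']
  rw [← hP]
  apply card_le_card_of_injOn (fun p => (ind15 p.1, ind15 ((p.1 \ p.2.1) ∪ p.2.2)))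
  · rintro ⟨S, U, V⟩ h
    simp only [coe_sigma, Set.mem_sigma_iff, mem_coe, mem_powersetCard, mem_product,
      subset_univ, true_and] at h
    obtain ⟨hS, ⟨hU, hUc⟩, hV, hVc⟩ := h
    have hdV : Disjoint S V := by
      rw [Finset.disjoint_left]; intro i hi hv
      exact (mem_compl.1 (hV hv)) hi
    simp only [coe_filter, mem_product, Set.mem_ofPred_eq]
    refine ⟨⟨mem_image_of_mem _ (by simp [hS]), mem_image_of_mem _ ?_⟩, ?_⟩
    · simp only [mem_powersetCard, subset_univ, true_and]
      rw [card_union_of_disjoint (hdV.mono_left sdiff_subset), card_sdiff_of_subset hU, hS, hUc, hVc]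
    · rw [← hab, ← hUc, ← hVc, ← card_union_of_disjoint (hdV.mono_left hU), hammingDist]
      congr 1
      ext i
      have e1 := @hU i
      have e2 := @hV i
      simp only [mem_compl] at e2
      simp only [mem_filter, mem_univ, true_and, ind15, mem_union, Finset.mem_sdiff, ne_eq, decide_eq_decide]
      tauto
  · rintro ⟨S, U, V⟩ h ⟨S', U', V'⟩ h' heq
    simp only [coe_sigma, Set.mem_sigma_iff, mem_coe, mem_powersetCard, mem_product,
      subset_univ, true_and] at h h'
    obtain ⟨hS, ⟨hU, hUc⟩, hV, hVc⟩ := h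
    obtain ⟨hS', ⟨hU', hUc'⟩, hV', hVc'⟩ := h'
    simp only [Prod.mk.injEq] at heq
    obtain ⟨q1, q2⟩ := heq
    have q1 := ind15_inj q1
    subst q1
    have q2 := ind15_inj q2
    have key : ∀ i, (i ∈ U ↔ i ∈ U') ∧ (i ∈ V ↔ i ∈ V') := by
      intro i
      have e1 := @hU i
      have e2 := @hV i
      have e3 := @hU' i
      have e4 := @hV' i
      have e5 := Finset.ext_iff.1 q2 i
      simp only [mem_compl, mem_union, Finset.mem_sdiff] at e1 e2 e3 e4 e5
      clear hS hU hUc hV hVc hU' hUc' hV' hVc' q2 hle hP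
      tauto
    have r1 : U = U' := by ext i; exact (key i).1
    have r2 : V = V' := by ext i; exact (key i).2
    subst r1 r2; rfl

lemma choose_le15 (α : ℝ) (h0 : 0 < α) (h1 : α < 1 / 2) (n m : ℕ) (hm : (m : ℝ) ≤ α * n) :
    n.choose m ≤ ⌊(2 : ℝ) ^ (binH α * n)⌋₊ := by
  apply Nat.le_floor
  have hβ : 0 < 1 - α := by linarith
  have hmn : m ≤ n := by
    have : (m : ℝ) ≤ n := by
      have : (0:ℝ) ≤ n := by positivity
      nlinarith
    exact_mod_cast this
  have hb : α ^ m * (1 - α) ^ (n - m) * (n.choose m : ℝ) ≤ 1 := by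
    have h := add_pow α (1 - α) n
    have e : α + (1 - α) = 1 := by ring
    rw [e, one_pow] at h
    refine le_trans ?_ h.ge
    exact Finset.single_le_sum (f := fun m => α ^ m * (1 - α) ^ (n - m) * (n.choose m : ℝ))
      (s := Finset.range (n + 1)) (fun i _ => by positivity)
      (Finset.mem_range.2 (Nat.lt_succ_of_le hmn))
  have hc : (0 : ℝ) < n.choose m := by exact_mod_cast Nat.choose_pos hmn
  have hl := Real.log_le_log (by positivity) hb
  rw [Real.log_one, Real.log_mul (by positivity) hc.ne', Real.log_mul (by positivity) (by positivity),
    Real.log_pow, Real.log_pow, Nat.cast_sub hmn] at hl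
  rw [← Real.log_le_log_iff hc (by positivity), Real.log_rpow (by norm_num)]
  have hl2 : Real.log 2 ≠ 0 := (Real.log_pos (by norm_num)).ne'
  have e : binH α * n * Real.log 2 = -(α * n) * Real.log α - (n - α * n) * Real.log (1 - α) := by
    unfold binH Real.logb; field_simp; 
  rw [e]
  have : Real.log α ≤ Real.log (1 - α) := Real.log_le_log h0 (by linarith)
  nlinarith

lemma fact15 : Tendsto (fun n : ℕ => Real.log (n.factorial : ℝ) / n - Real.log n) atTop
    (nhds (-1)) := by
  have h1 : Tendsto (fun n : ℕ => Real.log (Stirling.stirlingSeq n)) atTop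
      (nhds (Real.log (Real.sqrt Real.pi))) :=
    (Stirling.tendsto_stirlingSeq_sqrt_pi).log (by positivity)
  have hinv : Tendsto (fun n : ℕ => ((n : ℝ))⁻¹) atTop (nhds 0) := tendsto_inv_atTop_nhds_zero_nat
  have hlog : Tendsto (fun n : ℕ => Real.log n / n) atTop (nhds 0) :=
    (Real.isLittleO_log_id_atTop.tendsto_div_nhds_zero).comp tendsto_natCast_atTop_atTop
  have h2 := ((h1.mul hinv).add ((hlog.const_mul (1/2)).add (hinv.const_mul (Real.log 2 / 2)))).sub_const 1
  simp only [mul_zero, add_zero, zero_sub] at h2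
  refine h2.congr' ?_
  filter_upwards [eventually_gt_atTop 0] with n hn
  have hn' : (0 : ℝ) < n := by exact_mod_cast hn
  rw [Stirling.log_stirlingSeq_formula, Real.log_mul (by norm_num) hn'.ne',
    Real.log_div hn'.ne' (Real.exp_pos 1).ne', Real.log_exp]
  field_simp
  ring

lemma factseq15 (a : ℕ → ℕ) (c : ℝ) (hc : 0 < c)
    (ha : Tendsto (fun n => (a n : ℝ) / n) atTop (nhds c)) :
    Tendsto (fun n : ℕ => Real.log ((a n).factorial : ℝ) / n - (a n : ℝ) / n * Real.log n) atTop
    (nhds (c * Real.log c - c)) := by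
  have hpos : ∀ᶠ n in atTop, 0 < (a n : ℝ) / n := ha.eventually (lt_mem_nhds hc)
  have hat : Tendsto a atTop atTop := by
    rw [← tendsto_natCast_atTop_iff (R := ℝ)]
    have := ha.pos_mul_atTop hc (tendsto_natCast_atTop_atTop (R := ℝ))
    refine this.congr' ?_
    filter_upwards [eventually_gt_atTop 0] with n hn
    have hn' : (0 : ℝ) < n := by exact_mod_cast hn
    field_simp
  have h := (ha.mul (fact15.comp hat)).add (ha.mul (ha.log hc.ne'))
  have e : c * (-1) + c * Real.log c = c * Real.log c - c := by ring
  rw [e] at h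
  refine h.congr' ?_
  filter_upwards [eventually_gt_atTop 0, hat.eventually_gt_atTop 0] with n hn han
  have hn' : (0 : ℝ) < n := by exact_mod_cast hn
  have han' : (0 : ℝ) < a n := by exact_mod_cast han
  simp only [Function.comp]
  rw [Real.log_div han'.ne' hn'.ne']
  field_simp
  ring

lemma binH15 (μ ν : ℝ) (h0 : 0 < ν) (h1 : ν < μ) :
    (μ * Real.log μ - ν * Real.log ν - (μ - ν) * Real.log (μ - ν)) / Real.log 2
      = μ * binH (ν / μ) := by
  have hμ : 0 < μ := by linarith
  have hl2 : Real.log 2 ≠ 0 := (Real.log_pos (by norm_num)).ne'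
  have e : 1 - ν / μ = (μ - ν) / μ := by field_simp
  unfold binH Real.logb
  rw [e, Real.log_div h0.ne' hμ.ne', Real.log_div (by linarith) hμ.ne']
  field_simp
  ring

lemma chooseseq15 (m j : ℕ → ℕ) (μ ν : ℝ) (h0 : 0 < ν) (h1 : ν < μ)
    (hm : Tendsto (fun n => (m n : ℝ) / n) atTop (nhds μ))
    (hj : Tendsto (fun n => (j n : ℝ) / n) atTop (nhds ν)) :
    (∀ᶠ n in atTop, j n < m n) ∧
    Tendsto (fun n : ℕ => Real.logb 2 ((m n).choose (j n) : ℝ) / n) atTop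
    (nhds (μ * binH (ν / μ))) := by
  have hlt : ∀ᶠ n in atTop, j n < m n := by
    filter_upwards [hj.eventually_lt hm h1, eventually_gt_atTop 0] with n h hn
    have hn' : (0 : ℝ) < n := by exact_mod_cast hn
    rw [div_lt_div_iff_of_pos_right hn'] at h
    exact_mod_cast h
  refine ⟨hlt, ?_⟩
  have hd : Tendsto (fun n => ((m n - j n : ℕ) : ℝ) / n) atTop (nhds (μ - ν)) := by
    refine (hm.sub hj).congr' ?_
    filter_upwards [hlt] with n h
    rw [Nat.cast_sub h.le, sub_div]
  have h := (((factseq15 m μ (by linarith) hm).sub (factseq15 j ν h0 hj)).sub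
    (factseq15 _ (μ - ν) (by linarith) hd)).div_const (Real.log 2)
  rw [← binH15 μ ν h0 h1]
  have e : (μ * Real.log μ - ν * Real.log ν - (μ - ν) * Real.log (μ - ν)) / Real.log 2 =
    (μ * Real.log μ - μ - (ν * Real.log ν - ν) - ((μ - ν) * Real.log (μ - ν) - (μ - ν))) / Real.log 2 := by
    ring
  rw [e]
  refine h.congr' ?_
  filter_upwards [hlt, eventually_gt_atTop 0] with n h hn
  have hn' : (0 : ℝ) < n := by exact_mod_cast hn
  have hl2 : Real.log 2 ≠ 0 := (Real.log_pos (by norm_num)).ne'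
  have hf : ∀ k : ℕ, (k.factorial : ℝ) ≠ 0 := fun k => by exact_mod_cast Nat.factorial_ne_zero k
  rw [Nat.cast_choose ℝ h.le, Real.logb, Real.log_div (hf _) (mul_ne_zero (hf _) (hf _)),
    Real.log_mul (hf _) (hf _), Nat.cast_sub h.le]
  field_simp
  ring

lemma floorseq15 (c : ℝ) (hc : 0 < c) :
    Tendsto (fun n : ℕ => ((⌊c * n⌋₊ : ℕ) : ℝ) / n) atTop (nhds c) :=
  (tendsto_nat_floor_mul_div_atTop hc.le).comp tendsto_natCast_atTop_atTop

lemma Rn_upper15 (τ ε : ℝ) (n : ℕ) : Rn τ ε n ≤ 2 ^ n * 2 ^ n := by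
  unfold Rn
  apply Finset.sup_le
  rintro ⟨A, B⟩ -
  refine (card_filter_le _ _).trans ?_
  rw [card_product]
  have h : ∀ A : Finset (Fin n → Bool), A.card ≤ 2 ^ n := fun A => by
    simpa using card_le_univ A
  exact Nat.mul_le_mul (h A) (h B)

theorem stmt15 (ε α τ : ℝ) (hε0 : 0 < ε) (hε1 : ε < 1)
    (hα0 : 1 - Real.sqrt (1 - ε) ≤ α) (hα1 : α < 1 / 2) (hτ : τ = binH α) :
    liminf (fun n : ℕ => Real.logb 2 ((Rn τ ε n : ℝ) / (Gn ε n : ℝ)) / n) atTop ≥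
      -(1 + binH ε - τ - α * binH (ε / (2 * α)) - (1 - α) * binH (ε / (2 * (1 - α)))) := by
  have hαε : ε / 2 < α := by
    have h1 : Real.sqrt (1 - ε) < 1 - ε / 2 := by
      rw [Real.sqrt_lt' (by linarith)]
      nlinarith
    linarith
  have hα : 0 < α := by linarith
  set k : ℕ → ℕ := fun n => ⌊ε * n⌋₊ with hk
  set w : ℕ → ℕ := fun n => ⌊α * n⌋₊ with hw
  set b : ℕ → ℕ := fun n => k n / 2 with hb
  set a : ℕ → ℕ := fun n => k n - k n / 2 with ha
  have tk : Tendsto (fun n => (k n : ℝ) / n) atTop (nhds ε) := floorseq15 ε hε0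
  have tw : Tendsto (fun n => (w n : ℝ) / n) atTop (nhds α) := floorseq15 α hα
  have hinv : Tendsto (fun n : ℕ => ((n : ℝ))⁻¹) atTop (nhds 0) := tendsto_inv_atTop_nhds_zero_nat
  have tb : Tendsto (fun n => (b n : ℝ) / n) atTop (nhds (ε / 2)) := by
    have hlo := (tk.div_const 2).sub hinv
    rw [sub_zero] at hlo
    refine tendsto_of_tendsto_of_tendsto_of_le_of_le' hlo (tk.div_const 2) ?_ ?_
    · filter_upwards [eventually_gt_atTop 0] with n hn
      have hn' : (0 : ℝ) < n := by exact_mod_cast hn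
      have : (k n : ℝ) ≤ 2 * b n + 2 := by
        have : k n ≤ 2 * b n + 2 := by simp only [hb]; omega
        exact_mod_cast this
      field_simp
      linarith
    · filter_upwards [eventually_gt_atTop 0] with n hn
      have hn' : (0 : ℝ) < n := by exact_mod_cast hn
      have : 2 * (b n : ℝ) ≤ k n := by
        have : 2 * b n ≤ k n := by simp only [hb]; omega
        exact_mod_cast this
      field_simp
      linarith
  have ta : Tendsto (fun n => (a n : ℝ) / n) atTop (nhds (ε / 2)) := by
    have h := tk.sub tb
    have e : ε - ε / 2 = ε / 2 := by ring
    rw [e] at h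
    refine h.congr fun n => ?_
    have : a n = k n - b n := rfl
    rw [this, Nat.cast_sub (by simp only [hb]; omega), sub_div]
  have t1 : Tendsto (fun n : ℕ => ((id n : ℕ) : ℝ) / n) atTop (nhds 1) := by
    refine tendsto_const_nhds.congr' ?_
    filter_upwards [eventually_gt_atTop 0] with n hn
    have hn' : (0 : ℝ) < n := by exact_mod_cast hn
    simp [hn'.ne']
  obtain ⟨hwn, c1⟩ := chooseseq15 id w 1 α hα (by linarith) t1 tw
  obtain ⟨hkn, c2⟩ := chooseseq15 id k 1 ε hε0 hε1 t1 tk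
  obtain ⟨haw, c3⟩ := chooseseq15 w a α (ε / 2) (by linarith) hαε tw ta
  have tnw : Tendsto (fun n => ((n - w n : ℕ) : ℝ) / n) atTop (nhds (1 - α)) := by
    refine (t1.sub tw).congr' ?_
    filter_upwards [hwn] with n h
    rw [Nat.cast_sub (by simpa using h.le), sub_div]; rfl
  obtain ⟨hbw, c4⟩ := chooseseq15 (fun n => n - w n) b (1 - α) (ε / 2) (by linarith) (by linarith) tnw tb
  have hG : ∀ᶠ n in atTop, 0 < Gn ε n := by
    filter_upwards [hkn] with n h
    exact Nat.mul_pos (by positivity) (Nat.choose_pos (by simpa using h.le))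
  have T := ((c1.add (c3.add c4)).sub c2).sub_const 1
  have e : 1 * binH (α / 1) + (α * binH (ε / 2 / α) + (1 - α) * binH (ε / 2 / (1 - α)))
      - 1 * binH (ε / 1) - 1 =
      -(1 + binH ε - τ - α * binH (ε / (2 * α)) - (1 - α) * binH (ε / (2 * (1 - α)))) := by
    rw [hτ, div_div, div_div, div_one, div_one]; ring
  rw [e] at T
  rw [ge_iff_le, ← T.liminf_eq]
  apply liminf_le_liminf
  · filter_upwards [hwn, hkn, haw, hbw, hG, eventually_gt_atTop 0] with n hwn hkn haw hbw hG hn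
    have hn' : (0 : ℝ) < n := by exact_mod_cast hn
    simp only [id] at hwn hkn ⊢
    have hwle : (w n : ℝ) ≤ α * n := Nat.floor_le (by positivity)
    have hR := Rn_lower15 τ ε n (w n) (a n) (b n) (by simp only [ha, hb, hk]; omega) haw.le
      (by rw [hτ]; exact choose_le15 α hα hα1 n _ hwle)
      (by
        rw [hτ]; refine choose_le15 α hα hα1 n _ (le_trans ?_ hwle)
        have : w n - a n + b n ≤ w n := by simp only [ha, hb] at haw ⊢; omega
        exact_mod_cast this)
    have p1 : (0 : ℝ) < n.choose (w n) := by exact_mod_cast Nat.choose_pos hwn.le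
    have p2 : (0 : ℝ) < n.choose (k n) := by exact_mod_cast Nat.choose_pos hkn.le
    have p3 : (0 : ℝ) < (w n).choose (a n) := by exact_mod_cast Nat.choose_pos haw.le
    have p4 : (0 : ℝ) < (n - w n).choose (b n) := by exact_mod_cast Nat.choose_pos hbw.le
    have hR' : (n.choose (w n) : ℝ) * ((w n).choose (a n) * (n - w n).choose (b n)) ≤ Rn τ ε n := by
      exact_mod_cast hR
    have hGe : (Gn ε n : ℝ) = 2 ^ n * n.choose (k n) := by simp [Gn, hk]
    have hRp : (0 : ℝ) < Rn τ ε n := lt_of_lt_of_le (by positivity) hR'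
    have hl := Real.logb_le_logb_of_le (b := 2) (by norm_num) (by positivity) hR'
    rw [Real.logb_mul p1.ne' (by positivity), Real.logb_mul p3.ne' p4.ne'] at hl
    rw [hGe, Real.logb_div hRp.ne' (by positivity), Real.logb_mul (by positivity) p2.ne',
      Real.logb_pow, Real.logb_self_eq_one (by norm_num)]
    rw [← add_div, ← add_div, ← sub_div, le_div_iff₀ hn', sub_mul, div_mul_cancel₀ _ hn'.ne']
    linarith
  · exact T.isBoundedUnder_ge
  · apply IsBoundedUnder.isCoboundedUnder_ge
    refine isBoundedUnder_of_eventually_le (a := 2) ?_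
    filter_upwards [hG, eventually_gt_atTop 0] with n hG hn
    have hn' : (0 : ℝ) < n := by exact_mod_cast hn
    rw [div_le_iff₀ hn']
    rcases Nat.eq_zero_or_pos (Rn τ ε n) with h0 | h0
    · simp [h0]
    have h0' : (0 : ℝ) < Rn τ ε n := by exact_mod_cast h0
    have hG' : (1 : ℝ) ≤ Gn ε n := by exact_mod_cast hG
    have hu : (Rn τ ε n : ℝ) ≤ 2 ^ n * 2 ^ n := by exact_mod_cast Rn_upper15 τ ε n
    have hq : (Rn τ ε n : ℝ) / Gn ε n ≤ 2 ^ n * 2 ^ n := (div_le_self h0'.le hG').trans hu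
    have hl := Real.logb_le_logb_of_le (b := 2) (by norm_num) (by positivity) hq
    rw [Real.logb_mul (by positivity) (by positivity), Real.logb_pow,
      Real.logb_self_eq_one (by norm_num)] at hl
    linarith
end

section
/- Profile of the fixed-distance graph, negative bound: let 0 < ε < 1/2 and 0 < τ, κ < 1 be real numbers with κ < (1 − τ)/(1 − ε). For each n let E_n ⊆ (Fin n → Bool) × (Fin n → Bool) be the set of pairs (x, y) whose Hamming distance is exactly ⌊εn⌋. Then there exists N such that for every n ≥ N, the triple (⌊τn⌋, ⌊τn⌋, ⌊κn⌋) does not belong to the profile of E_n. -/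
lemma hc_neg_pow (r u : ℝ) (hr0 : 0 ≤ r) (hr1 : r ≤ 1) (hu : -1 < u) :
    1 - r * u ≤ (1 + u) ^ (-r) := by
  have h1 := rpow_one_add_le_one_add_mul_self hu.le hr0 hr1
  have hp : 0 < (1 + u) ^ r := Real.rpow_pos_of_pos (by linarith) _
  rw [Real.rpow_neg (by linarith)]
  rw [← one_div, le_div_iff₀ hp]
  by_cases h : 0 ≤ 1 - r * u
  · nlinarith [mul_le_mul_of_nonneg_left h1 h, sq_nonneg (r * u)]
  · nlinarith

lemma hc_G (q : ℝ) (hq0 : 0 ≤ q) (hq1 : q ≤ 1) (t : ℝ) (ht : t ∈ Set.Ico (0:ℝ) 1) :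
    0 ≤ (1 + t) ^ q - (1 - t) ^ q - 2 * q * t := by
  have hd : ∀ x ∈ Set.Ico (0:ℝ) 1, HasDerivAt (fun t : ℝ => (1 + t) ^ q - (1 - t) ^ q - 2 * q * t)
      (q * ((1 + x) ^ (-(1-q)) + (1 + -x) ^ (-(1-q)) - 2)) x := by
    intro x hx
    have h1 : HasDerivAt (fun t : ℝ => (1 + t) ^ q) (1 * q * (1 + x) ^ (q - 1)) x :=
      ((hasDerivAt_id x).const_add 1).rpow_const (Or.inl (by have := hx.1; simp; linarith))
    have h2 : HasDerivAt (fun t : ℝ => (1 - t) ^ q) (-1 * q * (1 - x) ^ (q - 1)) x :=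
      ((hasDerivAt_id x).const_sub 1).rpow_const (Or.inl (by have := hx.2; simp; linarith))
    have h3 : HasDerivAt (fun t : ℝ => 2 * q * t) (2 * q * 1) x := (hasDerivAt_id x).const_mul _
    refine ((h1.sub h2).sub h3).congr_deriv ?_
    rw [neg_sub, ← sub_eq_add_neg]; ring
  have hm : MonotoneOn (fun t : ℝ => (1 + t) ^ q - (1 - t) ^ q - 2 * q * t) (Set.Ico 0 1) := by
    apply monotoneOn_of_deriv_nonneg (convex_Ico 0 1)
    · intro x hx; exact (hd x hx).continuousAt.continuousWithinAt
    · intro x hx; exact (hd x (interior_subset hx)).differentiableAt.differentiableWithinAt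
    · intro x hx
      have hx := interior_subset hx
      rw [(hd x hx).deriv]
      have h1 := hc_neg_pow (1-q) x (by linarith) (by linarith) (by linarith [hx.1])
      have h2 := hc_neg_pow (1-q) (-x) (by linarith) (by linarith) (by linarith [hx.2])
      apply mul_nonneg hq0; linarith
  have := hm (Set.mem_Ico.2 ⟨le_rfl, one_pos⟩) ht ht.1
  simpa using this

lemma hc_F (q : ℝ) (hq0 : 0 ≤ q) (hq1 : q ≤ 1) (t : ℝ) (ht : t ∈ Set.Icc (0:ℝ) 1) :
    2 + (1 + q) * q * t ^ 2 ≤ (1 + t) ^ (1 + q) + (1 - t) ^ (1 + q) := by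
  have hd : ∀ x : ℝ, HasDerivAt
      (fun t : ℝ => (1 + t) ^ (1 + q) + (1 - t) ^ (1 + q) - (1 + q) * q * t ^ 2)
      ((1 + q) * ((1 + x) ^ q - (1 - x) ^ q - 2 * q * x)) x := by
    intro x
    have h1 : HasDerivAt (fun t : ℝ => (1 + t) ^ (1 + q)) (1 * (1 + q) * (1 + x) ^ (1 + q - 1)) x :=
      ((hasDerivAt_id x).const_add 1).rpow_const (Or.inr (by linarith))
    have h2 : HasDerivAt (fun t : ℝ => (1 - t) ^ (1 + q)) (-1 * (1 + q) * (1 - x) ^ (1 + q - 1)) x :=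
      ((hasDerivAt_id x).const_sub 1).rpow_const (Or.inr (by linarith))
    have h3 : HasDerivAt (fun t : ℝ => (1 + q) * q * t ^ 2) ((1 + q) * q * (2 * x)) x := by
      simpa using (hasDerivAt_pow 2 x).const_mul ((1 + q) * q)
    refine ((h1.add h2).sub h3).congr_deriv ?_
    rw [add_sub_cancel_left]; ring
  have hm : MonotoneOn (fun t : ℝ => (1 + t) ^ (1 + q) + (1 - t) ^ (1 + q) - (1 + q) * q * t ^ 2)
      (Set.Icc 0 1) := by
    apply monotoneOn_of_deriv_nonneg (convex_Icc 0 1)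
    · intro x hx; exact (hd x).continuousAt.continuousWithinAt
    · intro x hx; exact (hd x).differentiableAt.differentiableWithinAt
    · intro x hx
      rw [interior_Icc] at hx
      rw [(hd x).deriv]
      exact mul_nonneg (by linarith) (hc_G q hq0 hq1 x ⟨hx.1.le, hx.2⟩)
  have := hm (Set.mem_Icc.2 ⟨le_rfl, zero_le_one⟩) ht ht.1
  norm_num at this
  linarith

lemma hc_point (q s d : ℝ) (hq0 : 0 ≤ q) (hq1 : q ≤ 1) (hd : 0 ≤ d) (hds : d ≤ s) :
    (s ^ 2 + q * d ^ 2) ^ ((1 + q) / 2) ≤ ((s + d) ^ (1 + q) + (s - d) ^ (1 + q)) / 2 := by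
  rcases (hd.trans hds).eq_or_lt with h | h
  · have : d = 0 := by linarith
    subst h; subst this
    have : (1 + q) / 2 ≠ 0 := by positivity
    have : (1 + q) ≠ 0 := by positivity
    simp [*]
  · set t := d / s with ht
    have hdt : d = s * t := by rw [ht]; field_simp
    have t0 : 0 ≤ t := by positivity
    have t1 : t ≤ 1 := by rw [ht, div_le_one h]; exact hds
    have e1 : s ^ 2 + q * d ^ 2 = s ^ 2 * (1 + q * t ^ 2) := by rw [hdt]; ring
    have e2 : s + d = s * (1 + t) := by rw [hdt]; ring
    have e3 : s - d = s * (1 - t) := by rw [hdt]; ring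
    have e4 : (s ^ 2) ^ ((1 + q) / 2) = s ^ (1 + q) := by
      rw [← Real.rpow_natCast, ← Real.rpow_mul h.le]; congr 1; push_cast; ring
    rw [e1, e2, e3, Real.mul_rpow (by positivity) (by positivity),
      Real.mul_rpow h.le (by positivity), Real.mul_rpow h.le (by linarith), e4]
    have h1 : (1 + q * t ^ 2) ^ ((1 + q) / 2) ≤ 1 + (1 + q) / 2 * (q * t ^ 2) :=
      rpow_one_add_le_one_add_mul_self (by nlinarith [mul_nonneg hq0 (sq_nonneg t)])
        (by linarith) (by linarith)
    have h2 := hc_F q hq0 hq1 t ⟨t0, t1⟩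
    have h3 : 0 < s ^ (1 + q) := Real.rpow_pos_of_pos h _
    rw [← mul_add, mul_div_assoc]
    apply mul_le_mul_of_nonneg_left _ h3.le
    linarith

lemma hc_point2 (q a b : ℝ) (hq0 : 0 ≤ q) (hq1 : q ≤ 1) (ha : 0 ≤ a) (hb : 0 ≤ b) :
    √(((a + b) / 2) ^ 2 + q * ((a - b) / 2) ^ 2) ≤
      ((a ^ (1 + q) + b ^ (1 + q)) / 2) ^ (1 / (1 + q)) := by
  wlog hab : b ≤ a generalizing a b
  · have := this b a hb ha (by linarith)
    rw [add_comm b a, add_comm (b ^ _)] at this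
    rwa [show ((a - b) / 2) ^ 2 = ((b - a) / 2) ^ 2 by ring]
  have h := hc_point q ((a + b) / 2) ((a - b) / 2) hq0 hq1 (by linarith) (by linarith)
  rw [show (a + b) / 2 + (a - b) / 2 = a by ring, show (a + b) / 2 - (a - b) / 2 = b by ring] at h
  have h0 : 0 ≤ ((a + b) / 2) ^ 2 + q * ((a - b) / 2) ^ 2 := by positivity
  have h2 := Real.rpow_le_rpow (by positivity) h (z := 1 / (1 + q)) (by positivity)
  rw [← Real.rpow_mul h0] at h2
  rw [Real.sqrt_eq_rpow]
  convert h2 using 2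
  field_simp

lemma hc_two (e a b c d : ℝ) (he0 : 0 ≤ e) (he1 : e ≤ 1 / 2) (ha : 0 ≤ a) (hb : 0 ≤ b)
    (hc : 0 ≤ c) (hd : 0 ≤ d) :
    (1 - e) * (a * c + b * d) + e * (a * d + b * c) ≤
      2 * (((a ^ (2 - 2 * e) + b ^ (2 - 2 * e)) / 2) ^ (1 / (2 - 2 * e)) *
        ((c ^ (2 - 2 * e) + d ^ (2 - 2 * e)) / 2) ^ (1 / (2 - 2 * e))) := by
  have h1 := hc_point2 (1 - 2 * e) a b (by linarith) (by linarith) ha hb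
  have h2 := hc_point2 (1 - 2 * e) c d (by linarith) (by linarith) hc hd
  rw [show 1 + (1 - 2 * e) = 2 - 2 * e by ring] at h1 h2
  have h3 := mul_le_mul h1 h2 (Real.sqrt_nonneg _) (by positivity)
  refine le_trans ?_ (mul_le_mul_of_nonneg_left h3 zero_le_two)
  have hq : 0 ≤ 1 - 2 * e := by linarith
  rw [← Real.sqrt_mul (by positivity)]
  have : (a + b) / 2 * ((c + d) / 2) + (1 - 2 * e) * ((a - b) / 2 * ((c - d) / 2)) ≤
    √((((a + b) / 2) ^ 2 + (1 - 2 * e) * ((a - b) / 2) ^ 2) *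
      (((c + d) / 2) ^ 2 + (1 - 2 * e) * ((c - d) / 2) ^ 2)) := by
    apply Real.le_sqrt_of_sq_le
    nlinarith [mul_nonneg hq (sq_nonneg ((a + b) / 2 * ((c - d) / 2) - (a - b) / 2 * ((c + d) / 2)))]
  linarith

lemma hc_sum_cons {n : ℕ} (F : (Fin (n + 1) → Bool) → ℝ) :
    ∑ x, F x = ∑ x : Fin n → Bool, F (Fin.cons false x) + ∑ x : Fin n → Bool, F (Fin.cons true x) := by
  rw [← (Fin.consEquiv (fun _ : Fin (n+1) => Bool)).sum_comp, Fintype.sum_prod_type]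
  simp [Fin.consEquiv, add_comm]

lemma hc_main (e : ℝ) (he0 : 0 ≤ e) (he1 : e ≤ 1 / 2) (n : ℕ) :
    ∀ f g : (Fin n → Bool) → ℝ, (∀ x, 0 ≤ f x) → (∀ x, 0 ≤ g x) →
    ∑ x, ∑ y, f x * g y * ∏ i, (if x i = y i then 1 - e else e) ≤
      2 ^ n * (((∑ x, f x ^ (2 - 2 * e)) / 2 ^ n) ^ (1 / (2 - 2 * e)) *
        ((∑ x, g x ^ (2 - 2 * e)) / 2 ^ n) ^ (1 / (2 - 2 * e))) := by
  have hp : 0 < 2 - 2 * e := by linarith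
  induction n with
  | zero =>
    intro f g hf hg
    simp only [Finset.univ_unique, Finset.sum_singleton, Finset.univ_eq_empty, Finset.prod_empty,
      pow_zero, div_one, one_mul, mul_one]
    rw [← Real.rpow_mul (hf _), ← Real.rpow_mul (hg _), mul_one_div_cancel hp.ne']
    simp
  | succ n ih =>
    intro f g hf hg
    set p := 2 - 2 * e with hpdef
    have key : ∀ u v : Bool, ∑ x : Fin n → Bool, ∑ y : Fin n → Bool,
        f (Fin.cons u x) * g (Fin.cons v y) * ∏ i, (if x i = y i then 1 - e else e) ≤
      2 ^ n * (((∑ x : Fin n → Bool, f (Fin.cons u x) ^ p) / 2 ^ n) ^ (1 / p) *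
        ((∑ x : Fin n → Bool, g (Fin.cons v x) ^ p) / 2 ^ n) ^ (1 / p)) := fun u v =>
      ih (fun x => f (Fin.cons u x)) (fun x => g (Fin.cons v x)) (fun _ => hf _) (fun _ => hg _)
    have exp : ∑ x, ∑ y, f x * g y * ∏ i, (if x i = y i then 1 - e else e) =
       (1 - e) * (∑ x : Fin n → Bool, ∑ y : Fin n → Bool,
        f (Fin.cons false x) * g (Fin.cons false y) * ∏ i, (if x i = y i then 1 - e else e))
       + (1 - e) * (∑ x : Fin n → Bool, ∑ y : Fin n → Bool,
        f (Fin.cons true x) * g (Fin.cons true y) * ∏ i, (if x i = y i then 1 - e else e))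
       + e * (∑ x : Fin n → Bool, ∑ y : Fin n → Bool,
        f (Fin.cons false x) * g (Fin.cons true y) * ∏ i, (if x i = y i then 1 - e else e))
       + e * (∑ x : Fin n → Bool, ∑ y : Fin n → Bool,
        f (Fin.cons true x) * g (Fin.cons false y) * ∏ i, (if x i = y i then 1 - e else e)) := by
      rw [hc_sum_cons]
      simp only [hc_sum_cons, Fin.prod_univ_succ, Fin.cons_zero, Fin.cons_succ, Finset.mul_sum,
        Finset.sum_add_distrib]
      simp only [if_true, Bool.false_eq_true, Bool.true_eq_false, if_false, mul_left_comm]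
      ring
    rw [exp, hc_sum_cons (fun x => f x ^ p), hc_sum_cons (fun x => g x ^ p)]
    have nn : ∀ (F : (Fin (n+1) → Bool) → ℝ) (u : Bool), (∀ x, 0 ≤ F x) →
        0 ≤ (∑ x : Fin n → Bool, F (Fin.cons u x) ^ p) / 2 ^ n := fun F u h =>
      div_nonneg (Finset.sum_nonneg fun x _ => Real.rpow_nonneg (h _) _) (by positivity)
    have h2 := hc_two e _ _ _ _ he0 he1 (Real.rpow_nonneg (nn f false hf) (1/p))
      (Real.rpow_nonneg (nn f true hf) (1/p))
      (Real.rpow_nonneg (nn g false hg) (1/p))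
      (Real.rpow_nonneg (nn g true hg) (1/p))
    rw [← hpdef, ← Real.rpow_mul (nn f false hf), ← Real.rpow_mul (nn f true hf),
      ← Real.rpow_mul (nn g false hg), ← Real.rpow_mul (nn g true hg),
      one_div_mul_cancel hp.ne', Real.rpow_one, Real.rpow_one, Real.rpow_one, Real.rpow_one,
      ← add_div, ← add_div, div_div, div_div, ← pow_succ] at h2
    have h1e : 0 ≤ 1 - e := by linarith
    have k1 := mul_le_mul_of_nonneg_left (key false false) h1e
    have k2 := mul_le_mul_of_nonneg_left (key true true) h1e
    have k3 := mul_le_mul_of_nonneg_left (key false true) he0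
    have k4 := mul_le_mul_of_nonneg_left (key true false) he0
    have h5 := mul_le_mul_of_nonneg_left h2 (show (0:ℝ) ≤ 2 ^ n by positivity)
    refine le_trans (add_le_add (add_le_add (add_le_add k1 k2) k3) k4) (le_trans (le_of_eq ?_)
      (le_trans h5 (le_of_eq ?_)))
    · ring
    · rw [pow_succ]; ring

lemma hc_mode (n k : ℕ) (hk : k < n) :
    (n : ℝ) ^ n ≤ (n + 1) * (n.choose k * k ^ k * (n - k : ℕ) ^ (n - k)) := by
  have step : ∀ j, j < n → n.choose (j+1) * k ^ (j+1) * (n-k) ^ (n-(j+1)) * ((j+1) * (n-k)) =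
      n.choose j * k ^ j * (n-k) ^ (n-j) * ((n-j) * k) := by
    intro j hj
    have h := Nat.choose_succ_right_eq n j
    rw [show n - j = (n - (j+1)) + 1 by omega] at *
    calc _ = (n.choose (j+1) * (j+1)) * k ^ (j+1) * ((n-k) ^ (n-(j+1)) * (n-k)) := by ring
      _ = _ := by rw [h]; ring
  have up : ∀ i, i ≤ k → n.choose (k-i) * k ^ (k-i) * (n-k) ^ (n-(k-i)) ≤
      n.choose k * k ^ k * (n-k) ^ (n-k) := by
    intro i
    induction i with
    | zero => intro _; simp
    | succ i ih =>
      intro hi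
      refine le_trans ?_ (ih (by omega))
      have s := step (k-(i+1)) (by omega)
      rw [show k - (i+1) + 1 = k - i by omega] at s
      have hle : (k-i) * (n-k) ≤ (n-(k-(i+1))) * k := by
        rw [mul_comm]; exact Nat.mul_le_mul (by omega) (by omega)
      have hpos : 0 < (k-i) * (n-k) := Nat.mul_pos (by omega) (by omega)
      refine Nat.le_of_mul_le_mul_right ?_ hpos
      have e : k - (i+1) + 1 = k - i := by omega
      rw [s.trans rfl]
      exact Nat.mul_le_mul_left _ hle
  have down : ∀ i, k + i ≤ n → n.choose (k+i) * k ^ (k+i) * (n-k) ^ (n-(k+i)) ≤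
      n.choose k * k ^ k * (n-k) ^ (n-k) := by
    intro i
    induction i with
    | zero => intro _; simp
    | succ i ih =>
      intro hi
      refine le_trans ?_ (ih (by omega))
      have s := step (k+i) (by omega)
      have hle : (n-(k+i)) * k ≤ (k+i+1) * (n-k) := by
        rw [mul_comm]; exact Nat.mul_le_mul (by omega) (by omega)
      have hpos : 0 < (k+i+1) * (n-k) := Nat.mul_pos (by omega) (by omega)
      refine Nat.le_of_mul_le_mul_right ?_ hpos
      rw [← add_assoc, s]
      exact Nat.mul_le_mul_left _ hle
  have hN : n ^ n ≤ (n + 1) * (n.choose k * k ^ k * (n - k) ^ (n - k)) := by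
    have hb := add_pow k (n-k) n
    rw [show k + (n-k) = n by omega] at hb
    calc n ^ n = _ := hb
      _ ≤ ∑ j ∈ Finset.range (n+1), n.choose k * k ^ k * (n - k) ^ (n - k) := by
        apply Finset.sum_le_sum
        intro j hj
        have hj : j ≤ n := by simpa [Nat.lt_succ_iff] using hj
        rw [Nat.cast_id, show k ^ j * (n-k) ^ (n-j) * n.choose j = n.choose j * k ^ j * (n-k) ^ (n-j) by ring]
        rcases le_total j k with h | h
        · have := up (k-j) (by omega)
          rwa [show k - (k-j) = j by omega] at this
        · have := down (j-k) (by omega)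
          rwa [show k + (j-k) = j by omega] at this
      _ = _ := by simp
  exact_mod_cast hN

lemma hc_card (n k : ℕ) (x : Fin n → Bool) :
    (Finset.univ.filter (fun y : Fin n → Bool => hammingDist x y = k)).card = n.choose k := by
  have : n.choose k = (Finset.powersetCard k (Finset.univ : Finset (Fin n))).card := by simp
  rw [this]
  apply Finset.card_nbij' (fun y => Finset.univ.filter (fun i => x i ≠ y i))
    (fun S i => if i ∈ S then !(x i) else x i)
  · intro y hy
    simp only [Finset.coe_filter, Finset.mem_univ, true_and, Set.mem_ofPred_eq] at hy
    simp only [Finset.mem_coe, Finset.mem_powersetCard, Finset.subset_univ, true_and]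
    exact hy
  · intro S hS
    simp only [Finset.mem_coe, Finset.mem_powersetCard, Finset.subset_univ, true_and] at hS
    simp only [Finset.coe_filter, Finset.mem_univ, true_and, Set.mem_ofPred_eq, hammingDist]
    rw [← hS]; congr 1; ext i
    by_cases h : i ∈ S <;> simp [h]
  · intro y _
    ext i
    by_cases h : x i = y i
    · simp [h]
    · cases hx : x i <;> cases hy : y i <;> simp_all
  · intro S _
    ext i
    by_cases h : i ∈ S <;> simp [h]

lemma hc_weight (e : ℝ) (n k : ℕ) (x y : Fin n → Bool) (h : hammingDist x y = k) :
    ∏ i, (if x i = y i then 1 - e else e) = e ^ k * (1 - e) ^ (n - k) := by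
  rw [Finset.prod_ite, Finset.prod_const, Finset.prod_const]
  have h1 : (Finset.univ.filter (fun i => ¬ x i = y i)).card = k := h
  have h2 := Finset.card_filter_add_card_filter_not (s := (Finset.univ : Finset (Fin n))) (fun i => x i = y i)
  rw [h1, Finset.card_univ, Fintype.card_fin] at h2
  rw [h1, show (Finset.univ.filter (fun i => x i = y i)).card = n - k by omega, mul_comm]

lemma hc_count (n k α γ : ℕ) (hn : 0 < n) (hk : 2 * k ≤ n)
    (h : InProfile {p : (Fin n → Bool) × (Fin n → Bool) | hammingDist p.1 p.2 = k} α α γ) :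
    1 ≤ ((n : ℝ) + 1) * (2 ^ γ * (((2:ℝ) ^ α / 2 ^ n) ^ (1 / (1 - (k:ℝ) / n)))) := by
  obtain ⟨f, g, hfg⟩ := h
  have hnR : (0:ℝ) < n := by exact_mod_cast hn
  set e : ℝ := (k:ℝ) / n with he
  have he0 : 0 ≤ e := by positivity
  have he1 : e ≤ 1 / 2 := by
    rw [he, div_le_div_iff₀ hnR two_pos]; exact_mod_cast (by omega : k * 2 ≤ 1 * n)
  have hp : 0 < 2 - 2 * e := by linarith
  let A : Fin (2 ^ γ) → Finset (Fin n → Bool) := fun c => Finset.univ.image (fun a => f (a, c))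
  let B : Fin (2 ^ γ) → Finset (Fin n → Bool) := fun c => Finset.univ.image (fun a => g (a, c))
  have hA : ∀ c, (A c).card ≤ 2 ^ α := fun c => by
    simpa using (Finset.card_image_le (s := Finset.univ) (f := fun a => f (a, c)))
  have hB : ∀ c, (B c).card ≤ 2 ^ α := fun c => by
    simpa using (Finset.card_image_le (s := Finset.univ) (f := fun a => g (a, c)))
  let I : Finset (Fin n → Bool) → (Fin n → Bool) → ℝ := fun S x => if x ∈ S then 1 else 0
  have hI : ∀ S x, 0 ≤ I S x := fun S x => by dsimp [I]; split_ifs <;> norm_num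
  have hIp : ∀ S, ∑ x, I S x ^ (2 - 2 * e) = (S.card : ℝ) := fun S => by
    have : ∀ x, I S x ^ (2 - 2 * e) = if x ∈ S then 1 else 0 := fun x => by
      dsimp [I]; split_ifs
      · simp
      · exact Real.zero_rpow hp.ne'
    simp [this]
  let w : (Fin n → Bool) → (Fin n → Bool) → ℝ := fun x y => ∏ i, (if x i = y i then 1 - e else e)
  have hw : ∀ x y, 0 ≤ w x y := fun x y => Finset.prod_nonneg fun i _ => by
    split_ifs <;> linarith
  have hlow : ∑ x : Fin n → Bool, ∑ y : Fin n → Bool, (if hammingDist x y = k then w x y else 0) =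
      2 ^ n * (n.choose k * (e ^ k * (1 - e) ^ (n - k))) := by
    have : ∀ x : Fin n → Bool, ∑ y : Fin n → Bool, (if hammingDist x y = k then w x y else 0) =
        n.choose k * (e ^ k * (1 - e) ^ (n - k)) := fun x => by
      rw [← Finset.sum_filter, Finset.sum_congr rfl (g := fun _ => e ^ k * (1 - e) ^ (n - k)),
        Finset.sum_const, hc_card, nsmul_eq_mul]
      intro y hy
      exact hc_weight e n k x y (Finset.mem_filter.1 hy).2
    simp [this]
  have hup : ∑ x : Fin n → Bool, ∑ y : Fin n → Bool, (if hammingDist x y = k then w x y else 0) ≤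
      ∑ c, ∑ x, ∑ y, I (A c) x * I (B c) y * w x y := by
    rw [Finset.sum_comm (s := (Finset.univ : Finset (Fin (2 ^ γ))))]
    refine Finset.sum_le_sum fun x _ => ?_
    rw [Finset.sum_comm (s := (Finset.univ : Finset (Fin (2 ^ γ))))]
    refine Finset.sum_le_sum fun y _ => ?_
    have nn : ∀ c, 0 ≤ I (A c) x * I (B c) y * w x y := fun c =>
      mul_nonneg (mul_nonneg (hI _ _) (hI _ _)) (hw _ _)
    split_ifs with hd
    · obtain ⟨a, b, c, h1, h2⟩ := hfg (x, y) hd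
      have e1 : I (A c) x = 1 := if_pos (Finset.mem_image.2 ⟨a, Finset.mem_univ _, h1⟩)
      have e2 : I (B c) y = 1 := if_pos (Finset.mem_image.2 ⟨b, Finset.mem_univ _, h2⟩)
      have := Finset.single_le_sum (f := fun c => I (A c) x * I (B c) y * w x y)
        (fun c _ => nn c) (Finset.mem_univ c)
      simpa [e1, e2] using this
    · exact Finset.sum_nonneg fun c _ => nn c
  have hc : ∀ c, ∑ x, ∑ y, I (A c) x * I (B c) y * w x y ≤
      2 ^ n * ((2:ℝ) ^ α / 2 ^ n) ^ (1 / (1 - e)) := fun c => by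
    refine (hc_main e he0 he1 n (I (A c)) (I (B c)) (hI _) (hI _)).trans ?_
    rw [hIp, hIp]
    have hb : ∀ S : Finset (Fin n → Bool), S.card ≤ 2 ^ α →
        ((S.card : ℝ) / 2 ^ n) ^ (1 / (2 - 2 * e)) ≤ ((2:ℝ) ^ α / 2 ^ n) ^ (1 / (2 - 2 * e)) :=
      fun S hS => by
        have : (S.card : ℝ) ≤ 2 ^ α := by exact_mod_cast hS
        apply Real.rpow_le_rpow (by positivity) _ (by positivity)
        gcongr
    refine mul_le_mul_of_nonneg_left ((mul_le_mul (hb _ (hA c)) (hb _ (hB c)) (by positivity)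
      (by positivity)).trans (le_of_eq ?_)) (by positivity)
    rw [← Real.rpow_add (by positivity)]
    congr 1
    have : 1 - e ≠ 0 := by linarith
    rw [show 2 - 2 * e = 2 * (1 - e) by ring]
    field_simp
    norm_num
  have hfin := hlow.symm.le.trans (hup.trans (Finset.sum_le_sum fun c _ => hc c))
  rw [Finset.sum_const, Finset.card_univ, Fintype.card_fin, nsmul_eq_mul,
    mul_left_comm (((2 ^ γ : ℕ) : ℝ))] at hfin
  have hfin := le_of_mul_le_mul_left hfin (by positivity)
  push_cast at hfin
  refine le_trans ?_ (mul_le_mul_of_nonneg_left hfin (by positivity))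
  have hm := hc_mode n k (by omega)
  have e1 : 1 - e = ((n - k : ℕ) : ℝ) / n := by
    rw [Nat.cast_sub (by omega), he]; field_simp
  have e2 : (n:ℝ) ^ n = n ^ k * n ^ (n - k) := by rw [← pow_add]; congr 1; omega
  rw [e1, he, div_pow, div_pow, div_mul_div_comm, ← e2, ← mul_div_assoc, ← mul_div_assoc,
    one_le_div (by positivity)]
  exact hm.trans (le_of_eq (by ring))

theorem stmt16 (ε τ κ : ℝ) (hε0 : 0 < ε) (hε1 : ε < 1 / 2)
    (hτ0 : 0 < τ) (hτ1 : τ < 1) (hκ0 : 0 < κ) (hκ1 : κ < 1)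
    (hκ : κ < (1 - τ) / (1 - ε)) :
    ∃ N : ℕ, ∀ n ≥ N,
      ¬ InProfile
        {p : (Fin n → Bool) × (Fin n → Bool) | hammingDist p.1 p.2 = ⌊ε * n⌋₊}
        ⌊τ * n⌋₊ ⌊τ * n⌋₊ ⌊κ * n⌋₊ := by
  have h1 : Filter.Tendsto (fun n : ℕ => (⌊ε * n⌋₊ : ℝ) / n) Filter.atTop (nhds ε) :=
    (tendsto_nat_floor_mul_div_atTop hε0.le).comp tendsto_natCast_atTop_atTop
  have h2 : Filter.Tendsto (fun n : ℕ => (1 - τ) * (1 / (1 - (⌊ε * n⌋₊ : ℝ) / n)))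
      Filter.atTop (nhds ((1 - τ) * (1 / (1 - ε)))) :=
    (tendsto_const_nhds.div (tendsto_const_nhds.sub h1) (by linarith)).const_mul _
  obtain ⟨l, hl1, hl2⟩ := exists_between hκ
  rw [← mul_one_div] at hl2
  have h3 := h2.eventually (lt_mem_nhds hl2)
  have hδ : 1 < (2:ℝ) ^ (l - κ) := Real.one_lt_rpow one_lt_two (by linarith)
  have h4 : ∀ᶠ n : ℕ in Filter.atTop, ((n:ℝ) + 1) < ((2:ℝ) ^ (l - κ)) ^ n := by
    have t1 := tendsto_pow_const_div_const_pow_of_one_lt 1 hδ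
    have t0 := tendsto_pow_const_div_const_pow_of_one_lt 0 hδ
    have t := t1.add t0
    rw [add_zero] at t
    filter_upwards [t.eventually (gt_mem_nhds one_pos)] with n hn
    rw [← add_div, div_lt_one (by positivity)] at hn
    simpa using hn
  obtain ⟨N, hN⟩ := Filter.eventually_atTop.1 ((h3.and h4).and (Filter.eventually_gt_atTop 0))
  refine ⟨N, fun n hn hP => ?_⟩
  obtain ⟨⟨h3, h4⟩, hn0⟩ := hN n hn
  have hnR : (0:ℝ) < n := by exact_mod_cast hn0
  have hk : 2 * ⌊ε * n⌋₊ ≤ n := by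
    have : (⌊ε * n⌋₊ : ℝ) ≤ ε * n := Nat.floor_le (by positivity)
    have : (2:ℝ) * ⌊ε * n⌋₊ ≤ n := by nlinarith
    exact_mod_cast this
  have hc := hc_count n _ _ _ hn0 hk hP
  set s := 1 / (1 - (⌊ε * n⌋₊ : ℝ) / n) with hs
  have hs0 : 0 ≤ s := by
    have : 0 < (1 - τ) * s := by linarith
    exact (pos_of_mul_pos_right this (by linarith)).le
  have b1 : (2:ℝ) ^ ⌊κ * n⌋₊ ≤ 2 ^ (κ * n) := by
    rw [← Real.rpow_natCast]
    exact Real.rpow_le_rpow_of_exponent_le one_le_two (Nat.floor_le (by positivity))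
  have b2 : ((2:ℝ) ^ ⌊τ * n⌋₊ / 2 ^ n) ^ s ≤ 2 ^ (-(l * n)) := by
    rw [← Real.rpow_natCast, ← Real.rpow_natCast, ← Real.rpow_sub two_pos,
      ← Real.rpow_mul two_pos.le]
    apply Real.rpow_le_rpow_of_exponent_le one_le_two
    have : (⌊τ * n⌋₊ : ℝ) ≤ τ * n := Nat.floor_le (by positivity)
    have := mul_le_mul_of_nonneg_right this hs0
    have := mul_lt_mul_of_pos_right h3 hnR
    nlinarith
  have b3 : ((2:ℝ) ^ (l - κ)) ^ n = 2 ^ ((l - κ) * n) := by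
    rw [Real.rpow_mul two_pos.le, Real.rpow_natCast]
  have b4 := mul_le_mul b1 b2 (by positivity) (by positivity)
  rw [← Real.rpow_add two_pos, show κ * n + -(l * n) = -((l - κ) * n) by ring,
    Real.rpow_neg two_pos.le, ← b3] at b4
  have b5 := hc.trans (mul_le_mul_of_nonneg_left b4 (by positivity))
  rw [← div_eq_mul_inv, one_le_div (by positivity)] at b5
  linarith
end

section
/- Chernoff inequality for negatively correlated variables: let Ω be a finite type equipped with a probability mass function P, and let X₁, …, X_n : Ω → {0, 1} be random variables that are negatively correlated, i.e. for every nonempty subset S ⊆ {1, …, n}, P(∀ i ∈ S, X_i = 1) ≤ Π_{i ∈ S} P(X_i = 1). Let μ = E[X₁ + ⋯ + X_n] and let δ > 0. Then P(X₁ + ⋯ + X_n ≥ (1 + δ)·μ) ≤ (exp(δ) / (1 + δ)^(1 + δ))^μ. -/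
open Finset

open scoped Classical in
/-- Chernoff inequality for negatively correlated 0/1-valued random variables. -/
theorem stmt18 {Ω : Type*} [Fintype Ω] (P : Ω → ℝ)
    (hP0 : ∀ ω, 0 ≤ P ω) (hP1 : ∑ ω, P ω = 1)
    (n : ℕ) (Xv : Fin n → Ω → ℝ)
    (h01 : ∀ i ω, Xv i ω = 0 ∨ Xv i ω = 1)
    (hneg : ∀ S : Finset (Fin n), S.Nonempty →
      (∑ ω ∈ Finset.univ.filter (fun ω => ∀ i ∈ S, Xv i ω = 1), P ω) ≤
        ∏ i ∈ S, ∑ ω ∈ Finset.univ.filter (fun ω => Xv i ω = 1), P ω)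
    (μ : ℝ) (hμ : μ = ∑ ω, P ω * ∑ i, Xv i ω) (δ : ℝ) (hδ : 0 < δ) :
    (∑ ω ∈ Finset.univ.filter (fun ω => (1 + δ) * μ ≤ ∑ i, Xv i ω), P ω) ≤
      (Real.exp δ / (1 + δ) ^ (1 + δ)) ^ μ := by
  have hd : (0:ℝ) < 1 + δ := by linarith
  set p : Fin n → ℝ := fun i => ∑ ω ∈ Finset.univ.filter (fun ω => Xv i ω = 1), P ω with hp
  have hp0 : ∀ i, 0 ≤ p i := fun i => Finset.sum_nonneg (fun ω _ => hP0 ω)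
  have hμp : μ = ∑ i, p i := by
    rw [hμ]
    simp only [Finset.mul_sum]
    rw [Finset.sum_comm]
    refine Finset.sum_congr rfl fun i _ => ?_
    simp only [hp, Finset.sum_filter]
    refine Finset.sum_congr rfl fun ω _ => ?_
    rcases h01 i ω with h | h <;> simp [h]
  have hprod : ∀ ω, (1 + δ) ^ (∑ i, Xv i ω) =
      ∑ S ∈ (Finset.univ : Finset (Fin n)).powerset, ∏ i ∈ S, (δ * Xv i ω) := by
    intro ω
    rw [Real.rpow_sum_of_pos hd, ← Finset.prod_one_add]
    refine Finset.prod_congr rfl fun i _ => ?_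
    rcases h01 i ω with h | h <;> simp [h]
  have hmom : ∑ ω, P ω * (1 + δ) ^ (∑ i, Xv i ω) ≤ Real.exp (δ * μ) := by
    calc ∑ ω, P ω * (1 + δ) ^ (∑ i, Xv i ω)
        = ∑ S ∈ (Finset.univ : Finset (Fin n)).powerset,
            ∑ ω, P ω * ∏ i ∈ S, (δ * Xv i ω) := by
          simp only [hprod, Finset.mul_sum]
          rw [Finset.sum_comm]
      _ ≤ ∑ S ∈ (Finset.univ : Finset (Fin n)).powerset, ∏ i ∈ S, (δ * p i) := by
          refine Finset.sum_le_sum fun S _ => ?_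
          rcases S.eq_empty_or_nonempty with rfl | hS
          · simp [hP1]
          · have e : ∑ ω, P ω * ∏ i ∈ S, (δ * Xv i ω) = δ ^ S.card *
                ∑ ω ∈ Finset.univ.filter (fun ω => ∀ i ∈ S, Xv i ω = 1), P ω := by
              rw [Finset.sum_filter, Finset.mul_sum]
              refine Finset.sum_congr rfl fun ω _ => ?_
              rw [Finset.prod_mul_distrib, Finset.prod_const]
              by_cases h : ∀ i ∈ S, Xv i ω = 1
              · rw [if_pos h, Finset.prod_eq_one h]; ring
              · rw [if_neg h]
                push Not at h
                obtain ⟨i, hi, hne⟩ := h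
                rw [Finset.prod_eq_zero hi ((h01 i ω).resolve_right hne)]; ring
            rw [e, Finset.prod_mul_distrib, Finset.prod_const]
            exact mul_le_mul_of_nonneg_left (hneg S hS) (by positivity)
      _ = ∏ i, (1 + δ * p i) := by rw [← Finset.prod_one_add]
      _ ≤ ∏ i, Real.exp (δ * p i) := by
          refine Finset.prod_le_prod (fun i _ => ?_) (fun i _ => ?_)
          · have := mul_nonneg hδ.le (hp0 i); linarith
          · have := Real.add_one_le_exp (δ * p i); linarith
      _ = Real.exp (δ * μ) := by rw [← Real.exp_sum, hμp, Finset.mul_sum]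
  have hmark : (∑ ω ∈ Finset.univ.filter (fun ω => (1 + δ) * μ ≤ ∑ i, Xv i ω), P ω)
      * (1 + δ) ^ ((1 + δ) * μ) ≤ ∑ ω, P ω * (1 + δ) ^ (∑ i, Xv i ω) := by
    rw [Finset.sum_mul, Finset.sum_filter]
    refine Finset.sum_le_sum fun ω _ => ?_
    split_ifs with h
    · exact mul_le_mul_of_nonneg_left
        (Real.rpow_le_rpow_of_exponent_le (by linarith) h) (hP0 ω)
    · exact mul_nonneg (hP0 ω) (Real.rpow_nonneg hd.le _)
  rw [Real.div_rpow (Real.exp_pos _).le (Real.rpow_nonneg hd.le _), ← Real.exp_mul,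
    ← Real.rpow_mul hd.le, le_div_iff₀ (Real.rpow_pos_of_pos hd _)]
  exact hmark.trans hmom
end

section
/- Random matrices have no dense rectangles: let τ and κ be positive real numbers with κ + τ < 1.5 and κ + 2τ < 2. Then there exists ε > 0 such that, as n → ∞, the proportion of subsets S ⊆ Fin (2^n) × Fin (2^n) of cardinality exactly ⌊(2 : ℝ)^(1.5·n)⌋ (among all subsets of that cardinality) for which there exist A, B ⊆ Fin (2^n) with |A| ≤ ⌊(2 : ℝ)^(τn)⌋, |B| ≤ ⌊(2 : ℝ)^(τn)⌋ and |S ∩ (A × B)| ≥ (2 : ℝ)^((1.5 − κ − ε)·n) tends to 0. -/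
open Finset Filter

open scoped Classical in
/-- The set of `2^n × 2^n` 0/1-matrices (identified with subsets of
`Fin (2^n) × Fin (2^n)`) with exactly `⌊2^(1.5 n)⌋` ones. -/
noncomputable def allMatrices (n : ℕ) : Finset (Finset (Fin (2 ^ n) × Fin (2 ^ n))) :=
  Finset.univ.powerset.filter fun S => S.card = ⌊(2 : ℝ) ^ (1.5 * (n : ℝ))⌋₊

open scoped Classical in
/-- `S` has a `⌊2^(τ n)⌋ × ⌊2^(τ n)⌋` combinatorial rectangle containing at least
`2^((1.5 - κ - ε) n)` of its ones. -/
def HasDenseRectangle (τ κ ε : ℝ) (n : ℕ) (S : Finset (Fin (2 ^ n) × Fin (2 ^ n))) : Prop :=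
  ∃ A B : Finset (Fin (2 ^ n)),
    A.card ≤ ⌊(2 : ℝ) ^ (τ * (n : ℝ))⌋₊ ∧ B.card ≤ ⌊(2 : ℝ) ^ (τ * (n : ℝ))⌋₊ ∧
    (2 : ℝ) ^ ((1.5 - κ - ε) * (n : ℝ)) ≤
      ((S.filter fun p => p.1 ∈ A ∧ p.2 ∈ B).card : ℝ)

lemma aux_desc (m M : ℕ) (h : m ≤ M) (k : ℕ) :
    m.descFactorial k * M ^ k ≤ M.descFactorial k * m ^ k := by
  induction k with
  | zero => simp
  | succ k ih =>
    rw [Nat.descFactorial_succ, Nat.descFactorial_succ, pow_succ, pow_succ]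
    have h3 : (m - k) * M ≤ (M - k) * m := by
      rw [Nat.sub_mul, Nat.sub_mul, Nat.mul_comm m M]
      have := Nat.mul_le_mul_left k h
      omega
    calc (m - k) * m.descFactorial k * (M ^ k * M)
        = ((m - k) * M) * (m.descFactorial k * M ^ k) := by ring
      _ ≤ ((M - k) * m) * (M.descFactorial k * m ^ k) := Nat.mul_le_mul h3 ih
      _ = _ := by ring

lemma aux_choose (m M : ℕ) (h : m ≤ M) (k : ℕ) :
    m.choose k * M ^ k ≤ M.choose k * m ^ k := by
  have := aux_desc m M h k
  rw [Nat.descFactorial_eq_factorial_mul_choose, Nat.descFactorial_eq_factorial_mul_choose,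
    mul_assoc, mul_assoc] at this
  exact Nat.le_of_mul_le_mul_left this (Nat.factorial_pos k)

lemma aux_choose2 (m M k : ℕ) (h : m ≤ M) (hk : k ≤ m) :
    (M - k).choose (m - k) * M ^ k ≤ m ^ k * M.choose m := by
  have h1 := Nat.choose_mul (n := M) (k := m) hk
  have h2 := aux_choose m M h k
  have hp : 0 < M.choose k := Nat.choose_pos (hk.trans h)
  refine Nat.le_of_mul_le_mul_left ?_ hp
  calc M.choose k * ((M - k).choose (m - k) * M ^ k)
      = (M.choose k * (M - k).choose (m - k)) * M ^ k := by ring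
    _ = M.choose m * (m.choose k * M ^ k) := by rw [← h1]; ring
    _ ≤ M.choose m * (M.choose k * m ^ k) := Nat.mul_le_mul_left _ h2
    _ = _ := by ring

lemma aux_super {α : Type*} [Fintype α] [DecidableEq α] (T : Finset α) (m : ℕ) :
    #{S ∈ powersetCard m (univ : Finset α) | T ⊆ S} ≤
      (Fintype.card α - #T).choose (m - #T) := by
  have : (Fintype.card α - #T).choose (m - #T) = #(powersetCard (m - #T) (univ \ T)) := by
    rw [card_powersetCard, card_sdiff_of_subset (subset_univ _), card_univ]
  rw [this]
  apply card_le_card_of_injOn (fun S => S \ T)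
  · intro S hS
    simp only [coe_filter, mem_powersetCard, Set.mem_ofPred_eq] at hS
    simp only [mem_coe, mem_powersetCard]
    refine ⟨sdiff_subset_sdiff (subset_univ _) le_rfl, ?_⟩
    rw [card_sdiff_of_subset hS.2, hS.1.2]
  · intro S hS S' hS' h
    simp only [coe_filter, mem_powersetCard, Set.mem_ofPred_eq] at hS hS'
    simp only at h
    rw [← sdiff_union_of_subset hS.2, h, sdiff_union_of_subset hS'.2]

lemma aux_rect {α : Type*} [Fintype α] [DecidableEq α] (R : Finset α) (m k : ℕ)
    (hm : m ≤ Fintype.card α) :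
    #{S ∈ powersetCard m (univ : Finset α) | k ≤ #(S ∩ R)} * (Fintype.card α) ^ k ≤
      (#R).choose k * m ^ k * (Fintype.card α).choose m := by
  by_cases hk : k ≤ m
  · have h1 : #{S ∈ powersetCard m (univ : Finset α) | k ≤ #(S ∩ R)} ≤
        (#R).choose k * (Fintype.card α - k).choose (m - k) := by
      calc _ ≤ #((powersetCard k R).biUnion
              fun T => {S ∈ powersetCard m (univ : Finset α) | T ⊆ S}) := by
            apply card_le_card
            intro S hS
            rw [mem_filter] at hS
            obtain ⟨T, hT, hTk⟩ := exists_subset_card_eq hS.2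
            rw [mem_biUnion]
            exact ⟨T, mem_powersetCard.2 ⟨hT.trans inter_subset_right, hTk⟩,
              mem_filter.2 ⟨hS.1, hT.trans inter_subset_left⟩⟩
        _ ≤ #(powersetCard k R) * (Fintype.card α - k).choose (m - k) := by
            apply card_biUnion_le_card_mul
            intro T hT
            have := aux_super T m
            rwa [(mem_powersetCard.1 hT).2] at this
        _ = _ := by rw [card_powersetCard]
    calc _ ≤ (#R).choose k * (Fintype.card α - k).choose (m - k) * (Fintype.card α) ^ k :=
          Nat.mul_le_mul_right _ h1
      _ = (#R).choose k * ((Fintype.card α - k).choose (m - k) * (Fintype.card α) ^ k) := by ring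
      _ ≤ (#R).choose k * (m ^ k * (Fintype.card α).choose m) :=
          Nat.mul_le_mul_left _ (aux_choose2 _ _ _ hm hk)
      _ = _ := by ring
  · have : #{S ∈ powersetCard m (univ : Finset α) | k ≤ #(S ∩ R)} = 0 := by
      rw [card_eq_zero, filter_eq_empty_iff]
      intro S hS h
      have := (mem_powersetCard.1 hS).2
      have := card_le_card (inter_subset_left : S ∩ R ⊆ S)
      omega
    rw [this]; simp

lemma aux_count {β : Type*} [Fintype β] [DecidableEq β] (a : ℕ) :
    #{A : Finset β | #A ≤ a} ≤ (Fintype.card β + 1) ^ a := by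
  induction a with
  | zero =>
    rw [pow_zero, card_le_one]
    intro x hx y hy
    simp at hx hy
    rw [hx, hy]
  | succ a ih =>
    calc _ ≤ #(((univ : Finset (Option β)) ×ˢ ({A : Finset β | #A ≤ a} : Finset _)).image
            fun p => p.1.elim p.2 (fun b => insert b p.2)) := by
          apply card_le_card
          intro A hA
          rw [mem_filter] at hA
          rw [mem_image]
          rcases A.eq_empty_or_nonempty with rfl | ⟨b, hb⟩
          · exact ⟨(none, ∅), by simp, rfl⟩
          · refine ⟨(some b, A.erase b), ?_, by simp [hb]⟩
            have := card_erase_of_mem hb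
            simp only [mem_product, mem_univ, mem_filter, true_and]
            omega
      _ ≤ _ := card_image_le
      _ ≤ _ := by
          rw [card_product, card_univ, Fintype.card_option, pow_succ, mul_comm]
          exact Nat.mul_le_mul_right _ ih

/-- real bound for a fixed rectangle -/
lemma aux_real (X C r m k M : ℕ) (hM : 0 < M) (hk : 0 < k)
    (h : X * M ^ k ≤ r.choose k * m ^ k * C)
    (hb : 8 * ((r : ℝ) * m) ≤ k * M) :
    (X : ℝ) ≤ (1 / 2) ^ k * C := by
  have hMp : (0 : ℝ) < M := by exact_mod_cast hM
  have hkp : (0 : ℝ) < k := by exact_mod_cast hk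
  have h' : (X : ℝ) * M ^ k ≤ r.choose k * m ^ k * C := by exact_mod_cast h
  have h1 : ((r.choose k : ℕ) : ℝ) ≤ (r : ℝ) ^ k / k.factorial := Nat.choose_le_pow_div k r
  have h2 : (k : ℝ) ^ k / k.factorial ≤ Real.exp k :=
    Real.pow_div_factorial_le_exp _ hkp.le k
  have h3 : Real.exp k ≤ 4 ^ k := by
    have : Real.exp k = Real.exp 1 ^ k := by rw [← Real.exp_nat_mul]; simp
    rw [this]
    have := Real.exp_one_lt_d9
    gcongr
    linarith
  have hf : (0 : ℝ) < k.factorial := by exact_mod_cast Nat.factorial_pos k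
  have hkk : (0 : ℝ) < (k : ℝ) ^ k := by positivity
  have hMk : (0 : ℝ) < (M : ℝ) ^ k := by positivity
  have h4 : (k : ℝ) ^ k * r.choose k ≤ 4 ^ k * (r : ℝ) ^ k := by
    calc (k : ℝ) ^ k * r.choose k ≤ (k : ℝ) ^ k * ((r : ℝ) ^ k / k.factorial) := by gcongr
      _ = ((k : ℝ) ^ k / k.factorial) * (r : ℝ) ^ k := by ring
      _ ≤ 4 ^ k * (r : ℝ) ^ k := by gcongr; exact h2.trans h3
  have h5 : 4 ^ k * (r : ℝ) ^ k * m ^ k ≤ (1 / 2) ^ k * ((k : ℝ) ^ k * M ^ k) := by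
    rw [← mul_pow, ← mul_pow, ← mul_pow, ← mul_pow]
    refine pow_le_pow_left₀ (by positivity) ?_ k
    linarith
  refine le_of_mul_le_mul_right ?_ (mul_pos hkk hMk)
  calc (X : ℝ) * ((k : ℝ) ^ k * M ^ k) = (k : ℝ) ^ k * (X * M ^ k) := by ring
    _ ≤ (k : ℝ) ^ k * (r.choose k * m ^ k * C) := by gcongr
    _ = ((k : ℝ) ^ k * r.choose k) * m ^ k * C := by ring
    _ ≤ (4 ^ k * (r : ℝ) ^ k) * m ^ k * C := by gcongr
    _ ≤ ((1 / 2) ^ k * ((k : ℝ) ^ k * M ^ k)) * C := by gcongr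
    _ = _ := by ring

lemma aux_all (n : ℕ) : allMatrices n =
    powersetCard ⌊(2 : ℝ) ^ (1.5 * (n : ℝ))⌋₊ univ := by
  ext S
  simp [allMatrices, mem_powersetCard]

open scoped Classical in
lemma aux_main (τ κ ε : ℝ) (n : ℕ)
    (hb : 8 * (((2 : ℝ) ^ (τ * n)) ^ 2 * (2 : ℝ) ^ (1.5 * (n : ℝ))) ≤
      (2 : ℝ) ^ ((1.5 - κ - ε) * (n : ℝ)) * ((2 : ℝ) ^ n * 2 ^ n)) :
    (((allMatrices n).filter (HasDenseRectangle τ κ ε n)).card : ℝ) /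
            ((allMatrices n).card : ℝ) ≤
      ((2 : ℝ) ^ n + 1) ^ (2 * ⌊(2 : ℝ) ^ (τ * (n : ℝ))⌋₊) *
        (1 / 2) ^ ⌈(2 : ℝ) ^ ((1.5 - κ - ε) * (n : ℝ))⌉₊ := by
  set a := ⌊(2 : ℝ) ^ (τ * (n : ℝ))⌋₊ with ha
  set k := ⌈(2 : ℝ) ^ ((1.5 - κ - ε) * (n : ℝ))⌉₊ with hk
  have hall := aux_all n
  set m := ⌊(2 : ℝ) ^ (1.5 * (n : ℝ))⌋₊ with hm
  have hcard : Fintype.card (Fin (2 ^ n) × Fin (2 ^ n)) = 2 ^ n * 2 ^ n := by simp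
  have hal : (a : ℝ) ≤ (2 : ℝ) ^ (τ * (n : ℝ)) := Nat.floor_le (by positivity)
  have hml : (m : ℝ) ≤ (2 : ℝ) ^ (1.5 * (n : ℝ)) := Nat.floor_le (by positivity)
  have hkl : (2 : ℝ) ^ ((1.5 - κ - ε) * (n : ℝ)) ≤ k := Nat.le_ceil _
  have hkpos : 0 < k := Nat.ceil_pos.2 (by positivity)
  have hmM : m ≤ Fintype.card (Fin (2 ^ n) × Fin (2 ^ n)) := by
    rw [hcard]
    have : (m : ℝ) ≤ (2 : ℝ) ^ n * 2 ^ n := by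
      refine hml.trans ?_
      rw [← pow_add, ← Real.rpow_natCast]
      apply Real.rpow_le_rpow_of_exponent_le (by norm_num)
      push_cast
      have : (0 : ℝ) ≤ n := Nat.cast_nonneg n
      linarith
    exact_mod_cast this
  have hC : (allMatrices n).card = (Fintype.card (Fin (2 ^ n) × Fin (2 ^ n))).choose m := by
    rw [hall, card_powersetCard, card_univ]
  have hCpos : (0 : ℝ) < (allMatrices n).card := by
    rw [hC]; exact_mod_cast Nat.choose_pos hmM
  rw [div_le_iff₀ hCpos]
  set F : Finset (Finset (Fin (2 ^ n))) := {A | #A ≤ a} with hF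
  have hFc : (#F : ℝ) ≤ ((2 : ℝ) ^ n + 1) ^ a := by
    have := aux_count (β := Fin (2 ^ n)) a
    rw [Fintype.card_fin] at this
    exact_mod_cast this
  have hsub : (allMatrices n).filter (HasDenseRectangle τ κ ε n) ⊆
      (F ×ˢ F).biUnion fun p =>
        (powersetCard m (univ : Finset (Fin (2 ^ n) × Fin (2 ^ n)))).filter
          fun S => k ≤ #(S ∩ (p.1 ×ˢ p.2)) := by
    intro S hS
    rw [mem_filter, hall] at hS
    obtain ⟨hS, A, B, hA, hB, h⟩ := hS
    rw [mem_biUnion]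
    refine ⟨(A, B), by simp [hF, hA, hB, ha], mem_filter.2 ⟨hS, ?_⟩⟩
    rw [hk, Nat.ceil_le]
    refine h.trans (Nat.cast_le.2 (card_le_card ?_))
    intro p hp
    rw [mem_filter] at hp
    exact mem_inter.2 ⟨hp.1, mem_product.2 hp.2⟩
  have hX : ∀ p ∈ F ×ˢ F, ((#((powersetCard m (univ : Finset (Fin (2 ^ n) × Fin (2 ^ n)))).filter
          fun S => k ≤ #(S ∩ (p.1 ×ˢ p.2))) : ℕ) : ℝ) ≤ (1 / 2) ^ k * (allMatrices n).card := by
    intro p hp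
    have h1 := aux_rect (p.1 ×ˢ p.2) m k hmM
    rw [← hC] at h1
    refine aux_real _ _ _ _ _ _ (by rw [hcard]; positivity) hkpos h1 ?_
    simp only [hF, mem_product, mem_filter, mem_univ, true_and] at hp
    have e1 : (#p.1 : ℝ) ≤ (2 : ℝ) ^ (τ * (n : ℝ)) := le_trans (by exact_mod_cast hp.1) hal
    have e2 : (#p.2 : ℝ) ≤ (2 : ℝ) ^ (τ * (n : ℝ)) := le_trans (by exact_mod_cast hp.2) hal
    rw [card_product, hcard]
    push_cast
    calc 8 * ((#p.1 : ℝ) * #p.2 * m) ≤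
        8 * (((2 : ℝ) ^ (τ * n)) * ((2 : ℝ) ^ (τ * n)) * (2 : ℝ) ^ (1.5 * (n : ℝ))) := by gcongr
      _ = 8 * (((2 : ℝ) ^ (τ * n)) ^ 2 * (2 : ℝ) ^ (1.5 * (n : ℝ))) := by ring
      _ ≤ _ := hb
      _ ≤ _ := by gcongr
  calc (((allMatrices n).filter (HasDenseRectangle τ κ ε n)).card : ℝ)
      ≤ ∑ p ∈ F ×ˢ F, ((#((powersetCard m (univ : Finset (Fin (2 ^ n) × Fin (2 ^ n)))).filter
          fun S => k ≤ #(S ∩ (p.1 ×ˢ p.2))) : ℕ) : ℝ) := by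
        exact_mod_cast (card_le_card hsub).trans card_biUnion_le
    _ ≤ ∑ p ∈ F ×ˢ F, (1 / 2) ^ k * ((allMatrices n).card : ℝ) := sum_le_sum hX
    _ = (#F : ℝ) * #F * ((1 / 2) ^ k * ((allMatrices n).card : ℝ)) := by
        rw [sum_const, card_product, nsmul_eq_mul]; push_cast; ring
    _ ≤ ((2 : ℝ) ^ n + 1) ^ a * ((2 : ℝ) ^ n + 1) ^ a *
          ((1 / 2) ^ k * ((allMatrices n).card : ℝ)) := by gcongr
    _ = _ := by rw [two_mul, pow_add]; ring

lemma aux_tail (n a k : ℕ) (h : 2 * (n + 1) * a + n ≤ k) :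
    ((2 : ℝ) ^ n + 1) ^ (2 * a) * (1 / 2) ^ k ≤ (1 / 2) ^ n := by
  have h1 : (2 : ℝ) ^ n + 1 ≤ 2 ^ (n + 1) := by
    have : (1 : ℝ) ≤ 2 ^ n := one_le_pow₀ (by norm_num)
    rw [pow_succ]; linarith
  calc ((2 : ℝ) ^ n + 1) ^ (2 * a) * (1 / 2) ^ k
      ≤ ((2 : ℝ) ^ (n + 1)) ^ (2 * a) * (1 / 2) ^ (2 * (n + 1) * a + n) := by
        gcongr ?_ * ?_
        · gcongr
        · exact pow_le_pow_of_le_one (by norm_num) (by norm_num) h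
    _ = (2 : ℝ) ^ (2 * (n + 1) * a) * (1 / 2) ^ (2 * (n + 1) * a) * (1 / 2) ^ n := by
        rw [← pow_mul, pow_add, ← mul_assoc]; congr 3; ring
    _ = _ := by rw [← mul_pow]; norm_num

lemma aux_ev (ε : ℝ) (hε : 0 < ε) :
    ∀ᶠ n : ℕ in atTop, (8 + 3 * n + 2 : ℝ) ≤ (2 : ℝ) ^ (ε * n) := by
  have h2 : 0 < Real.log 2 * ε := mul_pos (Real.log_pos (by norm_num)) hε
  have h := (isLittleO_pow_exp_pos_mul_atTop (k := 1) h2).comp_tendsto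
    tendsto_natCast_atTop_atTop
  have hb := h.bound (c := 1 / 16) (by norm_num)
  filter_upwards [hb, eventually_ge_atTop 1] with n hn hn1
  have hn1' : (1 : ℝ) ≤ n := by exact_mod_cast hn1
  simp only [Function.comp, pow_one, Real.norm_eq_abs, Real.abs_exp, Nat.abs_cast] at hn
  rw [Real.rpow_def_of_pos (by norm_num), ← mul_assoc]
  linarith

open scoped Classical in
/-- Among all `2^n × 2^n` 0/1-matrices with exactly `⌊2^(1.5 n)⌋` ones, the proportion of
those having a `⌊2^(τ n)⌋ × ⌊2^(τ n)⌋` rectangle with at least `2^((1.5 - κ - ε) n)` ones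
tends to `0` for some `ε > 0`, provided `κ + τ < 1.5` and `κ + 2τ < 2`. -/
theorem stmt19 (τ κ : ℝ) (hτ : 0 < τ) (hκ : 0 < κ)
    (h1 : κ + τ < 1.5) (h2 : κ + 2 * τ < 2) :
    ∃ ε : ℝ, 0 < ε ∧
      Tendsto
        (fun n : ℕ =>
          (((allMatrices n).filter (HasDenseRectangle τ κ ε n)).card : ℝ) /
            ((allMatrices n).card : ℝ))
        atTop (nhds 0) := by
  obtain ⟨ε, hε, he1, he2⟩ : ∃ ε : ℝ, 0 < ε ∧ τ + ε ≤ 1.5 - κ - ε ∧ κ + 2 * τ + 2 * ε ≤ 2 := by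
    refine ⟨min ((1.5 - κ - τ) / 2) ((2 - κ - 2 * τ) / 2),
      lt_min (by linarith) (by linarith), ?_, ?_⟩
    · have := min_le_left ((1.5 - κ - τ) / 2) ((2 - κ - 2 * τ) / 2)
      linarith
    · have := min_le_right ((1.5 - κ - τ) / 2) ((2 - κ - 2 * τ) / 2)
      linarith
  refine ⟨ε, hε, ?_⟩
  have hlim : Tendsto (fun n : ℕ => ((1 : ℝ) / 2) ^ n) atTop (nhds 0) :=
    tendsto_pow_atTop_nhds_zero_of_lt_one (by norm_num) (by norm_num)
  refine squeeze_zero' (Eventually.of_forall fun n => by positivity) ?_ hlim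
  filter_upwards [aux_ev ε hε] with n hn
  have hn0 : (0 : ℝ) ≤ n := Nat.cast_nonneg n
  refine (aux_main τ κ ε n ?_).trans (aux_tail n _ _ ?_)
  · calc 8 * (((2 : ℝ) ^ (τ * n)) ^ 2 * (2 : ℝ) ^ (1.5 * (n : ℝ)))
        ≤ (2 : ℝ) ^ (ε * n) * (((2 : ℝ) ^ (τ * n)) ^ 2 * (2 : ℝ) ^ (1.5 * (n : ℝ))) := by
          gcongr; linarith
      _ = (2 : ℝ) ^ (ε * n + (τ * n + τ * n + 1.5 * (n : ℝ))) := by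
          rw [Real.rpow_add (by norm_num), Real.rpow_add (by norm_num),
            Real.rpow_add (by norm_num), sq]
      _ ≤ (2 : ℝ) ^ ((1.5 - κ - ε) * (n : ℝ) + (n + n)) := by
          apply Real.rpow_le_rpow_of_exponent_le (by norm_num)
          nlinarith
      _ = _ := by
          rw [Real.rpow_add (by norm_num), Real.rpow_add (by norm_num), Real.rpow_natCast]
  · have hal : ((⌊(2 : ℝ) ^ (τ * (n : ℝ))⌋₊ : ℕ) : ℝ) ≤ (2 : ℝ) ^ (τ * (n : ℝ)) :=
      Nat.floor_le (by positivity)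
    have hkl : (2 : ℝ) ^ ((1.5 - κ - ε) * (n : ℝ)) ≤
      ((⌈(2 : ℝ) ^ ((1.5 - κ - ε) * (n : ℝ))⌉₊ : ℕ) : ℝ) := Nat.le_ceil _
    have h3 : (2 : ℝ) ^ (ε * n) * (2 : ℝ) ^ (τ * (n : ℝ)) ≤
        (2 : ℝ) ^ ((1.5 - κ - ε) * (n : ℝ)) := by
      rw [← Real.rpow_add (by norm_num)]
      apply Real.rpow_le_rpow_of_exponent_le (by norm_num)
      nlinarith
    have h4 : (1 : ℝ) ≤ (2 : ℝ) ^ (τ * (n : ℝ)) :=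
      Real.one_le_rpow (by norm_num) (by positivity)
    have h5 : 2 * ((n : ℝ) + 1) * (⌊(2 : ℝ) ^ (τ * (n : ℝ))⌋₊ : ℕ) + n ≤
        ((⌈(2 : ℝ) ^ ((1.5 - κ - ε) * (n : ℝ))⌉₊ : ℕ) : ℝ) := by
      calc 2 * ((n : ℝ) + 1) * (⌊(2 : ℝ) ^ (τ * (n : ℝ))⌋₊ : ℕ) + n
          ≤ 2 * ((n : ℝ) + 1) * (2 : ℝ) ^ (τ * (n : ℝ)) + n * (2 : ℝ) ^ (τ * (n : ℝ)) := by
            gcongr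
            exact le_mul_of_one_le_right hn0 h4
        _ = (3 * n + 2) * (2 : ℝ) ^ (τ * (n : ℝ)) := by ring
        _ ≤ (2 : ℝ) ^ (ε * n) * (2 : ℝ) ^ (τ * (n : ℝ)) := by
            gcongr; linarith
        _ ≤ _ := h3.trans hkl
    exact_mod_cast h5
end
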